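/- arXiv:2012.11177 — 12 statements merged into one kernel-verified Lean document; each statement's English description precedes it below -/
import Mathlib

section
/- Let G be a graph on n vertices and let 0 ≤ β < α ≤ 1. Then for every k with 1 ≤ k ≤ n, the sum of the k largest eigenvalues of A_β(G) is at most the sum of the k largest eigenvalues of A_α(G), i.e. S_k(A_β(G)) ≤ S_k(A_α(G)). -/
open Matrix Finset Real

/-- The `A_α`-matrix of a graph: `A_α(G) = α·D(G) + (1−α)·A(G)`. -/
noncomputable def Aalpha {n : ℕ} (α : ℝ) (G : SimpleGraph (Fin n)) [DecidableRel G.Adj] :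
    Matrix (Fin n) (Fin n) ℝ :=
  α • Matrix.diagonal (fun i => (G.degree i : ℝ)) + (1 - α) • G.adjMatrix ℝ

/-- The sum of the `k` largest eigenvalues of a real symmetric matrix, expressed as
the supremum over all `k`-subsets of indices of the corresponding eigenvalue sums. -/
noncomputable def Sk {n : ℕ} (M : Matrix (Fin n) (Fin n) ℝ) (k : ℕ) : ℝ :=
  if h : M.IsHermitian then
    sSup {x : ℝ | ∃ s : Finset (Fin n), s.card = k ∧ x = ∑ i ∈ s, h.eigenvalues i}
  else 0

lemma lp_aux {n : ℕ} (μ w : Fin n → ℝ) (k : ℕ) (hk1 : 1 ≤ k) (hkn : k ≤ n)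
    (h0 : ∀ j, 0 ≤ w j) (h1 : ∀ j, w j ≤ 1) (hs : ∑ j, w j = k) :
    ∃ t : Finset (Fin n), t.card = k ∧ ∑ j, μ j * w j ≤ ∑ j ∈ t, μ j := by
  have hne : (Finset.powersetCard k (Finset.univ : Finset (Fin n))).Nonempty := by
    apply Finset.powersetCard_nonempty.2; simpa using hkn
  obtain ⟨t, ht, hmax⟩ := Finset.exists_max_image _ (fun t => ∑ j ∈ t, μ j) hne
  have htk : t.card = k := (Finset.mem_powersetCard.1 ht).2
  refine ⟨t, htk, ?_⟩
  have htne : t.Nonempty := by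
    rw [← Finset.card_pos]; omega
  obtain ⟨i, hi, hmin⟩ := Finset.exists_min_image t μ htne
  have hout : ∀ j, j ∉ t → μ j ≤ μ i := by
    intro j hj
    have hj' : j ∉ t.erase i := fun h => hj (Finset.mem_of_mem_erase h)
    have := hmax (insert j (t.erase i)) (by
      rw [Finset.mem_powersetCard]
      refine ⟨Finset.subset_univ _, ?_⟩
      rw [Finset.card_insert_of_notMem hj', Finset.card_erase_of_mem hi]; omega)
    simp only [Finset.sum_insert hj'] at this
    have h2 := Finset.add_sum_erase t μ hi
    linarith
  have key : ∑ j, (μ j - μ i) * (w j - if j ∈ t then 1 else 0) ≤ 0 := by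
    apply Finset.sum_nonpos
    intro j _
    by_cases hj : j ∈ t
    · simp only [hj, if_true]
      nlinarith [hmin j hj, h1 j]
    · simp only [hj, if_false]
      nlinarith [hout j hj, h0 j]
  have e : ∑ j, (μ j - μ i) * (w j - if j ∈ t then 1 else 0)
      = ∑ j, μ j * w j - ∑ j ∈ t, μ j - μ i * (∑ j, w j) + μ i * t.card := by
    have e1 : ∑ j ∈ t, μ j = ∑ j, μ j * (if j ∈ t then 1 else 0) := by simp
    have e2 : (t.card : ℝ) = ∑ j, (if j ∈ t then (1:ℝ) else 0) := by simp
    rw [e1, e2, Finset.mul_sum, Finset.mul_sum, ← Finset.sum_sub_distrib,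
      ← Finset.sum_sub_distrib, ← Finset.sum_add_distrib]
    apply Finset.sum_congr rfl
    intros; ring
  rw [e, hs, htk] at key
  linarith

lemma quad_aux {n : ℕ} {M : Matrix (Fin n) (Fin n) ℝ} (h : M.IsHermitian)
    (u : EuclideanSpace ℝ (Fin n)) :
    u.ofLp ⬝ᵥ (M *ᵥ u.ofLp) = ∑ j, h.eigenvalues j * (inner ℝ u (h.eigenvectorBasis j)) ^ 2 := by
  have e1 : u.ofLp ⬝ᵥ (M *ᵥ u.ofLp) = inner ℝ u (WithLp.toLp 2 (M *ᵥ u.ofLp)) := by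
    rw [EuclideanSpace.inner_eq_star_dotProduct]; simp [dotProduct_comm]
  rw [e1, ← OrthonormalBasis.sum_inner_mul_inner h.eigenvectorBasis]
  apply Finset.sum_congr rfl
  intro j _
  have e2 : inner ℝ (h.eigenvectorBasis j) (WithLp.toLp 2 (M *ᵥ u.ofLp))
      = h.eigenvalues j * inner ℝ u (h.eigenvectorBasis j) := by
    have hM : Mᵀ = M := by
      rw [← conjTranspose_eq_transpose_of_trivial]; exact h
    rw [EuclideanSpace.inner_eq_star_dotProduct, EuclideanSpace.inner_eq_star_dotProduct]
    simp only [star_trivial]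
    rw [dotProduct_comm, dotProduct_mulVec, ← mulVec_transpose, hM, h.mulVec_eigenvectorBasis]
    simp
  rw [e2]; ring

lemma Sk_mono {n : ℕ} {A B : Matrix (Fin n) (Fin n) ℝ} (hA : A.IsHermitian) (hB : B.IsHermitian)
    (hAB : (B - A).PosSemidef) (k : ℕ) (hk1 : 1 ≤ k) (hkn : k ≤ n) : Sk A k ≤ Sk B k := by
  unfold Sk
  rw [dif_pos hA, dif_pos hB]
  apply csSup_le
  · obtain ⟨s, _, hs⟩ := Finset.exists_subset_card_eq
      (s := (Finset.univ : Finset (Fin n))) (n := k) (by simpa using hkn)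
    exact ⟨_, s, hs, rfl⟩
  rintro x ⟨s, hs, rfl⟩
  have hbdd : BddAbove {x : ℝ | ∃ s : Finset (Fin n), s.card = k ∧
      x = ∑ i ∈ s, hB.eigenvalues i} := by
    apply Set.Finite.bddAbove
    apply (Set.finite_range (fun s : Finset (Fin n) => ∑ i ∈ s, hB.eigenvalues i)).subset
    rintro x ⟨s, _, rfl⟩
    exact ⟨s, rfl⟩
  set u := hA.eigenvectorBasis with hu
  set v := hB.eigenvectorBasis with hv
  obtain ⟨t, ht, hle⟩ := lp_aux hB.eigenvalues (fun j => ∑ i ∈ s, (inner ℝ (u i) (v j)) ^ 2) k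
    hk1 hkn (fun j => Finset.sum_nonneg fun i _ => sq_nonneg _)
    (fun j => by
      have h1 : ∑ i, (inner ℝ (u i) (v j)) ^ 2 = 1 := by
        have := u.sum_sq_norm_inner_right (v j)
        simpa using this
      rw [← h1]
      exact Finset.sum_le_sum_of_subset_of_nonneg (Finset.subset_univ _)
        fun i _ _ => sq_nonneg _)
    (by
      rw [Finset.sum_comm, ← hs]
      have h1 : ∀ i, ∑ j, (inner ℝ (u i) (v j)) ^ 2 = 1 := by
        intro i
        have := v.sum_sq_norm_inner_left (u i)
        simpa using this
      simp [h1])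
  refine le_trans ?_ (le_csSup hbdd ⟨t, ht, rfl⟩)
  refine le_trans ?_ hle
  simp only [Finset.mul_sum]
  rw [Finset.sum_comm]
  apply Finset.sum_le_sum
  intro i _
  rw [← quad_aux hB]
  have h1 : (u i).ofLp ⬝ᵥ (A *ᵥ (u i).ofLp) = hA.eigenvalues i := by
    rw [hu, hA.mulVec_eigenvectorBasis, dotProduct_smul]
    have := EuclideanSpace.inner_eq_star_dotProduct (𝕜 := ℝ) (u i) (u i)
    simp only [star_trivial] at this
    rw [← hu, ← this]; simp
  have h2 := hAB.dotProduct_mulVec_nonneg (u i).ofLp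
  rw [sub_mulVec, dotProduct_sub] at h2
  simp only [star_trivial] at h2
  linarith

lemma Aalpha_herm {n : ℕ} (G : SimpleGraph (Fin n)) [DecidableRel G.Adj] (α : ℝ) :
    (Aalpha α G).IsHermitian := by
  unfold Aalpha
  ext i j
  by_cases h : i = j
  · subst h; simp
  · simp [h, Ne.symm h, SimpleGraph.adj_comm]

theorem stmt0 {n : ℕ} (G : SimpleGraph (Fin n)) [DecidableRel G.Adj]
    (α β : ℝ) (hβ0 : 0 ≤ β) (hβα : β < α) (hα1 : α ≤ 1)
    (k : ℕ) (hk1 : 1 ≤ k) (hkn : k ≤ n) :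
    Sk (Aalpha β G) k ≤ Sk (Aalpha α G) k := by
  apply Sk_mono (Aalpha_herm G β) (Aalpha_herm G α) _ k hk1 hkn
  have e : Aalpha α G - Aalpha β G = (α - β) • G.lapMatrix ℝ := by
    unfold Aalpha SimpleGraph.lapMatrix SimpleGraph.degMatrix
    module
  rw [e]
  exact (SimpleGraph.posSemidef_lapMatrix ℝ G).smul (by linarith)
end

section
/- Let G ≠ K_n be a graph on n vertices with maximum degree Δ, and let 0 ≤ α < 1/(Δ+1). Then for every integer k with 2 ≤ k ≤ n, S_k(A_α(G)) ≤ ((1−α)n/2)·(1 + √k). -/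
open Matrix Finset Real

lemma aux_key {n : ℕ} (N : Fin n → Fin n → ℝ) (h0 : ∀ a b, 0 ≤ N a b) (h1 : ∀ a b, N a b ≤ 1)
    (s : Finset (Fin n)) (V : Fin n → Fin n → ℝ)
    (hV : ∀ i j, ∑ a, V i a * V j a = if i = j then 1 else 0)
    (hB : ∑ i ∈ s, (∑ a, V i a) ^ 2 ≤ n) :
    ∑ i ∈ s, ∑ a, ∑ b, V i a * N a b * V i b ≤ n / 2 * (1 + Real.sqrt s.card) := by
  set P : Fin n × Fin n → ℝ := fun p => ∑ i ∈ s, V i p.1 * V i p.2 with hP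
  have e1 : ∑ i ∈ s, ∑ a, ∑ b, V i a * N a b * V i b = ∑ p : Fin n × Fin n, P p * N p.1 p.2 := by
    rw [Fintype.sum_prod_type, Finset.sum_comm]
    refine Finset.sum_congr rfl fun a _ => ?_
    rw [Finset.sum_comm]
    refine Finset.sum_congr rfl fun b _ => ?_
    rw [hP, Finset.sum_mul]
    exact Finset.sum_congr rfl fun i _ => by ring
  have e2 : ∑ p, P p ≤ n := by
    refine le_trans (le_of_eq ?_) hB
    rw [hP, Finset.sum_comm]
    refine Finset.sum_congr rfl fun i _ => ?_
    rw [Fintype.sum_prod_type, sq, Finset.sum_mul_sum]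
  have e3 : ∑ p, P p ^ 2 = s.card := by
    have : ∀ p, P p ^ 2 = ∑ i ∈ s, ∑ j ∈ s, (V i p.1 * V j p.1) * (V i p.2 * V j p.2) := by
      intro p
      rw [hP, sq, Finset.sum_mul_sum]
      exact Finset.sum_congr rfl fun i _ => Finset.sum_congr rfl fun j _ => by ring
    simp_rw [this]
    rw [Finset.sum_comm]
    have h2 : ∀ i ∈ s, ∑ p : Fin n × Fin n, ∑ j ∈ s, (V i p.1 * V j p.1) * (V i p.2 * V j p.2)
        = 1 := by
      intro i hi
      rw [Finset.sum_comm]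
      have : ∀ j, ∑ p : Fin n × Fin n, (V i p.1 * V j p.1) * (V i p.2 * V j p.2)
          = if i = j then 1 else 0 := by
        intro j
        rw [Fintype.sum_prod_type]
        dsimp only
        rw [← Finset.sum_mul_sum, hV]
        split_ifs <;> simp
      simp_rw [this]
      simp [hi]
    rw [Finset.sum_congr rfl h2]
    simp
  have e4 : ∑ p : Fin n × Fin n, P p * (2 * N p.1 p.2 - 1) ≤ n * Real.sqrt s.card := by
    refine (Real.sum_mul_le_sqrt_mul_sqrt _ _ _).trans ?_
    rw [e3, mul_comm]
    refine mul_le_mul_of_nonneg_right ?_ (Real.sqrt_nonneg _)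
    rw [Real.sqrt_le_left (by positivity)]
    calc ∑ p : Fin n × Fin n, (2 * N p.1 p.2 - 1) ^ 2 ≤ ∑ p : Fin n × Fin n, (1:ℝ) := by
          refine Finset.sum_le_sum fun p _ => ?_
          nlinarith [h0 p.1 p.2, h1 p.1 p.2]
      _ = (n:ℝ) ^ 2 := by simp [sq]
  have e5 : ∑ p : Fin n × Fin n, P p * (2 * N p.1 p.2 - 1)
      = 2 * ∑ p : Fin n × Fin n, P p * N p.1 p.2 - ∑ p, P p := by
    rw [Finset.mul_sum, ← Finset.sum_sub_distrib]
    exact Finset.sum_congr rfl fun i _ => by ring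
  rw [e1]
  linarith

theorem stmt1 {n : ℕ} (G : SimpleGraph (Fin n)) [DecidableRel G.Adj] (hG : G ≠ ⊤)
    (α : ℝ) (hα0 : 0 ≤ α) (hα1 : α < 1 / ((G.maxDegree : ℝ) + 1))
    (k : ℕ) (hk2 : 2 ≤ k) (hkn : k ≤ n) :
    Sk (Aalpha α G) k ≤ (1 - α) * n / 2 * (1 + Real.sqrt k) := by
  have hD : (0:ℝ) ≤ G.maxDegree := Nat.cast_nonneg _
  rw [lt_div_iff₀ (by positivity)] at hα1
  have hα : 0 < 1 - α := by nlinarith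
  have hR : 0 ≤ (1 - α) * n / 2 * (1 + Real.sqrt k) := by positivity
  unfold Sk
  split_ifs with h
  swap
  · exact hR
  refine Real.sSup_le ?_ hR
  rintro x ⟨s, hs, rfl⟩
  have hent : ∀ a b, 0 ≤ Aalpha α G a b ∧ Aalpha α G a b ≤ 1 - α := by
    intro a b
    have hd : (G.degree a : ℝ) ≤ G.maxDegree := by exact_mod_cast G.degree_le_maxDegree a
    have hd0 : (0:ℝ) ≤ G.degree a := Nat.cast_nonneg _
    by_cases hab : a = b
    · subst hab
      simp [Aalpha]
      constructor
      · positivity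
      · nlinarith
    · simp only [Aalpha, Matrix.add_apply, Matrix.smul_apply, Matrix.diagonal_apply_ne _ hab,
        SimpleGraph.adjMatrix_apply, smul_eq_mul]
      split_ifs <;> constructor <;> linarith
  have hV : ∀ i j, ∑ a, h.eigenvectorBasis i a * h.eigenvectorBasis j a
      = if i = j then (1:ℝ) else 0 := by
    intro i j
    have := orthonormal_iff_ite.1 h.eigenvectorBasis.orthonormal i j
    rw [← this]
    simp [PiLp.inner_apply, mul_comm]
  have hB : ∑ i ∈ s, (∑ a, h.eigenvectorBasis i a) ^ 2 ≤ (n:ℝ) := by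
    have := h.eigenvectorBasis.orthonormal.sum_inner_products_le
      (WithLp.toLp 2 (fun _ => (1:ℝ)) : EuclideanSpace ℝ (Fin n)) (s := s)
    simpa [PiLp.inner_apply, EuclideanSpace.norm_sq_eq] using this
  have key := aux_key (fun a b => Aalpha α G a b / (1 - α))
    (fun a b => div_nonneg (hent a b).1 hα.le) (fun a b => (div_le_one hα).2 (hent a b).2) s
    (fun i a => h.eigenvectorBasis i a) hV hB
  have hl : ∀ i, h.eigenvalues i = (1 - α) * ∑ a, ∑ b, h.eigenvectorBasis i a *
      (Aalpha α G a b / (1 - α)) * h.eigenvectorBasis i b := by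
    intro i
    have h1 : ∀ a, ∑ b, Aalpha α G a b * h.eigenvectorBasis i b
        = h.eigenvalues i * h.eigenvectorBasis i a := by
      intro a
      have := congrFun (h.mulVec_eigenvectorBasis i) a
      simpa [Matrix.mulVec, dotProduct] using this
    have h2 : ∀ a, ∑ b, h.eigenvectorBasis i a * (Aalpha α G a b / (1 - α))
        * h.eigenvectorBasis i b
        = h.eigenvalues i / (1 - α) * (h.eigenvectorBasis i a * h.eigenvectorBasis i a) := by
      intro a
      calc _ = h.eigenvectorBasis i a / (1 - α) *
            ∑ b, Aalpha α G a b * h.eigenvectorBasis i b := by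
            rw [Finset.mul_sum]
            exact Finset.sum_congr rfl fun b _ => by ring
        _ = _ := by rw [h1]; ring
    simp_rw [h2]
    rw [← Finset.mul_sum, hV]
    simp
    field_simp
  rw [Finset.sum_congr rfl fun i _ => hl i, ← Finset.mul_sum]
  rw [hs] at key
  calc _ ≤ (1 - α) * (n / 2 * (1 + Real.sqrt k)) := mul_le_mul_of_nonneg_left key hα.le
    _ = _ := by ring
end

section
/- Let 1/2 ≤ α < 1 and let G be a graph on n vertices with m edges. Then for every integer k with 1 ≤ k ≤ n−1, S_k(A_α(G)) ≤ 2αkm/n + √( (k(n−k)/n)·( α²·Z_1(G) + 2m(1−α)² − 4α²m²/n ) ), where Z_1(G) is the sum of the squares of the vertex degrees of G. -/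
open Matrix Finset Real

lemma aux_sq {n : ℕ} (A : Matrix (Fin n) (Fin n) ℝ) (h : A.IsHermitian) :
    ∑ i, h.eigenvalues i ^ 2 = (A * A).trace := by
  conv_rhs => rw [h.spectral_theorem]
  rw [← map_mul, Unitary.conjStarAlgAut_apply, Matrix.trace_mul_cycle]
  simp [Matrix.trace, sq]

lemma aux_real {n : ℕ} (f : Fin n → ℝ) (s : Finset (Fin n)) (k : ℕ) (hs : s.card = k)
    (hk : 1 ≤ k) (hkn : k < n) (T Q : ℝ) (hT : ∑ i, f i = T) (hQ : ∑ i, f i ^ 2 = Q) :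
    ∑ i ∈ s, f i ≤ k * T / n + √((k * ((n : ℝ) - k) / n) * (Q - T ^ 2 / n)) := by
  have h1 := sq_sum_le_card_mul_sum_sq (s := s) (f := f)
  have h2 := sq_sum_le_card_mul_sum_sq (s := sᶜ) (f := f)
  have e1 := Finset.sum_add_sum_compl s f
  have e2 := Finset.sum_add_sum_compl s (fun i => f i ^ 2)
  rw [Finset.card_compl, Fintype.card_fin, hs, Nat.cast_sub hkn.le] at h2
  rw [hs] at h1
  rw [hT] at e1
  rw [hQ] at e2
  have hk' : (0 : ℝ) < k := by exact_mod_cast hk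
  have hn' : (0 : ℝ) < n - k := by
    have : (k : ℝ) < n := by exact_mod_cast hkn
    linarith
  have hn : (0 : ℝ) < n := by linarith
  generalize (∑ i ∈ s, f i) = S at *
  generalize (∑ i ∈ sᶜ, f i) = S' at *
  generalize (∑ i ∈ s, f i ^ 2) = q at *
  generalize (∑ i ∈ sᶜ, f i ^ 2) = q' at *
  have : S - k * T / n ≤ √((k * ((n : ℝ) - k) / n) * (Q - T ^ 2 / n)) := by
    apply Real.le_sqrt_of_sq_le
    have key : (k * ((n : ℝ) - k) / n) * (Q - T ^ 2 / n) - (S - k * T / n) ^ 2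
        = ((n - k) * (k * q - S ^ 2) + k * ((n - k) * q' - S' ^ 2)) / n := by
      subst e1 e2
      field_simp
      ring
    have : 0 ≤ ((n - k) * (k * q - S ^ 2) + k * ((n - k) * q' - S' ^ 2)) / n := by
      have a1 := mul_nonneg hn'.le (sub_nonneg.2 h1)
      have a2 := mul_nonneg hk'.le (sub_nonneg.2 h2)
      positivity
    linarith
  linarith

theorem stmt3 {n : ℕ} (G : SimpleGraph (Fin n)) [DecidableRel G.Adj]
    (α : ℝ) (hα0 : 1 / 2 ≤ α) (hα1 : α < 1)
    (m : ℕ) (hm : G.edgeFinset.card = m)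
    (k : ℕ) (hk1 : 1 ≤ k) (hkn : k ≤ n - 1) :
    Sk (Aalpha α G) k ≤ 2 * α * k * m / n +
      Real.sqrt ((k * ((n : ℝ) - k) / n) *
        (α ^ 2 * (∑ v, (G.degree v : ℝ) ^ 2) + 2 * m * (1 - α) ^ 2 - 4 * α ^ 2 * m ^ 2 / n)) := by
  have hdeg : ∑ v, (G.degree v : ℝ) = 2 * m := by
    rw [← hm]; exact_mod_cast G.sum_degrees_eq_twice_card_edges
  have hH : (Aalpha α G).IsHermitian := by
    ext i j
    simp [Aalpha, Matrix.diagonal_apply, G.adj_comm, eq_comm]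
    split_ifs with h
    · rw [h]
    · rfl
  have hT : ∑ i, hH.eigenvalues i = 2 * α * m := by
    have := hH.trace_eq_sum_eigenvalues
    simp only [RCLike.ofReal_real_eq_id, id] at this
    rw [← this]
    simp [Aalpha, Matrix.trace_add, Matrix.trace_smul, hdeg]
    ring
  have hQ : ∑ i, hH.eigenvalues i ^ 2
      = α ^ 2 * (∑ v, (G.degree v : ℝ) ^ 2) + 2 * m * (1 - α) ^ 2 := by
    rw [aux_sq]
    have : ∀ i, (Aalpha α G * Aalpha α G) i i
        = α ^ 2 * (G.degree i : ℝ) ^ 2 + (1 - α) ^ 2 * G.degree i := by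
      intro i
      have h1 : (G.adjMatrix ℝ * G.adjMatrix ℝ) i i = G.degree i :=
        G.adjMatrix_mul_self_apply_self i
      simp only [Aalpha, Matrix.add_mul, Matrix.mul_add, Matrix.add_apply, Matrix.smul_mul,
        Matrix.mul_smul, Matrix.smul_apply, h1, Matrix.diagonal_mul, Matrix.mul_diagonal]
      simp
      ring
    simp only [Matrix.trace, Matrix.diag, this, Finset.sum_add_distrib, ← Finset.mul_sum, hdeg]
    ring
  unfold Sk
  rw [dif_pos hH]
  apply csSup_le
  · obtain ⟨s, -, hs⟩ := Finset.exists_subset_card_eq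
      (s := (Finset.univ : Finset (Fin n))) (n := k) (by simp; omega)
    exact ⟨_, s, hs, rfl⟩
  · rintro x ⟨s, hs, rfl⟩
    have := aux_real hH.eigenvalues s k hs hk1 (by omega) _ _ hT hQ
    have e1 : 2 * α * k * m / n = k * (2 * α * m) / (n : ℝ) := by ring
    have e2 : 4 * α ^ 2 * (m : ℝ) ^ 2 / n = (2 * α * m) ^ 2 / (n : ℝ) := by ring
    rw [e1, e2]
    exact this
end

section
/- Let 1/2 < α < 1 and let G be a graph on n vertices with m edges and no isolated vertices. Then for every integer k with 1 ≤ k ≤ n−1, S_k(A_α(G)) ≤ 2αm − (n−k)·( det(A_α(G)) / ( λ_1(A_α(G))·λ_2(A_α(G))^{k−1} ) )^{1/(n−k)}, with equality if and only if λ_2(A_α(G)) = ⋯ = λ_k(A_α(G)) and λ_{k+1}(A_α(G)) = ⋯ = λ_n(A_α(G)). -/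
open Matrix Finset Real

/-- The `i`-th largest eigenvalue (1-indexed) of a real symmetric matrix,
obtained as the difference of consecutive partial sums of largest eigenvalues. -/
noncomputable def eig {n : ℕ} (M : Matrix (Fin n) (Fin n) ℝ) (i : ℕ) : ℝ :=
  Sk M i - Sk M (i - 1)

theorem aux_sorted {n : ℕ} (hn : 0 < n) (f : Fin n → ℝ) :
    ∃ (σ : Equiv.Perm (Fin n)) (g : ℕ → ℝ), Antitone g ∧ ∀ i, f i = g (σ i) := by
  have hs := Tuple.monotone_sort (fun i => - f i)
  refine ⟨(Tuple.sort (fun i => - f i)).symm,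
    fun j => f (Tuple.sort (fun i => - f i) ⟨min j (n-1), by omega⟩), ?_, ?_⟩
  · intro a b hab
    have h1 : (⟨min a (n-1), by omega⟩ : Fin n) ≤ ⟨min b (n-1), by omega⟩ := by
      simp only [Fin.mk_le_mk]; omega
    have := hs h1
    simp only [Function.comp] at this
    simpa using this
  · intro i
    have : ∀ j : Fin n, (⟨min (j : ℕ) (n-1), by omega⟩ : Fin n) = j := by
      intro j; ext; simp; omega
    simp [this]

theorem aux_top (g : ℕ → ℝ) (hg : Antitone g) (t : Finset ℕ) :
    ∑ i ∈ t, g i ≤ ∑ i ∈ range t.card, g i := by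
  classical
  set k := t.card with hk
  have h1 : ∑ i ∈ t \ range k, g i ≤ (t \ range k).card • g k :=
    Finset.sum_le_card_nsmul _ _ _ (fun i hi => hg (by simp at hi; exact hi.2))
  have h2 : (range k \ t).card • g k ≤ ∑ i ∈ range k \ t, g i :=
    Finset.card_nsmul_le_sum _ _ _ (fun i hi => hg (by simp at hi; exact hi.1.le))
  have h3 : (t \ range k).card = (range k \ t).card :=
    Finset.card_sdiff_comm (by simp [hk])
  have h4 := Finset.sum_inter_add_sum_sdiff t (range k) g
  have h5 := Finset.sum_inter_add_sum_sdiff (range k) t g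
  rw [Finset.inter_comm] at h5
  rw [h3] at h1
  linarith

theorem aux_Sk {n : ℕ} (M : Matrix (Fin n) (Fin n) ℝ) (hM : M.IsHermitian)
    (σ : Equiv.Perm (Fin n)) (g : ℕ → ℝ) (hg : Antitone g)
    (h : ∀ i, hM.eigenvalues i = g (σ i)) (k : ℕ) (hk : k ≤ n) :
    Sk M k = ∑ i ∈ range k, g i := by
  rw [Sk, dif_pos hM]
  apply IsGreatest.csSup_eq
  constructor
  · refine ⟨(Finset.univ : Finset (Fin k)).map
      ((Fin.castLEEmb hk).trans σ.symm.toEmbedding), by simp, ?_⟩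
    rw [Finset.sum_map, Finset.sum_range]
    simp [h]
  · rintro x ⟨s, hs, rfl⟩
    have := aux_top g hg (s.map (σ.toEmbedding.trans Fin.valEmbedding))
    simp only [Finset.sum_map, Finset.card_map, hs] at this
    simpa [h] using this

theorem aux_core (n k : ℕ) (hk1 : 1 ≤ k) (hkn : k < n) (g : ℕ → ℝ) (hg : Antitone g)
    (hpos : ∀ i < n, 0 < g i) :
    ∑ i ∈ range k, g i ≤ ∑ i ∈ range n, g i - ((n : ℝ) - k) *
      (((∏ i ∈ range n, g i) / (g 0 * g 1 ^ (k - 1))) ^ (((n : ℝ) - k)⁻¹)) ∧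
    (∑ i ∈ range k, g i = ∑ i ∈ range n, g i - ((n : ℝ) - k) *
      (((∏ i ∈ range n, g i) / (g 0 * g 1 ^ (k - 1))) ^ (((n : ℝ) - k)⁻¹)) ↔
      (∀ i ∈ Finset.Ico 1 k, g i = g 1) ∧ (∀ i ∈ Finset.Ico k n, g i = g k)) := by
  have hd : (0 : ℝ) < (n : ℝ) - k := by
    have : (k : ℝ) < n := by exact_mod_cast hkn
    linarith
  set d : ℝ := (n : ℝ) - k with hdd
  have hsum := Finset.sum_range_add_sum_Ico g hkn.le
  have hprod := Finset.prod_range_mul_prod_Ico g hkn.le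
  have hR : ∏ i ∈ range k, g i = g 0 * ∏ i ∈ Finset.Ico 1 k, g i := by
    rw [← Finset.prod_range_mul_prod_Ico g hk1]; simp
  have hcard : ((Finset.Ico k n).card : ℝ) = d := by
    simp [Nat.cast_sub hkn.le, hdd]
  have hQ : 0 < ∏ i ∈ Finset.Ico k n, g i :=
    Finset.prod_pos (fun i hi => hpos i (by simp at hi; exact hi.2))
  have hP1 : 0 < ∏ i ∈ Finset.Ico 1 k, g i :=
    Finset.prod_pos (fun i hi => hpos i (by simp at hi; omega))
  have h0 : 0 < g 0 := hpos 0 (by omega)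
  have h1 : 0 < g 1 := hpos 1 (by omega)
  have hpw : g 1 ^ (k-1) = ∏ i ∈ Finset.Ico 1 k, g 1 := by simp
  have hle : ∏ i ∈ Finset.Ico 1 k, g i ≤ g 1 ^ (k-1) := by
    rw [hpw]
    exact Finset.prod_le_prod (fun i hi => (hpos i (by simp at hi; omega)).le)
      (fun i hi => hg (by simp at hi; exact hi.1))
  have heq : ∏ i ∈ Finset.Ico 1 k, g i = g 1 ^ (k-1) ↔ ∀ i ∈ Finset.Ico 1 k, g i = g 1 := by
    constructor
    · intro h
      by_contra! hc
      obtain ⟨i, hi, hne⟩ := hc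
      have : ∏ i ∈ Finset.Ico 1 k, g i < ∏ i ∈ Finset.Ico 1 k, g 1 :=
        Finset.prod_lt_prod (fun i hi => hpos i (by simp at hi; omega))
          (fun i hi => hg (by simp at hi; exact hi.1))
          ⟨i, hi, lt_of_le_of_ne (hg (by simp at hi; exact hi.1)) hne⟩
      rw [h, hpw] at this
      exact lt_irrefl _ this
    · intro h
      rw [hpw]; exact Finset.prod_congr rfl h
  set Q := ∏ i ∈ Finset.Ico k n, g i with hQdef
  set P := ∏ i ∈ Finset.Ico 1 k, g i with hPdef
  set W := g 1 ^ (k-1) with hW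
  have hWp : 0 < W := lt_of_lt_of_le hP1 hle
  have hX : (∏ i ∈ range n, g i) / (g 0 * W) = Q * (P / W) := by
    rw [← hprod, hR]; field_simp
  rw [hX]
  have hXp : 0 < Q * (P / W) := by positivity
  have hXQ : Q * (P / W) ≤ Q := by
    have : P / W ≤ 1 := (div_le_one hWp).2 hle
    nlinarith
  have hXQeq : Q * (P / W) = Q ↔ P = W := by
    constructor
    · intro h
      have : P / W = 1 := by
        apply mul_left_cancel₀ hQ.ne'; rw [h, mul_one]
      exact (div_eq_one_iff_eq hWp.ne').1 this
    · intro h; rw [h, div_self hWp.ne', mul_one]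
  have hpowle : (Q * (P / W)) ^ d⁻¹ ≤ Q ^ d⁻¹ :=
    Real.rpow_le_rpow hXp.le hXQ (by positivity)
  have hpoweq : (Q * (P / W)) ^ d⁻¹ = Q ^ d⁻¹ ↔ P = W := by
    rw [Real.rpow_left_inj hXp.le hQ.le (by positivity), hXQeq]
  have hw1 : ∑ i ∈ Finset.Ico k n, d⁻¹ = 1 := by
    rw [Finset.sum_const, nsmul_eq_mul, hcard]; field_simp
  have hnn : ∀ i ∈ Finset.Ico k n, 0 ≤ g i :=
    fun i hi => (hpos i (by simp at hi; exact hi.2)).le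
  have am := Real.geom_mean_le_arith_mean_weighted (Finset.Ico k n) (fun _ => d⁻¹) g
    (fun _ _ => by positivity) hw1 hnn
  have ame := Real.geom_mean_eq_arith_mean_weighted_iff_of_pos (Finset.Ico k n) (fun _ => d⁻¹) g
    (fun _ _ => by positivity) hw1 hnn
  rw [Real.finsetProd_rpow _ _ hnn, ← Finset.mul_sum, ← hQdef] at am ame
  set T := ∑ i ∈ Finset.Ico k n, g i with hT
  have am' : d * Q ^ d⁻¹ ≤ T := by
    calc d * Q ^ d⁻¹ ≤ d * (d⁻¹ * T) := by gcongr
      _ = T := by field_simp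
  have ame' : d * Q ^ d⁻¹ = T ↔ ∀ i ∈ Finset.Ico k n, g i = g k := by
    have : d * Q ^ d⁻¹ = T ↔ Q ^ d⁻¹ = d⁻¹ * T := by
      constructor
      · intro h; rw [← h]; field_simp
      · intro h; rw [h]; field_simp
    rw [this, ame]
    constructor
    · intro h i hi; exact h i hi k (by simp [hkn])
    · intro h i hi j hj; rw [h i hi, h j hj]
  have hm := mul_le_mul_of_nonneg_left hpowle hd.le
  rw [← heq, ← ame', ← hpoweq]
  constructor
  · linarith
  · constructor
    · intro h
      have e1 : d * (Q * (P / W)) ^ d⁻¹ = d * Q ^ d⁻¹ := by linarith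
      exact ⟨mul_left_cancel₀ hd.ne' e1, by linarith⟩
    · rintro ⟨e1, e2⟩
      rw [e1]; linarith

theorem aux_herm {n : ℕ} (α : ℝ) (G : SimpleGraph (Fin n)) [DecidableRel G.Adj] :
    (Aalpha α G).IsHermitian := by
  ext i j
  by_cases h : i = j
  · subst h; simp [Aalpha]
  · simp [Aalpha, Matrix.diagonal_apply, h, Ne.symm h, G.adj_comm]

theorem aux_pos {n : ℕ} (G : SimpleGraph (Fin n)) [DecidableRel G.Adj]
    (α : ℝ) (hα0 : 1 / 2 < α) (hα1 : α < 1) (hiso : ∀ v, 0 < G.degree v) (i : Fin n) :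
    0 < (aux_herm α G).eigenvalues i := by
  have h1 : Module.End.HasEigenvalue (Matrix.toLin' (Aalpha α G)) ((aux_herm α G).eigenvalues i) := by
    rw [Module.End.hasEigenvalue_iff_mem_spectrum, Matrix.spectrum_toLin']
    exact (aux_herm α G).eigenvalues_mem_spectrum_real i
  obtain ⟨v, hv⟩ := eigenvalue_mem_ball h1
  have hd : Aalpha α G v v = α * G.degree v := by simp [Aalpha]
  have hs : ∑ j ∈ Finset.univ.erase v, ‖Aalpha α G v j‖ = (1 - α) * G.degree v := by
    have : ∀ j ∈ Finset.univ.erase v, ‖Aalpha α G v j‖ = (1 - α) * G.adjMatrix ℝ v j := by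
      intro j hj
      have hj' : v ≠ j := by simp at hj; exact fun h => hj h.symm
      by_cases ha : G.Adj v j
      · simp [Aalpha, hj', ha, abs_of_pos (sub_pos.2 hα1)]
      · simp [Aalpha, hj', ha]
    rw [Finset.sum_congr rfl this, ← Finset.mul_sum, Finset.sum_erase _ (by simp)]
    simp [SimpleGraph.adjMatrix_apply, Finset.sum_boole, ← SimpleGraph.card_neighborFinset_eq_degree,
      SimpleGraph.neighborFinset_eq_filter]
  rw [hs, hd, Metric.mem_closedBall, Real.dist_eq, abs_le] at hv
  have : (0 : ℝ) < G.degree v := by exact_mod_cast hiso v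
  nlinarith [hv.1]

theorem stmt4 {n : ℕ} (G : SimpleGraph (Fin n)) [DecidableRel G.Adj]
    (α : ℝ) (hα0 : 1 / 2 < α) (hα1 : α < 1)
    (hiso : ∀ v, 0 < G.degree v)
    (m : ℕ) (hm : G.edgeFinset.card = m)
    (k : ℕ) (hk1 : 1 ≤ k) (hkn : k ≤ n - 1) :
    Sk (Aalpha α G) k ≤ 2 * α * m - ((n : ℝ) - k) *
        (((Aalpha α G).det / (eig (Aalpha α G) 1 * eig (Aalpha α G) 2 ^ (k - 1)))
          ^ (((n : ℝ) - k)⁻¹)) ∧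
    (Sk (Aalpha α G) k = 2 * α * m - ((n : ℝ) - k) *
        (((Aalpha α G).det / (eig (Aalpha α G) 1 * eig (Aalpha α G) 2 ^ (k - 1)))
          ^ (((n : ℝ) - k)⁻¹)) ↔
      (∀ i, 2 ≤ i → i ≤ k → eig (Aalpha α G) i = eig (Aalpha α G) 2) ∧
      (∀ i, k + 1 ≤ i → i ≤ n → eig (Aalpha α G) i = eig (Aalpha α G) (k + 1))) := by
  have hn : k < n := by omega
  obtain ⟨σ, g, hg, h⟩ := aux_sorted (by omega : 0 < n) (aux_herm α G).eigenvalues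
  have hS := aux_Sk _ (aux_herm α G) σ g hg h
  have hE : ∀ i, 1 ≤ i → i ≤ n → eig (Aalpha α G) i = g (i - 1) := by
    intro i h1 h2
    obtain ⟨j, rfl⟩ : ∃ j, i = j + 1 := ⟨i - 1, by omega⟩
    rw [eig, hS _ h2, hS _ (by omega), Finset.sum_range_succ]
    simp
  have hpos : ∀ i < n, 0 < g i := by
    intro i hi
    have := aux_pos G α hα0 hα1 hiso (σ.symm ⟨i, hi⟩)
    rw [h] at this
    simpa using this
  have hdet : (Aalpha α G).det = ∏ i ∈ range n, g i := by
    rw [(aux_herm α G).det_eq_prod_eigenvalues, Finset.prod_range,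
      ← Equiv.prod_comp σ (fun i : Fin n => g i)]
    simp [h]
  have htr : 2 * α * m = ∑ i ∈ range n, g i := by
    have h1 := (aux_herm α G).trace_eq_sum_eigenvalues
    have h2 : (Aalpha α G).trace = α * ∑ i, (G.degree i : ℝ) := by
      simp [Matrix.trace, Aalpha, Finset.mul_sum]
    have h3 : ∑ i, (G.degree i : ℝ) = 2 * m := by
      rw [← hm]; exact_mod_cast G.sum_degrees_eq_twice_card_edges
    rw [Finset.sum_range, ← Equiv.sum_comp σ (fun i : Fin n => g i)]
    simp only [h2, h3, h] at h1
    simp only [RCLike.ofReal_real_eq_id, id] at h1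
    linarith
  have hc := aux_core n k hk1 hn g hg hpos
  rw [hS k hn.le, hdet, htr, hE 1 le_rfl (by omega), hE 2 (by omega) (by omega)]
  refine ⟨hc.1, hc.2.trans (and_congr ?_ ?_)⟩
  · constructor
    · intro H i h1 h2
      rw [hE i (by omega) (by omega)]
      exact H (i-1) (by simp; omega)
    · intro H i hi
      simp at hi
      have := H (i+1) (by omega) (by omega)
      rwa [hE (i+1) (by omega) (by omega)] at this
  · rw [hE (k+1) (by omega) (by omega)]
    constructor
    · intro H i h1 h2
      rw [hE i (by omega) (by omega)]
      exact H (i-1) (by simp; omega)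
    · intro H i hi
      simp at hi
      have := H (i+1) (by omega) (by omega)
      rwa [hE (i+1) (by omega) (by omega)] at this
end

section
/- Let G be a bipartite graph on n vertices with m edges, and let η be the nullity of G (the multiplicity of the eigenvalue 0 of the adjacency matrix A(G)). Then the sum S_k(A(G)) of the k largest adjacency eigenvalues satisfies: S_k(A(G)) ≤ √(km) if 1 ≤ k ≤ ⌊(n−η)/2⌋; S_k(A(G)) ≤ √(⌊(n−η)/2⌋·m) if ⌊(n−η)/2⌋ < k ≤ ⌊(n+η)/2⌋; and S_k(A(G)) ≤ √((n−k)m) if ⌊(n+η)/2⌋ < k ≤ n. -/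
open Matrix Finset Real

lemma aux_key_s5 {n : ℕ} (l : Fin n → ℝ) (m : ℝ)
    (hs : ∀ f : ℝ → ℝ, ∑ i, f (l i) = ∑ i, f (-l i)) (h2 : ∑ i, l i ^ 2 = 2 * m)
    (s : Finset (Fin n)) :
    ∑ i ∈ s, l i ≤ Real.sqrt (((s.filter (fun i => 0 < l i)).card : ℝ) * m) := by
  have h3 : ∑ i ∈ univ.filter (fun i => 0 < l i), l i ^ 2 = m := by
    have h := hs (fun x => if 0 < x then x ^ 2 else 0)
    have h4 : ∑ i, l i ^ 2 = ∑ i, (if 0 < l i then l i ^ 2 else 0)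
        + ∑ i, (if 0 < - l i then (- l i) ^ 2 else 0) := by
      rw [← Finset.sum_add_distrib]
      refine Finset.sum_congr rfl fun i _ => ?_
      rcases lt_trichotomy (l i) 0 with h | h | h
      · simp [h, h.le]
      · simp [h]
      · simp [h, h.le]
    rw [Finset.sum_filter]
    linarith
  have h5 : ∑ i ∈ s, l i ≤ ∑ i ∈ s.filter (fun i => 0 < l i), l i := by
    rw [Finset.sum_filter]
    refine Finset.sum_le_sum fun i _ => ?_
    split_ifs with h
    · exact le_rfl
    · exact not_lt.mp h
  refine h5.trans (Real.le_sqrt_of_sq_le ?_)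
  refine (sq_sum_le_card_mul_sum_sq).trans ?_
  refine mul_le_mul_of_nonneg_left ?_ (Nat.cast_nonneg _)
  rw [← h3]
  exact Finset.sum_le_sum_of_subset_of_nonneg
    (Finset.filter_subset_filter _ (Finset.subset_univ _)) (fun i _ _ => sq_nonneg _)

lemma aux_card {n : ℕ} (l : Fin n → ℝ)
    (hs : ∀ f : ℝ → ℝ, ∑ i, f (l i) = ∑ i, f (-l i)) :
    2 * (univ.filter (fun i => 0 < l i)).card = (univ.filter (fun i => l i ≠ 0)).card := by
  have h := hs (fun x => if 0 < x then 1 else 0)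
  have h4 : ∑ i, (if l i ≠ 0 then (1 : ℝ) else 0) = ∑ i, (if 0 < l i then 1 else 0)
      + ∑ i, (if 0 < - l i then 1 else 0) := by
    rw [← Finset.sum_add_distrib]
    refine Finset.sum_congr rfl fun i _ => ?_
    rcases lt_trichotomy (l i) 0 with h | h | h
    · simp [h, h.le, h.ne]
    · simp [h]
    · simp [h, h.le, h.ne']
  rw [← h, Finset.sum_boole, Finset.sum_boole] at h4
  have : ((2 * (univ.filter (fun i => 0 < l i)).card : ℕ) : ℝ)
      = (((univ.filter (fun i => l i ≠ 0)).card : ℕ) : ℝ) := by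
    push_cast; linarith
  exact_mod_cast this

lemma aux_sym {n : ℕ} (G : SimpleGraph (Fin n)) [DecidableRel G.Adj]
    (hbip : G.Colorable 2) (hA : (G.adjMatrix ℝ).IsHermitian) (f : ℝ → ℝ) :
    ∑ i, f (hA.eigenvalues i) = ∑ i, f (-hA.eigenvalues i) := by
  obtain ⟨c⟩ := hbip
  let d : Fin n → ℝ := fun i => if c i = 0 then 1 else -1
  have hd : ∀ i, d i * d i = 1 := by
    intro i; simp only [d]; split_ifs <;> norm_num
  have hdd : Matrix.diagonal d * Matrix.diagonal d = 1 := by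
    rw [Matrix.diagonal_mul_diagonal]; simp [hd]
  have hconj : Matrix.diagonal d * G.adjMatrix ℝ * Matrix.diagonal d = - G.adjMatrix ℝ := by
    ext i j
    rw [Matrix.mul_diagonal, Matrix.diagonal_mul]
    simp only [SimpleGraph.adjMatrix_apply, Matrix.neg_apply]
    split_ifs with hij
    · have hne := c.valid hij
      simp only [d]
      have : ∀ a b : Fin 2, a ≠ b → (a = 0 ∧ b ≠ 0) ∨ (a ≠ 0 ∧ b = 0) := by decide
      rcases this _ _ hne with ⟨h1, h2⟩ | ⟨h1, h2⟩ <;> simp [h1, h2]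
    · simp
  have hcp : (G.adjMatrix ℝ).charpoly = (- G.adjMatrix ℝ).charpoly := by
    rw [← hconj, Matrix.charpoly_mul_comm, ← mul_assoc, hdd, one_mul]
  have hneg : (- G.adjMatrix ℝ).charpoly
      = ∏ i, (Polynomial.X - Polynomial.C (-hA.eigenvalues i)) := by
    apply Polynomial.funext
    intro x
    have e : (G.adjMatrix ℝ).charpoly.eval (-x) = _ := congrArg (Polynomial.eval (-x)) hA.charpoly_eq
    rw [Matrix.eval_charpoly] at e ⊢
    rw [Polynomial.eval_prod] at e ⊢
    have e2 : Matrix.scalar (Fin n) x - - G.adjMatrix ℝ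
        = - (Matrix.scalar (Fin n) (-x) - G.adjMatrix ℝ) := by
      rw [map_neg]; abel
    rw [e2, Matrix.det_neg, e, Fintype.card, ← Finset.prod_const, ← Finset.prod_mul_distrib]
    refine Finset.prod_congr rfl fun i _ => ?_
    simp
    ring
  have hr : Multiset.map hA.eigenvalues univ.val
      = Multiset.map (fun i => -hA.eigenvalues i) univ.val := by
    have h1 := hA.roots_charpoly_eq_eigenvalues
    rw [hcp, hneg, Polynomial.roots_prod] at h1
    · simpa using h1.symm
    · exact Finset.prod_ne_zero_iff.mpr fun i _ => Polynomial.X_sub_C_ne_zero _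
  have := congrArg (fun M => (Multiset.map f M).sum) hr
  simpa [Multiset.map_map, Function.comp_def, Finset.sum] using this

lemma aux_sq_s5 {n : ℕ} (G : SimpleGraph (Fin n)) [DecidableRel G.Adj]
    (hA : (G.adjMatrix ℝ).IsHermitian) :
    ∑ i, hA.eigenvalues i ^ 2 = 2 * (G.edgeFinset.card : ℝ) := by
  have h1 : (G.adjMatrix ℝ * G.adjMatrix ℝ).trace = 2 * (G.edgeFinset.card : ℝ) := by
    simp only [Matrix.trace, Matrix.diag_apply, SimpleGraph.adjMatrix_mul_self_apply_self]
    exact_mod_cast G.sum_degrees_eq_twice_card_edges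
  rw [← h1]
  have h2 := hA.spectral_theorem
  have h3 : G.adjMatrix ℝ * G.adjMatrix ℝ = Unitary.conjStarAlgAut ℝ _ hA.eigenvectorUnitary
      (Matrix.diagonal hA.eigenvalues * Matrix.diagonal hA.eigenvalues) := by
    rw [map_mul]
    exact congrArg₂ (· * ·) h2 h2
  rw [h3, Unitary.conjStarAlgAut_apply, Matrix.trace_mul_comm, ← mul_assoc]
  simp [Matrix.diagonal_mul_diagonal, Matrix.trace, sq]

theorem stmt5 {n : ℕ} (G : SimpleGraph (Fin n)) [DecidableRel G.Adj]
    (hbip : G.Colorable 2)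
    (m : ℕ) (hm : G.edgeFinset.card = m)
    (η : ℕ) (hη : η = n - (G.adjMatrix ℝ).rank)
    (k : ℕ) (hk1 : 1 ≤ k) (hkn : k ≤ n) :
    (k ≤ (n - η) / 2 → Sk (G.adjMatrix ℝ) k ≤ Real.sqrt ((k : ℝ) * m)) ∧
    ((n - η) / 2 < k → k ≤ (n + η) / 2 →
      Sk (G.adjMatrix ℝ) k ≤ Real.sqrt ((((n - η) / 2 : ℕ) : ℝ) * m)) ∧
    ((n + η) / 2 < k → Sk (G.adjMatrix ℝ) k ≤ Real.sqrt (((n - k : ℕ) : ℝ) * m)) := by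
  have hA := G.isHermitian_adjMatrix ℝ
  have hs := aux_sym G hbip hA
  have h2 := aux_sq_s5 G hA
  rw [hm] at h2
  have hc := aux_card _ hs
  have hr := hA.rank_eq_card_non_zero_eigs
  rw [Fintype.card_subtype, ← hc] at hr
  have hle : (G.adjMatrix ℝ).rank ≤ n := by
    simpa using (G.adjMatrix ℝ).rank_le_card_width
  set p := (univ.filter (fun i => 0 < hA.eigenvalues i)).card with hp
  have hpη : (n - η) / 2 = p := by omega
  have hub : ∀ b : ℝ, (∀ s : Finset (Fin n), s.card = k → ∑ i ∈ s, hA.eigenvalues i ≤ b) →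
      Sk (G.adjMatrix ℝ) k ≤ b := by
    intro b hb
    rw [Sk, dif_pos hA]
    apply csSup_le
    · obtain ⟨s, _, hs⟩ := Finset.exists_subset_card_eq (s := (univ : Finset (Fin n))) (n := k)
        (by simpa using hkn)
      exact ⟨_, s, hs, rfl⟩
    · rintro x ⟨s, hs, rfl⟩
      exact hb s hs
  refine ⟨fun _ => hub _ fun s hk => ?_, fun _ _ => hub _ fun s hk => ?_,
    fun _ => hub _ fun s hk => ?_⟩
  · refine (aux_key_s5 _ _ hs h2 s).trans (Real.sqrt_le_sqrt ?_)
    refine mul_le_mul_of_nonneg_right ?_ (Nat.cast_nonneg _)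
    rw [← hk]
    exact_mod_cast Finset.card_filter_le _ _
  · refine (aux_key_s5 _ _ hs h2 s).trans (Real.sqrt_le_sqrt ?_)
    refine mul_le_mul_of_nonneg_right ?_ (Nat.cast_nonneg _)
    rw [hpη]
    exact_mod_cast Finset.card_le_card
      (Finset.filter_subset_filter _ (Finset.subset_univ _))
  · have h0 := hs id
    simp only [id, Finset.sum_neg_distrib] at h0
    have h1 := Finset.sum_add_sum_compl s hA.eigenvalues
    have h3 : ∑ i ∈ s, hA.eigenvalues i = ∑ i ∈ sᶜ, (-hA.eigenvalues i) := by
      rw [Finset.sum_neg_distrib]; linarith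
    rw [h3]
    refine (aux_key_s5 (fun i => -hA.eigenvalues i) m ?_ ?_ sᶜ).trans (Real.sqrt_le_sqrt ?_)
    · intro f; simpa using (hs f).symm
    · simpa using h2
    refine mul_le_mul_of_nonneg_right ?_ (Nat.cast_nonneg _)
    have : sᶜ.card = n - k := by rw [Finset.card_compl, hk, Fintype.card_fin]
    rw [← this]
    exact_mod_cast Finset.card_filter_le _ _
end

section
/- Let T be a tree on n vertices with matching number β. Then the sum S_k(A(T)) of the k largest adjacency eigenvalues satisfies: S_k(A(T)) ≤ √(k(n−1)) if 1 ≤ k ≤ β; S_k(A(T)) ≤ √(β(n−1)) if β < k ≤ n−β; and S_k(A(T)) ≤ √((n−k)(n−1)) if n−β < k ≤ n. -/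
open Matrix Finset Real

/-- The matching number of a graph: the largest number of pairwise disjoint edges. -/
noncomputable def matchingNumber {n : ℕ} (G : SimpleGraph (Fin n)) : ℕ :=
  sSup {k | ∃ M : G.Subgraph, M.IsMatching ∧ M.edgeSet.ncard = k}

lemma aux_rows {m n : Type*} [Fintype m] [Fintype n] (M : Matrix m n ℝ) (r : ℕ) (hr : r = M.rank) :
    ∃ a : Fin r → m, Function.Injective a ∧ LinearIndependent ℝ (M.submatrix a id).row := by
  obtain ⟨κ, a, ha, hs, hl⟩ := exists_linearIndependent' ℝ M.row
  have : Finite κ := Finite.of_injective a ha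
  have : Fintype κ := Fintype.ofFinite κ
  have hc : Fintype.card κ = r := by
    rw [hr, Matrix.rank_eq_finrank_span_row, ← hs, finrank_span_eq_card hl]
  let e : Fin r ≃ κ := (Fintype.equivFinOfCardEq hc).symm
  exact ⟨a ∘ e, ha.comp e.injective, hl.comp e e.injective⟩

lemma aux_minor {m n : Type*} [Fintype m] [Fintype n] (M : Matrix m n ℝ) (r : ℕ) (hr : r = M.rank) :
    ∃ (f : Fin r → m) (g : Fin r → n), Function.Injective f ∧ Function.Injective g ∧
      (M.submatrix f g).det ≠ 0 := by
  obtain ⟨f, hf, hl⟩ := aux_rows M r hr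
  have h1 : r = (M.submatrix f id)ᵀ.rank := by
    rw [Matrix.rank_transpose, hl.rank_matrix, Fintype.card_fin]
  obtain ⟨g, hg, hl2⟩ := aux_rows _ r h1
  refine ⟨f, g, hf, hg, ?_⟩
  have := (Matrix.linearIndependent_rows_iff_isUnit).1 hl2
  rw [Matrix.isUnit_iff_isUnit_det, isUnit_iff_ne_zero, ← Matrix.det_transpose] at this
  exact this

lemma aux_match {n : ℕ} (T : SimpleGraph (Fin n)) (c : Fin n → Fin 2)
    (M : Matrix (Fin n) (Fin n) ℝ) (h : ∀ i j, M i j ≠ 0 → T.Adj i j ∧ c i ≠ c j)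
    (z : Fin 2) (hz : ∀ i j, M i j ≠ 0 → c i = z) :
    M.rank ≤ matchingNumber T := by
  obtain ⟨f, g, hf, hg, hd⟩ := aux_minor M _ rfl
  rw [Matrix.det_apply] at hd
  obtain ⟨σ, -, hσ⟩ := Finset.exists_ne_zero_of_sum_ne_zero hd
  have hp : ∏ i, (M.submatrix f g) (σ i) i ≠ 0 := fun h0 => hσ (by rw [h0, smul_zero])
  have hp' : ∀ i, M (f (σ i)) (g i) ≠ 0 := fun i => Finset.prod_ne_zero_iff.1 hp i (mem_univ i)
  set p : Fin M.rank → Fin n := fun i => f (σ i) with hpdef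
  have hpi : Function.Injective p := hf.comp σ.injective
  have hne : ∀ i j, p i ≠ g j := by
    intro i j hij
    have h1 := hz _ _ (hp' i)
    have h2 := hz _ _ (hp' j)
    have h3 := (h _ _ (hp' j)).2
    apply h3
    rw [h2, ← hij]; exact h1.symm
  let S : T.Subgraph :=
    { verts := Set.range p ∪ Set.range g
      Adj := fun a b => ∃ i, (a = p i ∧ b = g i) ∨ (a = g i ∧ b = p i)
      adj_sub := by
        rintro a b ⟨i, ⟨rfl, rfl⟩ | ⟨rfl, rfl⟩⟩
        · exact (h _ _ (hp' i)).1
        · exact (h _ _ (hp' i)).1.symm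
      edge_vert := by
        rintro a b ⟨i, ⟨rfl, rfl⟩ | ⟨rfl, rfl⟩⟩
        · exact Or.inl ⟨i, rfl⟩
        · exact Or.inr ⟨i, rfl⟩
      symm := ⟨by
        rintro a b ⟨i, ⟨rfl, rfl⟩ | ⟨rfl, rfl⟩⟩
        · exact ⟨i, Or.inr ⟨rfl, rfl⟩⟩
        · exact ⟨i, Or.inl ⟨rfl, rfl⟩⟩⟩ }
  have hS : S.IsMatching := by
    rintro v (⟨i, rfl⟩ | ⟨i, rfl⟩)
    · refine ⟨g i, ⟨i, Or.inl ⟨rfl, rfl⟩⟩, ?_⟩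
      rintro y ⟨j, ⟨h1, rfl⟩ | ⟨h1, rfl⟩⟩
      · rw [hpi h1]
      · exact absurd h1 (hne _ _)
    · refine ⟨p i, ⟨i, Or.inr ⟨rfl, rfl⟩⟩, ?_⟩
      rintro y ⟨j, ⟨h1, rfl⟩ | ⟨h1, rfl⟩⟩
      · exact absurd h1.symm (hne _ _)
      · rw [hg h1]
  have hE : S.edgeSet = Set.range (fun i => s(p i, g i)) := by
    ext e
    induction e using Sym2.ind with
    | _ a b =>
      rw [SimpleGraph.Subgraph.mem_edgeSet]
      constructor
      · rintro ⟨i, ⟨rfl, rfl⟩ | ⟨rfl, rfl⟩⟩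
        · exact ⟨i, rfl⟩
        · exact ⟨i, Sym2.eq_swap⟩
      · rintro ⟨i, hi⟩
        rcases Sym2.eq_iff.1 hi with ⟨h1, h2⟩ | ⟨h1, h2⟩
        · exact ⟨i, Or.inl ⟨h1.symm, h2.symm⟩⟩
        · exact ⟨i, Or.inr ⟨h2.symm, h1.symm⟩⟩
  have hinj : Function.Injective (fun i => s(p i, g i)) := by
    intro i j hij
    rcases Sym2.eq_iff.1 hij with ⟨h1, h2⟩ | ⟨h1, h2⟩
    · exact hpi h1
    · exact absurd h1 (hne _ _)
  apply le_csSup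
  · refine ⟨Nat.card (Sym2 (Fin n)), ?_⟩
    rintro k ⟨M, -, rfl⟩
    exact Set.ncard_le_card _
  · refine ⟨S, hS, ?_⟩
    rw [hE, ← Set.image_univ, Set.ncard_image_of_injective _ hinj, Set.ncard_univ, Nat.card_fin]

lemma aux_rank_add {n : ℕ} (A B : Matrix (Fin n) (Fin n) ℝ) : (A + B).rank ≤ A.rank + B.rank := by
  unfold Matrix.rank
  rw [Matrix.mulVecLin_add]
  refine le_trans (Submodule.finrank_mono (LinearMap.range_add_le _ _)) ?_
  exact Submodule.finrank_add_le_finrank_add_finrank _ _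

lemma aux_rank {n : ℕ} (T : SimpleGraph (Fin n)) [DecidableRel T.Adj] (c : T.Coloring (Fin 2)) :
    (T.adjMatrix ℝ).rank ≤ 2 * matchingNumber T := by
  let P (z : Fin 2) : Matrix (Fin n) (Fin n) ℝ :=
    Matrix.of fun i j => if T.Adj i j ∧ c i = z then 1 else 0
  have hA : T.adjMatrix ℝ = P 0 + P 1 := by
    ext i j
    simp only [SimpleGraph.adjMatrix_apply, Matrix.add_apply, P, Matrix.of_apply]
    have : c i = 0 ∨ c i = 1 := by omega
    rcases this with h | h <;> by_cases h2 : T.Adj i j <;> simp [h, h2]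
  have hP : ∀ z, (P z).rank ≤ matchingNumber T := by
    intro z
    have key : ∀ i j, P z i j ≠ 0 → T.Adj i j ∧ c i = z := by
      intro i j hij
      by_contra hcon
      exact hij (by simp only [P, Matrix.of_apply]; exact if_neg hcon)
    exact aux_match T c (P z) (fun i j hij => ⟨(key i j hij).1, c.valid (key i j hij).1⟩) z
      (fun i j hij => (key i j hij).2)
  rw [hA]
  have := aux_rank_add (P 0) (P 1)
  have := hP 0
  have := hP 1
  omega

lemma aux_symm {n : ℕ} (T : SimpleGraph (Fin n)) [DecidableRel T.Adj] (c : T.Coloring (Fin 2))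
    (h : (T.adjMatrix ℝ).IsHermitian) (F : ℝ → ℝ) :
    ∑ i, F (h.eigenvalues i) = ∑ i, F (-h.eigenvalues i) := by
  let D : Matrix (Fin n) (Fin n) ℝ := Matrix.diagonal fun i => if c i = 0 then 1 else -1
  have hDD : D * D = 1 := by
    simp only [D, Matrix.diagonal_mul_diagonal]
    rw [← Matrix.diagonal_one]
    congr 1
    ext i
    split_ifs <;> norm_num
  have hDA : D * (T.adjMatrix ℝ) * D = -(T.adjMatrix ℝ) := by
    ext i j
    simp only [D, Matrix.mul_diagonal, Matrix.diagonal_mul, Matrix.neg_apply,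
      SimpleGraph.adjMatrix_apply]
    by_cases h2 : T.Adj i j
    · have h3 := c.valid h2
      have : c i = 0 ∨ c i = 1 := by omega
      have : c j = 0 ∨ c j = 1 := by omega
      rcases this with h5 | h5 <;> rcases ‹c i = 0 ∨ c i = 1› with h6 | h6 <;> simp_all
    · simp [h2]
  have hch : (-(T.adjMatrix ℝ)).charpoly = (T.adjMatrix ℝ).charpoly := by
    rw [← hDA, Matrix.charpoly_mul_comm, ← mul_assoc, hDD, one_mul]
  have h1 := h.roots_charpoly_eq_eigenvalues
  have h2 : (T.adjMatrix ℝ).charpoly = ∏ i, (Polynomial.X - Polynomial.C (-h.eigenvalues i)) := by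
    have hs := h.spectral_theorem
    rw [← hch]
    have : -(T.adjMatrix ℝ) = Unitary.conjStarAlgAut ℝ _ h.eigenvectorUnitary
        (Matrix.diagonal (fun i => -h.eigenvalues i)) := by
      conv_lhs => rw [hs]
      rw [← map_neg]
      congr 1
      ext i j
      by_cases hij : i = j
      · subst hij; simp
      · simp [hij]
    rw [this, Unitary.conjStarAlgAut_apply, Matrix.charpoly_mul_comm, ← mul_assoc]
    simp [Matrix.charpoly_diagonal]
  have h3 : (T.adjMatrix ℝ).charpoly.roots = Multiset.map (fun i => -h.eigenvalues i) Finset.univ.val := by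
    rw [h2, Polynomial.roots_prod]
    · simp
    · exact Finset.prod_ne_zero_iff.2 fun i _ => Polynomial.X_sub_C_ne_zero _
  have h4 : Multiset.map h.eigenvalues Finset.univ.val
      = Multiset.map (fun i => -h.eigenvalues i) Finset.univ.val := by
    rw [← h3, h1]; rfl
  have h5 := congrArg (fun s => (Multiset.map F s).sum) h4
  simp only [Multiset.map_map] at h5
  exact h5

lemma aux_sq_s6 {n : ℕ} (T : SimpleGraph (Fin n)) [DecidableRel T.Adj] (hT : T.IsTree)
    (h : (T.adjMatrix ℝ).IsHermitian) :
    ∑ i, (h.eigenvalues i)^2 = 2 * ((n : ℝ) - 1) := by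
  have h1 : (T.adjMatrix ℝ * T.adjMatrix ℝ).trace = ∑ i, (h.eigenvalues i)^2 := by
    conv_lhs => rw [h.spectral_theorem, ← map_mul, Unitary.conjStarAlgAut_apply,
      Matrix.trace_mul_comm, ← mul_assoc]
    simp [Matrix.trace_diagonal, Matrix.diagonal_mul_diagonal, sq]
  rw [← h1]
  have h2 : (T.adjMatrix ℝ * T.adjMatrix ℝ).trace = ∑ i, (T.degree i : ℝ) := by
    simp only [Matrix.trace, Matrix.diag_apply, SimpleGraph.adjMatrix_mul_self_apply_self]
  rw [h2]
  have h3 := T.sum_degrees_eq_twice_card_edges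
  have h4 := hT.card_edgeFinset
  rw [Fintype.card_fin] at h4
  have h5 : (T.edgeFinset.card : ℝ) + 1 = n := by exact_mod_cast h4
  rw [← Nat.cast_sum, h3]
  push_cast; linarith

lemma aux_cs {n : ℕ} (f : Fin n → ℝ) (s : Finset (Fin n)) (m : ℕ) (K : ℝ)
    (hK : ∑ i, (max (f i) 0)^2 = K) (hs : (s.filter (fun i => 0 < f i)).card ≤ m) :
    ∑ i ∈ s, f i ≤ Real.sqrt ((m : ℝ) * K) := by
  have h1 : ∑ i ∈ s, f i ≤ ∑ i ∈ s.filter (fun i => 0 < f i), max (f i) 0 := by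
    rw [Finset.sum_filter]
    apply Finset.sum_le_sum
    intro i _
    split_ifs with h
    · exact le_max_left _ _
    · exact not_lt.1 h
  refine h1.trans (Real.le_sqrt_of_sq_le ?_)
  refine sq_sum_le_card_mul_sum_sq.trans ?_
  have h2 : ∑ i ∈ s.filter (fun i => 0 < f i), (max (f i) 0)^2 ≤ K := by
    rw [← hK]
    exact Finset.sum_le_sum_of_subset_of_nonneg (Finset.subset_univ _) (fun i _ _ => sq_nonneg _)
  have h3 : 0 ≤ ∑ i ∈ s.filter (fun i => 0 < f i), (max (f i) 0)^2 :=
    Finset.sum_nonneg fun i _ => sq_nonneg _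
  exact mul_le_mul (by exact_mod_cast hs) h2 h3 (by positivity)

theorem stmt6 {n : ℕ} (T : SimpleGraph (Fin n)) [DecidableRel T.Adj] (hT : T.IsTree)
    (β : ℕ) (hβ : β = matchingNumber T)
    (k : ℕ) (hk1 : 1 ≤ k) (hkn : k ≤ n) :
    (k ≤ β → Sk (T.adjMatrix ℝ) k ≤ Real.sqrt ((k : ℝ) * ((n : ℝ) - 1))) ∧
    (β < k → k ≤ n - β → Sk (T.adjMatrix ℝ) k ≤ Real.sqrt ((β : ℝ) * ((n : ℝ) - 1))) ∧
    (n - β < k → Sk (T.adjMatrix ℝ) k ≤ Real.sqrt ((((n - k : ℕ)) : ℝ) * ((n : ℝ) - 1))) := by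
  have hH : (T.adjMatrix ℝ).IsHermitian := by
    have := T.isSymm_adjMatrix (α := ℝ)
    rw [Matrix.IsHermitian, Matrix.conjTranspose_eq_transpose_of_trivial]
    exact this
  have c := hT.coloringTwo
  have hsym := aux_symm T c hH
  have hsq := aux_sq_s6 T hT hH
  have hneg : ∑ i, (max (-hH.eigenvalues i) 0)^2 = ∑ i, (max (hH.eigenvalues i) 0)^2 :=
    (hsym (fun x => (max x 0)^2)).symm
  have hsplit : ∑ i, (hH.eigenvalues i)^2 = ∑ i, (max (hH.eigenvalues i) 0)^2
      + ∑ i, (max (-hH.eigenvalues i) 0)^2 := by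
    rw [← Finset.sum_add_distrib]
    refine Finset.sum_congr rfl fun i _ => ?_
    rcases le_total 0 (hH.eigenvalues i) with h | h
    · rw [max_eq_left h, max_eq_right (by linarith)]; ring
    · rw [max_eq_right h, max_eq_left (by linarith)]; ring
  have hpos1 : ∑ i, (max (hH.eigenvalues i) 0)^2 = (n : ℝ) - 1 := by linarith
  have hneg1 : ∑ i, (max (-hH.eigenvalues i) 0)^2 = (n : ℝ) - 1 := by linarith
  have hsum0 : ∑ i, hH.eigenvalues i = 0 := by
    have := hsym (fun x => x)
    rw [Finset.sum_neg_distrib] at this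
    linarith
  have hcard : (Finset.univ.filter (fun i => 0 < hH.eigenvalues i)).card ≤ β := by
    have h1 := hsym (fun x => if 0 < x then 1 else 0)
    simp only [Finset.sum_boole, Left.neg_pos_iff, Nat.cast_inj] at h1
    have h2 := hH.rank_eq_card_non_zero_eigs
    have h3 := aux_rank T c
    rw [Fintype.card_subtype] at h2
    have h4 : (Finset.univ.filter (fun i => hH.eigenvalues i ≠ 0)) =
      (Finset.univ.filter (fun i => 0 < hH.eigenvalues i)) ∪
      (Finset.univ.filter (fun i => hH.eigenvalues i < 0)) := by
      ext i
      simp only [Finset.mem_filter, Finset.mem_univ, true_and, Finset.mem_union]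
      rw [ne_iff_lt_or_gt, or_comm]
    rw [h4, Finset.card_union_of_disjoint] at h2
    · omega
    · rw [Finset.disjoint_filter]
      intro i _ h5 h6
      linarith
  have red : ∀ B : ℝ, (∀ s : Finset (Fin n), s.card = k → ∑ i ∈ s, hH.eigenvalues i ≤ B) →
      Sk (T.adjMatrix ℝ) k ≤ B := by
    intro B hB
    rw [Sk, dif_pos hH]
    apply csSup_le
    · obtain ⟨s, -, hs⟩ := Finset.exists_subset_card_eq
        (s := (Finset.univ : Finset (Fin n))) (n := k) (by simpa using hkn)
      exact ⟨_, s, hs, rfl⟩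
    · rintro x ⟨s, hs, rfl⟩
      exact hB s hs
  refine ⟨fun _ => red _ fun s hs => ?_, fun _ _ => red _ fun s hs => ?_,
    fun _ => red _ fun s hs => ?_⟩
  · exact aux_cs _ s k _ hpos1 (hs ▸ Finset.card_filter_le _ _)
  · exact aux_cs _ s β _ hpos1
      ((Finset.card_le_card (Finset.filter_subset_filter _ (Finset.subset_univ s))).trans hcard)
  · have h1 := Finset.sum_add_sum_compl s hH.eigenvalues
    have h2 : ∑ i ∈ s, hH.eigenvalues i = ∑ i ∈ sᶜ, -hH.eigenvalues i := by
      rw [Finset.sum_neg_distrib]; linarith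
    rw [h2]
    refine aux_cs _ sᶜ (n - k) _ hneg1 ((Finset.card_filter_le _ _).trans ?_)
    rw [Finset.card_compl, Fintype.card_fin, hs]
end

section
/- Let T be a tree on n vertices with matching number β, and let 0 ≤ α < 1/2. Then: S_k(A_α(T)) ≤ α(n+2k−2) + (1−2α)√(k(n−1)) if 1 ≤ k ≤ β; S_k(A_α(T)) ≤ α(n+2k−2) + (1−2α)√(β(n−1)) if β < k ≤ n−β; and S_k(A_α(T)) ≤ α(n+2k−2) + (1−2α)√((n−k)(n−1)) if n−β < k ≤ n. -/
open Matrix Finset Real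

lemma aux_spec {n : ℕ} (X : Matrix (Fin n) (Fin n) ℝ) (hX : X.IsHermitian) :
    ∃ U : Matrix (Fin n) (Fin n) ℝ, Uᵀ * U = 1 ∧ U * Uᵀ = 1 ∧
      X = U * diagonal hX.eigenvalues * Uᵀ := by
  refine ⟨hX.eigenvectorUnitary, ?_, ?_, ?_⟩
  · have := Unitary.coe_star_mul_self hX.eigenvectorUnitary
    simpa [star_eq_conjTranspose] using this
  · have := Unitary.coe_mul_star_self hX.eigenvectorUnitary
    simpa [star_eq_conjTranspose] using this
  · have := hX.spectral_theorem
    rw [Unitary.conjStarAlgAut_apply] at this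
    simpa [star_eq_conjTranspose, Function.comp_def] using this

lemma aux_conj_diag {n : ℕ} (U : Matrix (Fin n) (Fin n) ℝ) (μ : Fin n → ℝ) (v : Fin n) :
    (U * diagonal μ * Uᵀ) v v = ∑ j, μ j * U v j ^ 2 := by
  rw [mul_apply]
  refine Finset.sum_congr rfl fun j _ => ?_
  rw [mul_diagonal, transpose_apply]; ring

lemma aux_rows_s7 {n : ℕ} (U : Matrix (Fin n) (Fin n) ℝ) (h : U * Uᵀ = 1) (v : Fin n) :
    ∑ j, U v j ^ 2 = 1 := by
  have := congrFun (congrFun h v) v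
  rw [mul_apply, one_apply_eq] at this
  rw [← this]
  exact Finset.sum_congr rfl fun j _ => by rw [transpose_apply]; ring

lemma aux_cols {n : ℕ} (U : Matrix (Fin n) (Fin n) ℝ) (h : Uᵀ * U = 1) (j : Fin n) :
    ∑ v, U v j ^ 2 = 1 := by
  simpa using aux_rows_s7 Uᵀ (by simpa using h) j

lemma aux_weights {n : ℕ} (U V : Matrix (Fin n) (Fin n) ℝ) (μ : Fin n → ℝ)
    (hU1 : Uᵀ * U = 1) (hU2 : U * Uᵀ = 1) (hV1 : Vᵀ * V = 1) (hV2 : V * Vᵀ = 1)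
    (s : Finset (Fin n)) :
    ∃ p : Fin n → ℝ, (∀ j, 0 ≤ p j) ∧ (∀ j, p j ≤ 1) ∧ ∑ j, p j = s.card ∧
      ∑ i ∈ s, (Vᵀ * (U * diagonal μ * Uᵀ) * V) i i = ∑ j, p j * μ j := by
  have hW1 : (Vᵀ * U) * (Vᵀ * U)ᵀ = 1 := by
    rw [transpose_mul, transpose_transpose, Matrix.mul_assoc, ← Matrix.mul_assoc U, hU2,
      Matrix.one_mul, hV1]
  have hW2 : (Vᵀ * U)ᵀ * (Vᵀ * U) = 1 := by
    rw [transpose_mul, transpose_transpose, Matrix.mul_assoc, ← Matrix.mul_assoc V, hV2,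
      Matrix.one_mul, hU1]
  have hW3 : Vᵀ * (U * diagonal μ * Uᵀ) * V = (Vᵀ * U) * diagonal μ * (Vᵀ * U)ᵀ := by
    rw [transpose_mul, transpose_transpose]; simp only [Matrix.mul_assoc]
  rw [hW3]
  generalize Vᵀ * U = W at *
  refine ⟨fun j => ∑ i ∈ s, W i j ^ 2, fun j => Finset.sum_nonneg fun i _ => sq_nonneg _, ?_, ?_, ?_⟩
  · intro j
    rw [← aux_cols W hW2 j]
    exact Finset.sum_le_sum_of_subset_of_nonneg (Finset.subset_univ s) fun i _ _ => sq_nonneg _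
  · rw [Finset.sum_comm]
    simp [aux_rows_s7 W hW1]
  · simp only [aux_conj_diag, Finset.sum_mul]
    rw [Finset.sum_comm]
    exact Finset.sum_congr rfl fun j _ => Finset.sum_congr rfl fun i _ => by ring

lemma aux_eig {n : ℕ} {X U : Matrix (Fin n) (Fin n) ℝ} {μ : Fin n → ℝ}
    (hU1 : Uᵀ * U = 1) (hX : X = U * diagonal μ * Uᵀ) (v j : Fin n) :
    ∑ w, X v w * U w j = μ j * U v j := by
  have : X * U = U * diagonal μ := by
    rw [hX, Matrix.mul_assoc, hU1, Matrix.mul_one]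
  have := congrFun (congrFun this v) j
  rw [mul_apply, mul_diagonal] at this
  rw [this]; ring

/-- signless Laplacian -/
lemma aux_Q {n : ℕ} (G : SimpleGraph (Fin n)) [DecidableRel G.Adj] (hd : ∀ v, 1 ≤ G.degree v)
    (U : Matrix (Fin n) (Fin n) ℝ) (μ : Fin n → ℝ) (hU1 : Uᵀ * U = 1) (hU2 : U * Uᵀ = 1)
    (hX : Matrix.diagonal (fun i => (G.degree i : ℝ)) + G.adjMatrix ℝ = U * diagonal μ * Uᵀ) :
    ∃ c : Fin n → ℝ, (∀ j, 0 ≤ c j) ∧ (∀ j, μ j ≤ 2 + c j) ∧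
      ∑ j, c j = ∑ v, ((G.degree v : ℝ) - 1) := by
  have hdeg : ∀ v, ∑ w, G.adjMatrix ℝ v w = G.degree v := by
    intro v; simp [SimpleGraph.adjMatrix_apply, ← SimpleGraph.card_neighborFinset_eq_degree, SimpleGraph.neighborFinset_eq_filter]
  have ha0 : ∀ v w, 0 ≤ G.adjMatrix ℝ v w := by
    intro v w; rw [SimpleGraph.adjMatrix_apply]; split_ifs <;> norm_num
  have ha2 : ∀ v w, G.adjMatrix ℝ v w * G.adjMatrix ℝ v w = G.adjMatrix ℝ v w := by
    intro v w; rw [SimpleGraph.adjMatrix_apply]; split_ifs <;> norm_num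
  have hasymm : ∀ v w, G.adjMatrix ℝ v w = G.adjMatrix ℝ w v := by
    intro v w; simp only [SimpleGraph.adjMatrix_apply, G.adj_comm]
  have hdiag : ∀ v, G.adjMatrix ℝ v v = 0 := by intro v; simp
  have hQ : ∀ v j, ∑ w, G.adjMatrix ℝ v w * (U v j + U w j) = μ j * U v j := by
    intro v j
    rw [← aux_eig hU1 hX]
    simp only [Matrix.add_apply, diagonal_apply, add_mul, mul_add, Finset.sum_add_distrib, ite_mul, zero_mul]
    rw [← Finset.sum_mul, hdeg]
    simp
  generalize hA : G.adjMatrix ℝ = a at *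
  have hq : ∀ j, ∑ v, ∑ w, a v w * (U v j + U w j) ^ 2 = 2 * μ j := by
    intro j
    have h1 : ∑ v, ∑ w, a v w * (U v j + U w j) * U v j = μ j := by
      simp only [← Finset.sum_mul, hQ]
      calc _ = ∑ v, μ j * U v j ^ 2 := Finset.sum_congr rfl fun _ _ => by ring
        _ = _ := by rw [← Finset.mul_sum, aux_cols U hU1, mul_one]
    have h2 : ∑ v, ∑ w, a v w * (U v j + U w j) * U w j = μ j := by
      rw [← h1, Finset.sum_comm]
      exact Finset.sum_congr rfl fun v _ => Finset.sum_congr rfl fun w _ => by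
        rw [hasymm w v]; ring
    calc _ = ∑ v, ∑ w, a v w * (U v j + U w j) * U v j +
        ∑ v, ∑ w, a v w * (U v j + U w j) * U w j := by
          simp only [← Finset.sum_add_distrib]
          exact Finset.sum_congr rfl fun v _ => Finset.sum_congr rfl fun w _ => by ring
      _ = _ := by rw [h1, h2]; ring
  have hμ : ∀ j, 0 ≤ μ j := by
    intro j
    have : 0 ≤ ∑ v, ∑ w, a v w * (U v j + U w j) ^ 2 :=
      Finset.sum_nonneg fun v _ => Finset.sum_nonneg fun w _ => mul_nonneg (ha0 v w) (sq_nonneg _)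
    rw [hq] at this; linarith
  have hd' : ∀ v, (1:ℝ) ≤ G.degree v := fun v => by exact_mod_cast hd v
  refine ⟨fun j => μ j * ∑ v, (1 - 1 / (G.degree v : ℝ)) * U v j ^ 2, ?_, ?_, ?_⟩
  · intro j
    refine mul_nonneg (hμ j) (Finset.sum_nonneg fun v _ => mul_nonneg ?_ (sq_nonneg _))
    have := hd' v
    rw [sub_nonneg, div_le_one (by linarith)]; exact this
  · intro j
    have h1 : μ j * (μ j * ∑ v, 1 / (G.degree v : ℝ) * U v j ^ 2) ≤ μ j * 2 := by
      rw [mul_comm (μ j) 2, ← hq j, Finset.mul_sum, Finset.mul_sum]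
      refine Finset.sum_le_sum fun v _ => ?_
      have hcs := Finset.sum_mul_sq_le_sq_mul_sq Finset.univ (fun w => a v w)
        (fun w => a v w * (U v j + U w j))
      have e1 : ∀ w, a v w * (a v w * (U v j + U w j)) = a v w * (U v j + U w j) := fun w => by
        rw [← mul_assoc, ha2]
      have e2 : ∀ w, a v w ^ 2 = a v w := fun w => by rw [sq, ha2]
      have e3 : ∀ w, (a v w * (U v j + U w j)) ^ 2 = a v w * (U v j + U w j) ^ 2 := fun w => by
        rw [mul_pow, e2]
      simp only [e1, e2, e3, hQ, hdeg] at hcs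
      have := hd' v
      have e4 : μ j * (μ j * (1 / (G.degree v : ℝ) * U v j ^ 2)) = (μ j * U v j) ^ 2 / G.degree v := by
        ring
      rw [e4, div_le_iff₀ (by linarith)]
      linarith
    simp only [sub_mul, Finset.sum_sub_distrib, one_mul, aux_cols U hU1, mul_sub, mul_one]
    simp only [one_div] at h1 ⊢
    rcases (hμ j).eq_or_lt with h0 | h0
    · rw [← h0]; norm_num
    · have := le_of_mul_le_mul_left h1 h0
      linarith
  · simp only [Finset.mul_sum]
    rw [Finset.sum_comm]
    refine Finset.sum_congr rfl fun v _ => ?_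
    have h1 := aux_conj_diag U μ v
    rw [← hX] at h1
    simp only [Matrix.add_apply, diagonal_apply_eq, hdiag, add_zero] at h1
    have := hd' v
    calc _ = (1 - 1 / (G.degree v : ℝ)) * ∑ j, μ j * U v j ^ 2 := by
          rw [Finset.mul_sum]; exact Finset.sum_congr rfl fun _ _ => by ring
      _ = _ := by
          rw [← h1]; field_simp

lemma aux_sign {n : ℕ} (σ : Fin n → ℝ) (hσ : ∀ v, σ v * σ v = 1)
    (A U : Matrix (Fin n) (Fin n) ℝ) (μ : Fin n → ℝ) (hU1 : Uᵀ * U = 1) (hU2 : U * Uᵀ = 1)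
    (hX : A = U * diagonal μ * Uᵀ) (hA : ∀ v w, σ v * A v w + A v w * σ w = 0) (f : ℝ → ℝ) :
    ∑ j, f (μ j) = ∑ j, f (- μ j) := by
  have hS : diagonal σ * diagonal σ = 1 := by
    rw [diagonal_mul_diagonal, ← diagonal_one]; congr 1; funext v; exact hσ v
  have hAS : diagonal σ * A + A * diagonal σ = 0 := by
    ext v w; simp only [Matrix.add_apply, diagonal_mul, mul_diagonal, Matrix.zero_apply, hA]
  have hAU : A * U = U * diagonal μ := by
    rw [hX, Matrix.mul_assoc, hU1, Matrix.mul_one]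
  have hUA : Uᵀ * A = diagonal μ * Uᵀ := by
    rw [hX, ← Matrix.mul_assoc, ← Matrix.mul_assoc, hU1, Matrix.one_mul]
  set C := Uᵀ * diagonal σ * U with hC
  have hCt : Cᵀ = C := by
    rw [hC, transpose_mul, transpose_mul, diagonal_transpose, transpose_transpose, Matrix.mul_assoc]
  have hCC : C * C = 1 := by
    calc C * C = Uᵀ * diagonal σ * (U * Uᵀ) * diagonal σ * U := by
          rw [hC]; simp only [Matrix.mul_assoc]
      _ = Uᵀ * (diagonal σ * diagonal σ) * U := by
          rw [hU2, Matrix.mul_one]; simp only [Matrix.mul_assoc]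
      _ = 1 := by rw [hS, Matrix.mul_one, hU1]
  have hCm : C * diagonal μ + diagonal μ * C = 0 := by
    calc C * diagonal μ + diagonal μ * C
        = Uᵀ * diagonal σ * (U * diagonal μ) + (diagonal μ * Uᵀ) * diagonal σ * U := by
          rw [hC]; simp only [Matrix.mul_assoc]
      _ = Uᵀ * (diagonal σ * A + A * diagonal σ) * U := by
          rw [← hAU, ← hUA]; simp only [Matrix.mul_assoc, Matrix.mul_add, Matrix.add_mul]
      _ = 0 := by rw [hAS]; simp
  have hzero : ∀ i j, C i j ≠ 0 → μ j = - μ i := by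
    intro i j h
    have := congrFun (congrFun hCm i) j
    simp only [Matrix.add_apply, diagonal_mul, mul_diagonal, Matrix.zero_apply] at this
    have h2 : C i j * (μ j + μ i) = 0 := by linarith
    rcases mul_eq_zero.1 h2 with h3 | h3
    · exact absurd h3 h
    · linarith
  have hr := aux_rows_s7 C (by rw [hCt, hCC])
  have hc := aux_cols C (by rw [hCt, hCC])
  calc ∑ j, f (μ j) = ∑ j, ∑ i, f (μ j) * C i j ^ 2 := by
        simp only [← Finset.mul_sum, hc, mul_one]
    _ = ∑ j, ∑ i, f (- μ i) * C i j ^ 2 := by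
        refine Finset.sum_congr rfl fun j _ => Finset.sum_congr rfl fun i _ => ?_
        by_cases h : C i j = 0
        · simp [h]
        · rw [hzero i j h]
    _ = _ := by
        rw [Finset.sum_comm]
        simp only [← Finset.mul_sum, hr, mul_one]

lemma aux_cs_s7 {n : ℕ} (q m : Fin n → ℝ) (a e : ℝ) (h0 : ∀ j, 0 ≤ q j) (h1 : ∀ j, q j ≤ 1)
    (ha : ∑ j, q j ≤ a) (he : ∑ j, m j ^ 2 = e) : ∑ j, q j * m j ≤ √(a * e) := by
  apply Real.le_sqrt_of_sq_le
  refine (Finset.sum_mul_sq_le_sq_mul_sq _ _ _).trans ?_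
  rw [he]
  refine mul_le_mul_of_nonneg_right (le_trans (Finset.sum_le_sum fun j _ => ?_) ha)
    (he ▸ Finset.sum_nonneg fun j _ => sq_nonneg _)
  nlinarith [h0 j, h1 j]

lemma aux_pos_s7 {n : ℕ} (A U : Matrix (Fin n) (Fin n) ℝ) (μ : Fin n → ℝ) (hU1 : Uᵀ * U = 1)
    (hX : A = U * diagonal μ * Uᵀ) (C : Finset (Fin n))
    (hC : ∀ v w, A v w ≠ 0 → v ∈ C ∨ w ∈ C) :
    (Finset.univ.filter fun j => 0 < μ j).card ≤ C.card := by
  by_contra hlt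
  push Not at hlt
  set J := Finset.univ.filter fun j => 0 < μ j with hJ
  let M : Matrix C J ℝ := fun v j => U v j
  have hker : LinearMap.ker M.mulVecLin ≠ ⊥ := by
    apply LinearMap.ker_ne_bot_of_finrank_lt
    simpa using hlt
  obtain ⟨y, hy, hy0⟩ := (Submodule.ne_bot_iff _).1 hker
  let z : Fin n → ℝ := fun j => if h : j ∈ J then y ⟨j, h⟩ else 0
  have hz : ∀ v ∈ C, (U *ᵥ z) v = 0 := by
    intro v hv
    have h1 : (M *ᵥ y) ⟨v, hv⟩ = 0 := by
      have : M *ᵥ y = 0 := by simpa using hy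
      rw [this]; rfl
    rw [← h1]
    simp only [mulVec, dotProduct]
    rw [← Finset.sum_subset (Finset.subset_univ J), ← Finset.sum_coe_sort J]
    · exact Finset.sum_congr rfl fun j _ => by simp [z, M]
    · intro j _ hj; simp [z, hj]
  have h1 : (U *ᵥ z) ⬝ᵥ (A *ᵥ (U *ᵥ z)) = 0 := by
    simp only [dotProduct, mulVec, Finset.mul_sum] 
    refine Finset.sum_eq_zero fun v _ => Finset.sum_eq_zero fun w _ => ?_
    by_cases h : A v w = 0
    · simp [h]
    · rcases hC v w h with h | h
      · have := hz v h
        simp only [mulVec, dotProduct] at this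
        rw [this]; simp
      · have := hz w h
        simp only [mulVec, dotProduct, Finset.mul_sum] at this
        simp [← Finset.mul_sum, this]
  have h2 : (U *ᵥ z) ⬝ᵥ (A *ᵥ (U *ᵥ z)) = ∑ j, μ j * z j ^ 2 := by
    have hAU : A * U = U * diagonal μ := by
      rw [hX, Matrix.mul_assoc, hU1, Matrix.mul_one]
    rw [mulVec_mulVec, hAU, ← vecMul_transpose, ← dotProduct_mulVec, mulVec_mulVec,
      ← Matrix.mul_assoc, hU1, Matrix.one_mul]
    simp only [dotProduct, mulVec_diagonal]
    exact Finset.sum_congr rfl fun _ _ => by ring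
  rw [h1] at h2
  have h3 : ∀ j ∈ Finset.univ, 0 ≤ μ j * z j ^ 2 := by
    intro j _
    by_cases h : j ∈ J
    · have : 0 < μ j := by simpa [hJ] using h
      positivity
    · simp [z, h]
  have h4 := (Finset.sum_eq_zero_iff_of_nonneg h3).1 h2.symm
  apply hy0
  funext j
  have h5 := h4 j (Finset.mem_univ _)
  have h6 : 0 < μ j := by exact (Finset.mem_filter.1 j.2).2
  have h7 : z j = 0 := by
    rcases mul_eq_zero.1 h5 with h | h
    · linarith
    · exact pow_eq_zero_iff (two_ne_zero) |>.1 h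
  simpa [z] using h7

lemma aux_parent {n : ℕ} {T : SimpleGraph (Fin n)} (hT : T.IsTree) (r u v w : Fin n)
    (hv : T.Adj u v) (hw : T.Adj u w) (hdv : T.dist r u = T.dist r v + 1)
    (hdw : T.dist r u = T.dist r w + 1) : v = w := by
  obtain ⟨p, hp⟩ := hT.connected.exists_walk_length_eq_dist r v
  obtain ⟨q, hq⟩ := hT.connected.exists_walk_length_eq_dist r w
  have hp' : (p.concat hv.symm).IsPath :=
    SimpleGraph.Walk.isPath_of_length_eq_dist _ (by simp [hp, hdv])
  have hq' : (q.concat hw.symm).IsPath :=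
    SimpleGraph.Walk.isPath_of_length_eq_dist _ (by simp [hq, hdw])
  have := (hT.existsUnique_path r u).unique hp' hq'
  have h2 := congrArg SimpleGraph.Walk.penultimate this
  simpa using h2

lemma aux_konig {n : ℕ} {T : SimpleGraph (Fin n)} (hT : T.IsTree) (r : Fin n) (m : ℕ) :
    ∀ S : Finset (Fin n), S.card ≤ m → ∃ (C : Finset (Fin n)) (M : T.Subgraph), M.IsMatching ∧
      M.support ⊆ (S : Set (Fin n)) ∧ C.card ≤ M.edgeSet.ncard ∧
      ∀ u ∈ S, ∀ v ∈ S, T.Adj u v → u ∈ C ∨ v ∈ C := by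
  induction m with
  | zero =>
    intro S hS
    have : S = ∅ := by simpa using hS
    subst this
    exact ⟨∅, ⊥, by simp [SimpleGraph.Subgraph.IsMatching], by simp [SimpleGraph.Subgraph.support, SetRel.dom], by simp, by simp⟩
  | succ m ih =>
    intro S hS
    rcases S.eq_empty_or_nonempty with rfl | hne
    · exact ih ∅ (by simp)
    obtain ⟨u, hu, hmax⟩ := S.exists_max_image (fun v => T.dist r v) hne
    have hnb : ∀ v ∈ S, T.Adj u v → T.dist r u = T.dist r v + 1 := by
      intro v hv h
      have := hmax v hv
      rcases hT.dist_eq_dist_add_one_of_adj r h with h | h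
      · exact h
      · omega
    by_cases hex : ∃ v ∈ S, T.Adj u v
    · obtain ⟨v, hv, huv⟩ := hex
      have huniq : ∀ w ∈ S, T.Adj u w → w = v := fun w hw h =>
        aux_parent hT r u w v h huv (hnb w hw h) (hnb v hv huv)
      obtain ⟨C, M, hM, hsupp, hcard, hcov⟩ := ih ((S.erase u).erase v) (by
        have h1 := Finset.card_erase_of_mem hu
        have h2 := Finset.card_erase_le (s := S.erase u) (a := v)
        omega)
      have hdisj : Disjoint M.support (T.subgraphOfAdj huv).support := by
        rw [SimpleGraph.support_subgraphOfAdj, Set.disjoint_left]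
        intro x hx hx'
        have := hsupp hx
        simp at this hx'
        tauto
      refine ⟨insert v C, M ⊔ T.subgraphOfAdj huv,
        hM.sup (SimpleGraph.Subgraph.IsMatching.subgraphOfAdj huv) hdisj, ?_, ?_, ?_⟩
      · intro x hx
        obtain ⟨y, hy⟩ := (SimpleGraph.Subgraph.mem_support _).1 hx
        rw [SimpleGraph.Subgraph.sup_adj] at hy
        rcases hy with hy | hy
        · have := hsupp ((SimpleGraph.Subgraph.mem_support _).2 ⟨y, hy⟩)
          simp at this; simp [this]
        · simp at hy
          rcases hy with ⟨rfl, _⟩ | ⟨_, rfl⟩ <;> simp [hu, hv]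
      · have hnot : s(u, v) ∉ M.edgeSet := by
          intro h
          have h' : M.Adj u v := h
          have := hsupp ((SimpleGraph.Subgraph.mem_support _).2 ⟨v, h'⟩)
          simp at this
        rw [SimpleGraph.Subgraph.edgeSet_sup, SimpleGraph.edgeSet_subgraphOfAdj,
          Set.union_singleton, Set.ncard_insert_of_notMem hnot (Set.toFinite _)]
        exact (Finset.card_insert_le _ _).trans (by omega)
      · intro x hx y hy hxy
        by_cases hxv : x = v
        · simp [hxv]
        by_cases hyv : y = v
        · simp [hyv]
        have hxu : x ≠ u := by
          rintro rfl; exact hyv (huniq y hy hxy)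
        have hyu : y ≠ u := by
          rintro rfl; exact hxv (huniq x hx hxy.symm)
        rcases hcov x (by simp [*]) y (by simp [*]) hxy with h | h <;> simp [h]
    · push Not at hex
      obtain ⟨C, M, hM, hsupp, hcard, hcov⟩ := ih (S.erase u) (by
        have h1 := Finset.card_erase_of_mem hu
        omega)
      refine ⟨C, M, hM, hsupp.trans (by simp), hcard, ?_⟩
      intro x hx y hy hxy
      refine hcov x ?_ y ?_ hxy
      · refine Finset.mem_erase.2 ⟨?_, hx⟩
        rintro rfl; exact hex y hy hxy
      · refine Finset.mem_erase.2 ⟨?_, hy⟩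
        rintro rfl; exact hex x hx hxy.symm

lemma aux_cover {n : ℕ} {T : SimpleGraph (Fin n)} (hT : T.IsTree) :
    ∃ C : Finset (Fin n), C.card ≤ matchingNumber T ∧ ∀ u v, T.Adj u v → u ∈ C ∨ v ∈ C := by
  obtain ⟨r⟩ := hT.connected.nonempty
  obtain ⟨C, M, hM, -, hcard, hcov⟩ := aux_konig hT r _ Finset.univ le_rfl
  refine ⟨C, hcard.trans (le_csSup ?_ ⟨M, hM, rfl⟩), fun u v h => hcov u (by simp) v (by simp) h⟩
  refine ⟨Nat.card (Sym2 (Fin n)), ?_⟩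
  rintro _ ⟨M, -, rfl⟩
  exact Set.ncard_le_card _


lemma aux_A {n : ℕ} (T : SimpleGraph (Fin n)) [DecidableRel T.Adj] (hT : T.IsTree)
    (U : Matrix (Fin n) (Fin n) ℝ) (μ : Fin n → ℝ) (hU1 : Uᵀ * U = 1) (hU2 : U * Uᵀ = 1)
    (hX : T.adjMatrix ℝ = U * diagonal μ * Uᵀ) (p : Fin n → ℝ) (hp0 : ∀ j, 0 ≤ p j)
    (hp1 : ∀ j, p j ≤ 1) (k : ℕ) (hkn : k ≤ n) (hp : ∑ j, p j = k) :
    ∑ j, p j * μ j ≤ √((k : ℝ) * ((n : ℝ) - 1)) ∧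
    ∑ j, p j * μ j ≤ √((matchingNumber T : ℝ) * ((n : ℝ) - 1)) ∧
    ∑ j, p j * μ j ≤ √(((n - k : ℕ) : ℝ) * ((n : ℝ) - 1)) := by
  have hedge : (T.edgeFinset.card : ℝ) = n - 1 := by
    have := hT.card_edgeFinset
    rw [Fintype.card_fin] at this
    have h2 : (T.edgeFinset.card : ℝ) + 1 = n := by exact_mod_cast this
    linarith
  have hdegsum : ∑ v, (T.degree v : ℝ) = 2 * ((n : ℝ) - 1) := by
    rw [← hedge]; exact_mod_cast T.sum_degrees_eq_twice_card_edges
  -- sum of squares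
  have hsq : ∑ j, μ j ^ 2 = 2 * ((n : ℝ) - 1) := by
    have h1 : T.adjMatrix ℝ * T.adjMatrix ℝ = U * diagonal (fun j => μ j ^ 2) * Uᵀ := by
      calc _ = U * diagonal μ * (Uᵀ * U) * diagonal μ * Uᵀ := by
            rw [hX]; simp only [Matrix.mul_assoc]
        _ = _ := by
            rw [hU1, Matrix.mul_one, Matrix.mul_assoc U, diagonal_mul_diagonal]
            simp only [sq]
    rw [← hdegsum]
    have h2 : ∀ v, (T.degree v : ℝ) = ∑ j, μ j ^ 2 * U v j ^ 2 := by
      intro v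
      rw [← aux_conj_diag U (fun j => μ j ^ 2) v, ← h1, SimpleGraph.adjMatrix_mul_self_apply_self]
    simp only [h2]
    rw [Finset.sum_comm]
    simp only [← Finset.mul_sum, aux_cols U hU1, mul_one]
  have htr : ∑ j, μ j = 0 := by
    have h2 : ∀ v, (0 : ℝ) = ∑ j, μ j * U v j ^ 2 := by
      intro v
      rw [← aux_conj_diag U μ v, ← hX]; simp
    have h3 : ∑ v : Fin n, (0 : ℝ) = ∑ v, ∑ j, μ j * U v j ^ 2 :=
      Finset.sum_congr rfl fun v _ => h2 v
    rw [Finset.sum_comm] at h3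
    simpa only [← Finset.mul_sum, aux_cols U hU1, mul_one, Finset.sum_const_zero, eq_comm] using h3
  have hsymm : ∑ j, (max (μ j) 0) ^ 2 = ∑ j, (max (- μ j) 0) ^ 2 := by
    have c := hT.coloringTwo
    refine aux_sign (fun v => if c v = 0 then 1 else -1) ?_ _ U μ hU1 hU2 hX ?_
      (fun x => (max x 0) ^ 2)
    · intro v; split_ifs <;> norm_num
    · intro v w
      rw [SimpleGraph.adjMatrix_apply]
      by_cases h : T.Adj v w
      · have hne := c.valid h
        have : c v = 0 ∧ c w ≠ 0 ∨ c v ≠ 0 ∧ c w = 0 := by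
          generalize c v = x at *
          generalize c w = y at *
          revert x y; decide
        rcases this with ⟨h1, h2⟩ | ⟨h1, h2⟩ <;> simp [h, h1, h2]
      · simp [h]
  have hadd : ∑ j, (max (μ j) 0) ^ 2 + ∑ j, (max (- μ j) 0) ^ 2 = 2 * ((n : ℝ) - 1) := by
    rw [← hsq, ← Finset.sum_add_distrib]
    refine Finset.sum_congr rfl fun j _ => ?_
    rcases le_total 0 (μ j) with h | h
    · rw [max_eq_left h, max_eq_right (by linarith)]; ring
    · rw [max_eq_right h, max_eq_left (by linarith)]; ring
  have hpos : ∑ j, (max (μ j) 0) ^ 2 = (n : ℝ) - 1 := by linarith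
  have hneg : ∑ j, (max (- μ j) 0) ^ 2 = (n : ℝ) - 1 := by linarith
  refine ⟨?_, ?_, ?_⟩
  · refine le_trans (Finset.sum_le_sum fun j _ => mul_le_mul_of_nonneg_left (le_max_left _ 0) (hp0 j)) ?_
    exact aux_cs_s7 p _ _ _ hp0 hp1 hp.le hpos
  · obtain ⟨C, hC, hcov⟩ := aux_cover hT
    have hcard : (Finset.univ.filter fun j => 0 < μ j).card ≤ matchingNumber T := by
      refine le_trans (aux_pos_s7 _ U μ hU1 hX C ?_) hC
      intro v w h
      apply hcov
      by_contra hn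
      exact h (by simp [SimpleGraph.adjMatrix_apply, hn])
    refine le_trans (Finset.sum_le_sum (g := fun j => (if 0 < μ j then p j else 0) * max (μ j) 0)
      fun j _ => ?_) (aux_cs_s7 _ _ (matchingNumber T : ℝ) _ ?_ ?_ ?_ hpos)
    · split_ifs with h
      · rw [max_eq_left h.le]
      · rw [zero_mul]; exact mul_nonpos_of_nonneg_of_nonpos (hp0 j) (not_lt.1 h)
    · intro j; split_ifs; exacts [hp0 j, le_rfl]
    · intro j; split_ifs; exacts [hp1 j, zero_le_one]
    · refine le_trans ?_ (Nat.cast_le.2 hcard)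
      rw [← Finset.sum_filter, Finset.cast_card]
      exact Finset.sum_le_sum fun j _ => hp1 j
  · have h1 : ∑ j, p j * μ j = ∑ j, (1 - p j) * (- μ j) := by
      have : ∑ j, (1 - p j) * (- μ j) = ∑ j, p j * μ j - ∑ j, μ j := by
        rw [← Finset.sum_sub_distrib]; exact Finset.sum_congr rfl fun _ _ => by ring
      rw [this, htr, sub_zero]
    rw [h1]
    refine le_trans (Finset.sum_le_sum fun j _ => mul_le_mul_of_nonneg_left (le_max_left _ 0)
      (sub_nonneg.2 (hp1 j))) ?_
    refine aux_cs_s7 (fun j => 1 - p j) _ _ _ (fun j => sub_nonneg.2 (hp1 j))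
      (fun j => by linarith [hp0 j]) ?_ hneg
    rw [Finset.sum_sub_distrib, hp, Nat.cast_sub hkn]; simp

lemma aux_main {n : ℕ} (T : SimpleGraph (Fin n)) [DecidableRel T.Adj] (hT : T.IsTree)
    (α : ℝ) (hα0 : 0 ≤ α) (hα1 : α < 1 / 2) (k : ℕ) (hk1 : 1 ≤ k) (hkn : k ≤ n) (B : ℝ)
    (hB : B = √((k : ℝ) * ((n : ℝ) - 1)) ∨ B = √((matchingNumber T : ℝ) * ((n : ℝ) - 1)) ∨
      B = √(((n - k : ℕ) : ℝ) * ((n : ℝ) - 1))) :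
    Sk (Aalpha α T) k ≤ α * ((n : ℝ) + 2 * k - 2) + (1 - 2 * α) * B := by
  set Q : Matrix (Fin n) (Fin n) ℝ :=
    Matrix.diagonal (fun i => (T.degree i : ℝ)) + T.adjMatrix ℝ with hQdef
  have hA : (T.adjMatrix ℝ).IsHermitian := by
    rw [IsHermitian, conjTranspose_eq_transpose_of_trivial, SimpleGraph.transpose_adjMatrix]
  have hQ : Q.IsHermitian := by
    refine IsHermitian.add ?_ hA
    rw [IsHermitian, conjTranspose_eq_transpose_of_trivial, diagonal_transpose]
  have hM : Aalpha α T = α • Q + (1 - 2 * α) • T.adjMatrix ℝ := by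
    rw [Aalpha, hQdef, smul_add, add_assoc, ← add_smul]
    congr 2; ring
  have hMh : (Aalpha α T).IsHermitian := by
    rw [IsHermitian, conjTranspose_eq_transpose_of_trivial] at *
    rw [hM, transpose_add, transpose_smul, transpose_smul, hA, hQ]
  rw [Sk, dif_pos hMh]
  apply csSup_le
  · obtain ⟨s, -, hs⟩ := Finset.exists_subset_card_eq (s := (Finset.univ : Finset (Fin n))) (n := k)
      (by simpa using hkn)
    exact ⟨_, s, hs, rfl⟩
  rintro x ⟨s, hs, rfl⟩
  obtain ⟨V, hV1, hV2, hV⟩ := aux_spec _ hMh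
  have hsum : ∑ i ∈ s, hMh.eigenvalues i =
      α * ∑ i ∈ s, (Vᵀ * Q * V) i i + (1 - 2 * α) * ∑ i ∈ s, (Vᵀ * T.adjMatrix ℝ * V) i i := by
    have h1 : diagonal hMh.eigenvalues = Vᵀ * Aalpha α T * V := by
      calc _ = (Vᵀ * V) * diagonal hMh.eigenvalues * (Vᵀ * V) := by
            rw [hV1, Matrix.one_mul, Matrix.mul_one]
        _ = Vᵀ * (V * diagonal hMh.eigenvalues * Vᵀ) * V := by simp only [Matrix.mul_assoc]
        _ = _ := by rw [← hV]
    have h2 : Vᵀ * Aalpha α T * V =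
        α • (Vᵀ * Q * V) + (1 - 2 * α) • (Vᵀ * T.adjMatrix ℝ * V) := by
      rw [hM]; simp only [Matrix.mul_add, Matrix.add_mul, Matrix.mul_smul, Matrix.smul_mul]
    rw [Finset.mul_sum, Finset.mul_sum, ← Finset.sum_add_distrib]
    refine Finset.sum_congr rfl fun i _ => ?_
    have h3 : hMh.eigenvalues i = diagonal hMh.eigenvalues i i := (diagonal_apply_eq _ _).symm
    rw [h3, h1, h2]; rfl
  rw [hsum]
  refine add_le_add (mul_le_mul_of_nonneg_left ?_ hα0) (mul_le_mul_of_nonneg_left ?_ (by linarith))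
  · by_cases hn : n = 1
    · subst hn
      have h0 : Q = 0 := by
        have hd : ∀ v, T.degree v = 0 := by
          intro v
          have := T.degree_lt_card_verts v
          simpa using this
        ext v w
        have : v = w := Subsingleton.elim _ _
        subst this
        simp [hQdef, hd]
      have : (1 : ℝ) ≤ k := by exact_mod_cast hk1
      rw [h0]; simp; linarith
    · have hn2 : 2 ≤ n := by omega
      haveI : Nontrivial (Fin n) := Fin.nontrivial_iff_two_le.2 hn2
      have hd : ∀ v, 1 ≤ T.degree v := fun v =>
        hT.connected.preconnected.degree_pos_of_nontrivial v
      obtain ⟨U, hU1, hU2, hU⟩ := aux_spec _ hQ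
      obtain ⟨c, hc0, hc1, hc⟩ := aux_Q T hd U _ hU1 hU2 hU
      obtain ⟨p, hp0, hp1, hp, hpe⟩ := aux_weights U V hQ.eigenvalues hU1 hU2 hV1 hV2 s
      rw [← hU] at hpe
      rw [hpe]
      have hedge : (T.edgeFinset.card : ℝ) = n - 1 := by
        have := hT.card_edgeFinset
        rw [Fintype.card_fin] at this
        have h2 : (T.edgeFinset.card : ℝ) + 1 = n := by exact_mod_cast this
        linarith
      have hdegsum : ∑ v, (T.degree v : ℝ) = 2 * ((n : ℝ) - 1) := by
        rw [← hedge]; exact_mod_cast T.sum_degrees_eq_twice_card_edges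
      calc _ ≤ ∑ j, (2 * p j + c j) := by
            refine Finset.sum_le_sum fun j _ => ?_
            nlinarith [hp0 j, hp1 j, hc0 j, hc1 j]
        _ = _ := by
            rw [Finset.sum_add_distrib, ← Finset.mul_sum, hp, hc, Finset.sum_sub_distrib, hdegsum, hs]
            simp; ring
  · obtain ⟨U, hU1, hU2, hU⟩ := aux_spec _ hA
    obtain ⟨p, hp0, hp1, hp, hpe⟩ := aux_weights U V hA.eigenvalues hU1 hU2 hV1 hV2 s
    rw [← hU] at hpe
    rw [hpe]
    obtain ⟨h1, h2, h3⟩ := aux_A T hT U _ hU1 hU2 hU p hp0 hp1 k hkn (by rw [hp, hs])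
    rcases hB with rfl | rfl | rfl
    exacts [h1, h2, h3]

theorem stmt7 {n : ℕ} (T : SimpleGraph (Fin n)) [DecidableRel T.Adj] (hT : T.IsTree)
    (β : ℕ) (hβ : β = matchingNumber T)
    (α : ℝ) (hα0 : 0 ≤ α) (hα1 : α < 1 / 2)
    (k : ℕ) (hk1 : 1 ≤ k) (hkn : k ≤ n) :
    (k ≤ β → Sk (Aalpha α T) k ≤
      α * ((n : ℝ) + 2 * k - 2) + (1 - 2 * α) * Real.sqrt ((k : ℝ) * ((n : ℝ) - 1))) ∧
    (β < k → k ≤ n - β → Sk (Aalpha α T) k ≤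
      α * ((n : ℝ) + 2 * k - 2) + (1 - 2 * α) * Real.sqrt ((β : ℝ) * ((n : ℝ) - 1))) ∧
    (n - β < k → Sk (Aalpha α T) k ≤
      α * ((n : ℝ) + 2 * k - 2) + (1 - 2 * α) * Real.sqrt ((((n - k : ℕ)) : ℝ) * ((n : ℝ) - 1))) := by
  subst hβ
  refine ⟨fun _ => ?_, fun _ _ => ?_, fun _ => ?_⟩
  · exact aux_main T hT α hα0 hα1 k hk1 hkn _ (Or.inl rfl)
  · exact aux_main T hT α hα0 hα1 k hk1 hkn _ (Or.inr (Or.inl rfl))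
  · exact aux_main T hT α hα0 hα1 k hk1 hkn _ (Or.inr (Or.inr rfl))
end

section
/- Let T be a tree on n vertices and let 1/2 ≤ α < 1. Then for every k with 1 ≤ k ≤ n, S_k(A_α(T)) ≤ α(n + 2k − 2). -/
open Matrix Finset Real

lemma aux_star_ineq (d xc s q : ℝ) (hd : 1 ≤ d) (hq : s ^ 2 ≤ d * q) :
    d * xc ^ 2 + 2 * xc * s + q - 2 * xc ^ 2 - 2 * q
      ≤ (d - 1) / (d * (d + 1)) * (d * xc + s) ^ 2 := by
  have h0 : 0 < d := by linarith
  have h1 : 0 < d + 1 := by linarith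
  have hq' : s ^ 2 / d ≤ q := by
    rw [div_le_iff₀ h0]; linarith
  have e : (d - 1) / (d * (d + 1)) * (d * xc + s) ^ 2 -
      (d * xc ^ 2 + 2 * xc * s - 2 * xc ^ 2 - s ^ 2 / d) = 2 / (d + 1) * (xc - s) ^ 2 := by
    field_simp
    ring
  have : 0 ≤ 2 / (d + 1) * (xc - s) ^ 2 := by positivity
  linarith

lemma aux_star {n : ℕ} (a : Fin n → Fin n → ℝ) (c : Fin n → ℝ)
    (ha : ∀ v w, a v w = 0 ∨ a v w = 1) (hs : ∀ v w, a v w = a w v) (h0 : ∀ v, a v v = 0)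
    (hd : ∀ v, 1 ≤ ∑ w, a v w) (hc01 : ∀ v, c v = 0 ∨ c v = 1)
    (hc : ∀ v w, a v w * (c v + c w - 1) = 0) (hc0 : ∀ v, c v = 0 → ∑ w, a v w = 1)
    (s : Finset (Fin n)) (u : Fin n → Fin n → ℝ)
    (hB : ∀ y : Fin n → ℝ, ∑ i ∈ s, (∑ v, y v * u i v) ^ 2 ≤ ∑ v, y v ^ 2) :
    ∑ i ∈ s, (1 / 2 * ∑ v, ∑ w, a v w * (u i v + u i w) ^ 2 - 2 * ∑ v, u i v ^ 2)
      ≤ ∑ v, (∑ w, a v w - 1) := by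
  have key : ∀ x : Fin n → ℝ,
      1 / 2 * ∑ v, ∑ w, a v w * (x v + x w) ^ 2 - 2 * ∑ v, x v ^ 2 =
        ∑ v, c v * ((∑ w, a v w) * x v ^ 2 + 2 * x v * (∑ w, a v w * x w)
          + (∑ w, a v w * x w ^ 2) - 2 * x v ^ 2 - 2 * (∑ w, a v w * x w ^ 2)) := by
    intro x
    have e1 : 1 / 2 * ∑ v, ∑ w, a v w * (x v + x w) ^ 2
        = ∑ v, c v * ∑ w, a v w * (x v + x w) ^ 2 := by
      have t1 : ∑ v, ∑ w, a v w * (x v + x w) ^ 2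
          = ∑ v, ∑ w, c v * (a v w * (x v + x w) ^ 2)
            + ∑ v, ∑ w, c w * (a v w * (x v + x w) ^ 2) := by
        rw [← Finset.sum_add_distrib]
        refine Finset.sum_congr rfl fun v _ => ?_
        rw [← Finset.sum_add_distrib]
        refine Finset.sum_congr rfl fun w _ => ?_
        linear_combination (-(x v + x w) ^ 2) * hc v w
      have t2 : ∑ v, ∑ w, c w * (a v w * (x v + x w) ^ 2)
          = ∑ v, ∑ w, c v * (a v w * (x v + x w) ^ 2) := by
        rw [Finset.sum_comm]
        refine Finset.sum_congr rfl fun v _ => Finset.sum_congr rfl fun w _ => ?_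
        rw [hs w v, add_comm (x w)]
      rw [t1, t2]
      simp only [Finset.mul_sum]
      simp only [← Finset.mul_sum]
      ring
    have e2 : ∑ v, x v ^ 2 = ∑ v, c v * x v ^ 2 + ∑ v, c v * ∑ w, a v w * x w ^ 2 := by
      have t : ∑ v, c v * ∑ w, a v w * x w ^ 2 = ∑ w, (1 - c w) * x w ^ 2 := by
        simp only [Finset.mul_sum]
        rw [Finset.sum_comm]
        refine Finset.sum_congr rfl fun w _ => ?_
        have : ∀ v, c v * (a v w * x w ^ 2) = a w v * ((1 - c w) * x w ^ 2) := by
          intro v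
          rw [hs w v]
          linear_combination x w ^ 2 * hc v w
        simp only [this]
        rw [← Finset.sum_mul]
        rcases hc01 w with h | h
        · rw [hc0 w h]; ring
        · rw [h]; ring
      rw [t, ← Finset.sum_add_distrib]
      exact Finset.sum_congr rfl fun v _ => by ring
    rw [e1, e2, mul_add, Finset.mul_sum, Finset.mul_sum, ← Finset.sum_add_distrib,
      ← Finset.sum_sub_distrib]
    refine Finset.sum_congr rfl fun v _ => ?_
    have : ∑ w, a v w * (x v + x w) ^ 2 = (∑ w, a v w) * x v ^ 2 + 2 * x v * (∑ w, a v w * x w)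
          + (∑ w, a v w * x w ^ 2) := by
      rw [Finset.sum_mul, Finset.mul_sum, ← Finset.sum_add_distrib, ← Finset.sum_add_distrib]
      exact Finset.sum_congr rfl fun w _ => by ring
    rw [this]; ring
  have asq : ∀ v w, a v w ^ 2 = a v w := by
    intro v w
    rcases ha v w with h | h <;> rw [h] <;> norm_num
  simp only [key]
  rw [Finset.sum_comm]
  refine Finset.sum_le_sum fun v _ => ?_
  rw [← Finset.mul_sum]
  rcases hc01 v with h | h
  · rw [h, hc0 v h]; simp
  rw [h, one_mul]
  set d := ∑ w, a v w with hdd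
  have hd1 : 1 ≤ d := hd v
  calc _ ≤ ∑ i ∈ s, (d - 1) / (d * (d + 1)) * (d * u i v + ∑ w, a v w * u i w) ^ 2 := by
        refine Finset.sum_le_sum fun i _ => aux_star_ineq _ _ _ _ hd1 ?_
        have := Finset.sum_mul_sq_le_sq_mul_sq Finset.univ (fun w => a v w)
          (fun w => a v w * u i w)
        have e : ∀ w, a v w * (a v w * u i w) = a v w * u i w := fun w => by
          rw [← mul_assoc, ← sq, asq]
        simp only [e, mul_pow, asq] at this
        exact this
    _ = (d - 1) / (d * (d + 1)) * ∑ i ∈ s, (d * u i v + ∑ w, a v w * u i w) ^ 2 := by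
        rw [Finset.mul_sum]
    _ ≤ (d - 1) / (d * (d + 1)) * (d * (d + 1)) := by
        apply mul_le_mul_of_nonneg_left _ (div_nonneg (by linarith) (by nlinarith))
        have := hB (fun w => (if w = v then d else 0) + a v w)
        have e1 : ∀ w, ((if w = v then d else 0) + a v w) ^ 2
            = (if w = v then d ^ 2 else 0) + a v w := by
          intro w
          split_ifs with hw
          · rw [hw, h0]; ring
          · simp only [zero_add]; exact asq v w
        simp only [e1, add_mul, Finset.sum_add_distrib, ite_mul, zero_mul,
          Finset.sum_ite_eq', Finset.mem_univ, if_true] at this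
        linarith
    _ = d - 1 := by
        have : d * (d + 1) ≠ 0 := by nlinarith
        field_simp

lemma aux_minimal {n : ℕ} (G : SimpleGraph (Fin n)) (hG : ∀ v, ∃ w, G.Adj v w) :
    ∃ H : SimpleGraph (Fin n), H ≤ G ∧ (∀ v, ∃ w, H.Adj v w) ∧
      ∀ v w, H.Adj v w → (∀ z, H.Adj v z → z = w) ∨ (∀ z, H.Adj w z → z = v) := by
  obtain ⟨H, hHG, hH⟩ := (Set.toFinite {H : SimpleGraph (Fin n) | ∀ v, ∃ w, H.Adj v w}).exists_le_minimal
    (show G ∈ _ from hG)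
  refine ⟨H, hHG, hH.1, ?_⟩
  intro v w hvw
  by_contra hcon
  push Not at hcon
  obtain ⟨⟨z1, hz1, hz1'⟩, ⟨z2, hz2, hz2'⟩⟩ := hcon
  have hle : H.deleteEdges {s(v, w)} ≤ H := SimpleGraph.deleteEdges_le _
  have hmem : H.deleteEdges {s(v, w)} ∈ {H : SimpleGraph (Fin n) | ∀ v, ∃ w, H.Adj v w} := by
    intro x
    by_cases hx : x = v
    · subst hx
      refine ⟨z1, ?_⟩
      rw [SimpleGraph.deleteEdges_adj]
      refine ⟨hz1, ?_⟩
      simp only [Set.mem_singleton_iff, Sym2.eq_iff]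
      have := hvw.ne
      grind
    by_cases hx' : x = w
    · subst hx'
      refine ⟨z2, ?_⟩
      rw [SimpleGraph.deleteEdges_adj]
      refine ⟨hz2, ?_⟩
      simp only [Set.mem_singleton_iff, Sym2.eq_iff]
      have := hvw.ne
      grind
    · obtain ⟨y, hy⟩ := hH.1 x
      refine ⟨y, ?_⟩
      rw [SimpleGraph.deleteEdges_adj]
      refine ⟨hy, ?_⟩
      simp only [Set.mem_singleton_iff, Sym2.eq_iff]
      grind
  have := hH.2 hmem hle hvw
  rw [SimpleGraph.deleteEdges_adj] at this
  exact this.2 rfl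

open Classical in
lemma aux_Q_s8 {n : ℕ} (G : SimpleGraph (Fin n)) [DecidableRel G.Adj] (hG : ∀ v, ∃ w, G.Adj v w)
    (s : Finset (Fin n)) (u : Fin n → Fin n → ℝ)
    (hB : ∀ y : Fin n → ℝ, ∑ i ∈ s, (∑ v, y v * u i v) ^ 2 ≤ ∑ v, y v ^ 2) :
    ∑ i ∈ s, (1 / 2 * ∑ v, ∑ w, (if G.Adj v w then (1 : ℝ) else 0) * (u i v + u i w) ^ 2
        - 2 * ∑ v, u i v ^ 2)
      ≤ ∑ v, (∑ w, (if G.Adj v w then (1 : ℝ) else 0) - 1) := by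
  obtain ⟨H, hHG, hH, hmin⟩ := aux_minimal G hG
  have hdeg1 : ∀ v w, H.Adj v w → (∀ z, H.Adj v z → z = w) →
      ∑ z, (if H.Adj v z then (1 : ℝ) else 0) = 1 := by
    intro v w hvw huniq
    rw [Finset.sum_eq_single w]
    · simp [hvw]
    · intro b _ hb
      rw [if_neg]
      exact fun h => hb (huniq b h)
    · simp
  have hstar := aux_star (fun v w => if H.Adj v w then (1 : ℝ) else 0)
    (fun v => if (∃ w z, H.Adj v w ∧ H.Adj v z ∧ w ≠ z) ∨
      (∀ w, H.Adj v w → (∀ z, H.Adj w z → z = v) ∧ v < w) then 1 else 0)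
    (by intro v w; split_ifs <;> simp)
    (by intro v w; simp only [H.adj_comm])
    (by intro v; simp)
    (by
      intro v
      obtain ⟨w, hw⟩ := hH v
      have := Finset.single_le_sum (f := fun z => if H.Adj v z then (1 : ℝ) else 0)
        (fun z _ => by split_ifs <;> norm_num) (Finset.mem_univ w)
      simpa [hw] using this)
    (by intro v; split_ifs <;> simp)
    (by
      intro v w
      by_cases h : H.Adj v w
      swap
      · simp [h]
      have h' := h.symm
      have hne := h.ne
      have hm := hmin v w h
      rw [if_pos h]
      split_ifs with h1 h2 h2
      · exfalso
        rcases h1 with ⟨p, q, hp, hq, hpq⟩ | h1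
        · rcases h2 with ⟨p', q', hp', hq', hpq'⟩ | h2
          · grind
          · have := (h2 v h').1
            grind
        · have h3 := h1 w h
          rcases h2 with ⟨p', q', hp', hq', hpq'⟩ | h2
          · grind
          · have h4 := h2 v h'
            exact lt_asymm h3.2 h4.2
      · norm_num
      · norm_num
      · exfalso
        push Not at h1 h2
        obtain ⟨h11, w1, hw1, h12⟩ := h1
        obtain ⟨h21, v1, hv1, h22⟩ := h2
        have e1 : w1 = w := h11 _ _ hw1 h
        have e2 : v1 = v := h21 _ _ hv1 h'
        subst e1 e2
        have h3 := h12 (fun z hz => h21 _ _ hz h')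
        have h4 := h22 (fun z hz => h11 _ _ hz h)
        exact hne (le_antisymm h4 h3))
    (by
      intro v
      split_ifs with h1
      · simp
      intro _
      push Not at h1
      obtain ⟨w, hw⟩ := hH v
      exact hdeg1 v w hw fun z hz => h1.1 _ _ hz hw)
    s u hB
  have hdiff : ∑ i ∈ s, (1 / 2 * ∑ v, ∑ w, ((if G.Adj v w then (1 : ℝ) else 0) -
        (if H.Adj v w then (1 : ℝ) else 0)) * (u i v + u i w) ^ 2)
      ≤ ∑ v, ∑ w, ((if G.Adj v w then (1 : ℝ) else 0) - (if H.Adj v w then (1 : ℝ) else 0)) := by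
    rw [← Finset.mul_sum, Finset.sum_comm, Finset.mul_sum]
    refine Finset.sum_le_sum fun v _ => ?_
    rw [Finset.sum_comm, Finset.mul_sum]
    refine Finset.sum_le_sum fun w _ => ?_
    rw [← Finset.mul_sum]
    by_cases h : G.Adj v w
    swap
    · have : ¬ H.Adj v w := fun h' => h (hHG h')
      simp [h, this]
    have hne := h.ne
    have hb := hB (fun z => (if z = v then 1 else 0) + (if z = w then 1 else 0))
    have e1 : ∀ z, ((if z = v then (1 : ℝ) else 0) + (if z = w then 1 else 0)) ^ 2
        = (if z = v then 1 else 0) + (if z = w then 1 else 0) := by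
      intro z
      by_cases h1 : z = v
      · have : z ≠ w := h1 ▸ hne
        simp [h1, hne]
      · by_cases h2 : z = w <;> simp [if_neg h1, h2, hne.symm]
    simp only [e1, add_mul, Finset.sum_add_distrib, ite_mul, zero_mul, one_mul,
          Finset.sum_ite_eq', Finset.mem_univ, if_true] at hb
    have hnn : (0 : ℝ) ≤ (if G.Adj v w then (1 : ℝ) else 0) - (if H.Adj v w then (1 : ℝ) else 0) := by
      rw [if_pos h]; split_ifs <;> norm_num
    nlinarith
  have := add_le_add hstar hdiff
  rw [← Finset.sum_add_distrib, ← Finset.sum_add_distrib] at this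
  refine le_of_eq_of_le ?_ (this.trans_eq ?_)
  · refine Finset.sum_congr rfl fun i _ => ?_
    simp only [sub_mul, Finset.sum_sub_distrib]
    ring
  · refine Finset.sum_congr rfl fun i _ => ?_
    simp only [Finset.sum_sub_distrib]
    ring

lemma aux_quad {n : ℕ} (G : SimpleGraph (Fin n)) [DecidableRel G.Adj] (α : ℝ) (x : Fin n → ℝ) :
    x ⬝ᵥ (Aalpha α G *ᵥ x) =
      (1 - α) * (1 / 2 * ∑ v, ∑ w, (if G.Adj v w then (1 : ℝ) else 0) * (x v + x w) ^ 2)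
      + (2 * α - 1) * ∑ v, (G.degree v : ℝ) * x v ^ 2 := by
  have hd : ∀ v, (G.degree v : ℝ) = ∑ w, (if G.Adj v w then (1 : ℝ) else 0) := by
    intro v
    rw [← SimpleGraph.card_neighborFinset_eq_degree, SimpleGraph.neighborFinset_eq_filter]
    simp
  have e1 : ∑ v, ∑ w, (if G.Adj v w then (1 : ℝ) else 0) * (x v + x w) ^ 2
      = 2 * ∑ v, (G.degree v : ℝ) * x v ^ 2
        + 2 * ∑ v, ∑ w, x v * ((if G.Adj v w then (1 : ℝ) else 0) * x w) := by
    have t1 : ∑ v, (G.degree v : ℝ) * x v ^ 2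
        = ∑ v, ∑ w, (if G.Adj v w then (1 : ℝ) else 0) * x v ^ 2 := by
      simp only [hd, Finset.sum_mul]
    have t2 : ∑ v, (G.degree v : ℝ) * x v ^ 2
        = ∑ v, ∑ w, (if G.Adj v w then (1 : ℝ) else 0) * x w ^ 2 := by
      rw [t1, Finset.sum_comm]
      simp only [G.adj_comm]
    rw [two_mul (∑ v, (G.degree v : ℝ) * x v ^ 2)]
    nth_rw 1 [t1]
    rw [t2, Finset.mul_sum]
    simp only [← Finset.sum_add_distrib, Finset.mul_sum]
    refine Finset.sum_congr rfl fun v _ => Finset.sum_congr rfl fun w _ => ?_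
    ring
  have e2 : x ⬝ᵥ (Aalpha α G *ᵥ x) = α * ∑ v, (G.degree v : ℝ) * x v ^ 2
      + (1 - α) * ∑ v, ∑ w, x v * ((if G.Adj v w then (1 : ℝ) else 0) * x w) := by
    rw [Aalpha, Matrix.add_mulVec, dotProduct_add, Matrix.smul_mulVec, Matrix.smul_mulVec,
      dotProduct_smul, dotProduct_smul, smul_eq_mul, smul_eq_mul]
    congr 2
    · simp only [dotProduct, Matrix.mulVec_diagonal]
      exact Finset.sum_congr rfl fun v _ => by ring
    · simp only [dotProduct, Matrix.mulVec, SimpleGraph.adjMatrix_apply, Finset.mul_sum]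
  rw [e2, e1]; ring

theorem stmt8 {n : ℕ} (T : SimpleGraph (Fin n)) [DecidableRel T.Adj] (hT : T.IsTree)
    (α : ℝ) (hα0 : 1 / 2 ≤ α) (hα1 : α < 1)
    (k : ℕ) (hk1 : 1 ≤ k) (hkn : k ≤ n) :
    Sk (Aalpha α T) k ≤ α * ((n : ℝ) + 2 * k - 2) := by
  have hk1' : (1 : ℝ) ≤ k := by exact_mod_cast hk1
  have hn0 : (0 : ℝ) ≤ n := by positivity
  have hb0 : 0 ≤ α * ((n : ℝ) + 2 * k - 2) := mul_nonneg (by linarith) (by linarith)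
  unfold Sk
  split_ifs with hM
  swap
  · exact hb0
  refine Real.sSup_le ?_ hb0
  rintro _ ⟨s, hsk, rfl⟩
  set u : Fin n → Fin n → ℝ := fun i v => hM.eigenvectorBasis i v with hu
  have heig : ∀ i, hM.eigenvalues i = u i ⬝ᵥ (Aalpha α T *ᵥ u i) := by
    intro i
    rw [hM.eigenvalues_eq]
    simp [hu]
  have hN : ∀ i, ∑ v, u i v ^ 2 = 1 := by
    intro i
    have := hM.eigenvectorBasis.orthonormal.1 i
    have h2 := EuclideanSpace.real_norm_sq_eq (hM.eigenvectorBasis i)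
    rw [this] at h2
    simp only [hu]; linarith
  have hB : ∀ y : Fin n → ℝ, ∑ i ∈ s, (∑ v, y v * u i v) ^ 2 ≤ ∑ v, y v ^ 2 := by
    intro y
    have := hM.eigenvectorBasis.orthonormal.sum_inner_products_le (WithLp.toLp 2 y) (s := s)
    rw [EuclideanSpace.real_norm_sq_eq] at this
    simpa [PiLp.inner_apply, hu] using this
  simp only [heig, aux_quad]
  rcases Nat.lt_or_ge n 2 with hn | hn
  · have h1 : n = 1 := by omega
    subst h1
    have : ∀ v w, ¬ T.Adj v w := fun v w h => h.ne (Subsingleton.elim _ _)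
    have hdg : ∀ v, T.degree v = 0 := by
      intro v
      rw [← SimpleGraph.card_neighborFinset_eq_degree, SimpleGraph.neighborFinset_eq_filter]
      simp [this]
    simp only [this, hdg]
    simpa using hb0
  have : Nontrivial (Fin n) := Fin.nontrivial_iff_two_le.mpr hn
  have hG : ∀ v, ∃ w, T.Adj v w := fun v => by
    have := hT.1.preconnected.degree_pos_of_nontrivial v
    exact (T.degree_pos_iff_exists_adj v).1 this
  have hd : ∀ v, (T.degree v : ℝ) = ∑ w, (if T.Adj v w then (1 : ℝ) else 0) := by
    intro v
    rw [← SimpleGraph.card_neighborFinset_eq_degree, SimpleGraph.neighborFinset_eq_filter]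
    simp
  have hQ := aux_Q_s8 T hG s u hB
  have hsum : ∑ v, ((T.degree v : ℝ) - 1) = n - 2 := by
    have h1 := T.sum_degrees_eq_twice_card_edges
    have h2 := hT.card_edgeFinset
    rw [Fintype.card_fin] at h2
    have h3 : (∑ v, (T.degree v : ℝ)) = 2 * (T.edgeFinset.card : ℝ) := by exact_mod_cast h1
    have h4 : (T.edgeFinset.card : ℝ) + 1 = n := by exact_mod_cast h2
    rw [Finset.sum_sub_distrib, h3]
    simp
    linarith
  have hQ' : ∑ i ∈ s, (1 / 2 * ∑ v, ∑ w, (if T.Adj v w then (1 : ℝ) else 0) * (u i v + u i w) ^ 2)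
      ≤ n - 2 + 2 * k := by
    rw [← hsum]
    simp only [hd]
    simp only [hN, Finset.sum_sub_distrib (s := s), Finset.sum_const, hsk, nsmul_eq_mul] at hQ
    have h5 : ∀ X Y : ℝ, X - k * (2 * 1) ≤ Y → X ≤ Y + 2 * k := fun X Y h => by linarith
    apply h5
    exact hQ
  have hD : ∑ i ∈ s, ∑ v, (T.degree v : ℝ) * u i v ^ 2 ≤ (n : ℝ) - 2 + k := by
    have h6 : ∑ i ∈ s, ∑ v, ((T.degree v : ℝ) - 1) * u i v ^ 2 ≤ (n : ℝ) - 2 := by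
      rw [← hsum, Finset.sum_comm]
      refine Finset.sum_le_sum fun v _ => ?_
      rw [← Finset.mul_sum]
      have hb := hB (fun z => if z = v then 1 else 0)
      simp at hb
      have : (1 : ℝ) ≤ T.degree v := by
        exact_mod_cast (T.degree_pos_iff_exists_adj v).2 (hG v)
      nlinarith
    simp only [sub_mul, one_mul, Finset.sum_sub_distrib, hN, Finset.sum_const, hsk,
      nsmul_eq_mul] at h6
    linarith
  rw [Finset.sum_add_distrib, ← Finset.mul_sum s _ (1 - α), ← Finset.mul_sum s _ (2 * α - 1)]
  have h7 := mul_le_mul_of_nonneg_left hQ' (show 0 ≤ 1 - α by linarith)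
  have h8 := mul_le_mul_of_nonneg_left hD (show 0 ≤ 2 * α - 1 by linarith)
  have h9 : 0 ≤ (2 * α - 1) * k := mul_nonneg (by linarith) (by linarith)
  linarith
end

section
/- Let G be a connected graph on n vertices with m edges and let 1/2 ≤ α < 1. Then for every integer k with 2 ≤ k ≤ n, S_k(A_α(G)) ≤ α(2k + 2m − n). -/
open Matrix Finset Real

lemma aux_cover_s9 {n : ℕ} (G : SimpleGraph (Fin n)) (hG : ∀ v, ∃ w, G.Adj v w) :
    ∃ (L : Finset (Fin n)) (f : Fin n → Fin n),
      (∀ l ∈ L, G.Adj l (f l) ∧ f l ∉ L) ∧ (∀ c, c ∉ L → ∃ l ∈ L, f l = c) := by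
  classical
  obtain ⟨H, hH⟩ := Set.Finite.exists_minimal
    (s := {H : SimpleGraph (Fin n) | H ≤ G ∧ ∀ v, ∃ w, H.Adj v w}) (Set.toFinite _)
    ⟨G, le_refl _, hG⟩
  obtain ⟨⟨hHG, hcov⟩, hmin⟩ := hH
  have key : ∀ u v, H.Adj u v → (∀ w, H.Adj u w → w = v) ∨ (∀ w, H.Adj v w → w = u) := by
    intro u v huv
    by_contra hcon
    push Not at hcon
    obtain ⟨⟨a, ha, hav⟩, ⟨b, hb, hbu⟩⟩ := hcon
    have hle : H.deleteEdges {s(u, v)} ≤ H := SimpleGraph.deleteEdges_le _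
    have hmem : H.deleteEdges {s(u, v)} ∈
        {H : SimpleGraph (Fin n) | H ≤ G ∧ ∀ v, ∃ w, H.Adj v w} := by
      refine ⟨hle.trans hHG, fun x => ?_⟩
      by_cases hxu : x = u
      · subst hxu
        refine ⟨a, ?_⟩
        simp only [SimpleGraph.deleteEdges_adj, Set.mem_singleton_iff, Sym2.eq_iff]
        refine ⟨ha, ?_⟩
        rintro (⟨_, h⟩ | ⟨h, h'⟩)
        · exact hav h
        · exact hav (h'.trans h)
      · by_cases hxv : x = v
        · subst hxv
          refine ⟨b, ?_⟩
          simp only [SimpleGraph.deleteEdges_adj, Set.mem_singleton_iff, Sym2.eq_iff]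
          refine ⟨hb, ?_⟩
          rintro (⟨h, _⟩ | ⟨_, h⟩)
          · exact hxu h
          · exact hbu h
        · obtain ⟨w, hw⟩ := hcov x
          refine ⟨w, ?_⟩
          simp only [SimpleGraph.deleteEdges_adj, Set.mem_singleton_iff, Sym2.eq_iff]
          refine ⟨hw, ?_⟩
          rintro (⟨h, _⟩ | ⟨h, _⟩)
          · exact hxu h
          · exact hxv h
    have h2 := hmin hmem hle
    have h3 := h2 huv
    simp [SimpleGraph.deleteEdges_adj] at h3
  choose f hf using hcov
  refine ⟨Finset.univ.filter (fun v => (∀ w, H.Adj v w → w = f v) ∧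
    ((∃ w, w ≠ v ∧ H.Adj (f v) w) ∨ v < f v)), f, ?_, ?_⟩
  · intro l hl
    simp only [Finset.mem_filter, Finset.mem_univ, true_and] at hl ⊢
    refine ⟨hHG (hf l), ?_⟩
    rintro ⟨h1, h2⟩
    have e : l = f (f l) := h1 l (hf l).symm
    obtain ⟨hl1, hl2⟩ := hl
    have hno : ¬ ∃ w, w ≠ l ∧ H.Adj (f l) w := by
      rintro ⟨w, hw, hw2⟩
      exact hw ((h1 w hw2).trans e.symm)
    have hlt := hl2.resolve_left hno
    rw [← e] at h2
    rcases h2 with ⟨w, hw, hw2⟩ | h2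
    · exact hw (hl1 w hw2)
    · exact absurd hlt (not_lt.mpr h2.le)
  · intro c hc
    simp only [Finset.mem_filter, Finset.mem_univ, true_and] at hc ⊢
    have hadj := hf c
    by_cases hu : ∀ w, H.Adj c w → w = f c
    · have h2 : ¬ ((∃ w, w ≠ c ∧ H.Adj (f c) w) ∨ c < f c) := fun h => hc ⟨hu, h⟩
      push Not at h2
      obtain ⟨h3, h4⟩ := h2
      have h5 : ∀ w, H.Adj (f c) w → w = c := by
        intro w hw
        by_contra hne
        exact h3 w hne hw
      have e : f (f c) = c := h5 _ (hf _)
      refine ⟨f c, ⟨?_, Or.inr ?_⟩, e⟩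
      · rw [e]; exact h5
      · rw [e]; exact lt_of_le_of_ne h4 hadj.ne'
    · have h5 := (key c (f c) hadj).resolve_left hu
      have e : f (f c) = c := h5 _ (hf _)
      push Not at hu
      obtain ⟨w, hw, hw2⟩ := hu
      refine ⟨f c, ⟨?_, Or.inl ⟨w, hw2, ?_⟩⟩, e⟩
      · rw [e]; exact h5
      · rw [e]; exact hw

lemma aux_star_s9 {ι : Type*} (S : Finset ι) (hS : S.Nonempty) (p : ℝ) (y q : ι → ℝ)
    (hp0 : 0 ≤ p) (hp1 : p ≤ 1) (h1 : ∀ l ∈ S, 2 * y l ≤ p + q l)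
    (h2 : ∀ l ∈ S, y l ^ 2 ≤ p * q l) (hq : ∀ l ∈ S, 0 ≤ q l)
    (h3 : ∑ l ∈ S, y l ^ 2 ≤ p * (1 - p)) :
    ∑ l ∈ S, (2 - p - q l - 2 * y l) ≥ (1 - 2 * p) + ∑ l ∈ S, (1 - 2 * q l) := by
  have hs : (1 : ℝ) ≤ S.card := by exact_mod_cast hS.card_pos
  suffices h : ∑ l ∈ S, (2 * y l - q l) ≤ S.card - 1 - (S.card - 2) * p by
    have e : ∑ l ∈ S, (2 - p - q l - 2 * y l) - ∑ l ∈ S, (1 - 2 * q l)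
        = S.card * (1 - p) - ∑ l ∈ S, (2 * y l - q l) := by
      rw [← Finset.sum_sub_distrib, ← nsmul_eq_mul, ← Finset.sum_const, ← Finset.sum_sub_distrib]
      refine Finset.sum_congr rfl fun l _ => ?_
      ring
    nlinarith
  rcases lt_or_ge p (1 / 2) with hlt | hge
  · have : ∑ l ∈ S, (2 * y l - q l) ≤ ∑ l ∈ S, p :=
      Finset.sum_le_sum fun l hl => by linarith [h1 l hl]
    rw [Finset.sum_const, nsmul_eq_mul] at this
    nlinarith
  · rcases eq_or_lt_of_le hp1 with he | hlt
    · have hy : ∀ l ∈ S, 2 * y l - q l ≤ 0 := by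
        have hz : ∑ l ∈ S, y l ^ 2 = 0 := le_antisymm (by rw [he] at h3; linarith)
          (Finset.sum_nonneg fun _ _ => sq_nonneg _)
        intro l hl
        have := (Finset.sum_eq_zero_iff_of_nonneg (fun _ _ => sq_nonneg _)).1 hz l hl
        have : y l = 0 := by simpa using this
        rw [this]; linarith [hq l hl]
      have := Finset.sum_nonpos hy
      rw [he]; linarith
    · have hp : 0 < p := by linarith
      have hr : 0 < 1 - p := by linarith
      have hl : ∀ l ∈ S, 2 * y l - q l ≤ (1 / (1 - p) - 1 / p) * y l ^ 2 + (1 - p) := by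
        intro l hl
        have a1 : y l ^ 2 / p ≤ q l := by
          rw [div_le_iff₀ hp]; linarith [h2 l hl]
        have a2 : 2 * y l ≤ y l ^ 2 / (1 - p) + (1 - p) := by
          have : y l ^ 2 / (1 - p) + (1 - p) - 2 * y l = (y l - (1 - p)) ^ 2 / (1 - p) := by
            field_simp; ring
          have := div_nonneg (sq_nonneg (y l - (1 - p))) hr.le
          linarith
        have : (1 / (1 - p) - 1 / p) * y l ^ 2 = y l ^ 2 / (1 - p) - y l ^ 2 / p := by ring
        linarith
      have := Finset.sum_le_sum hl
      rw [Finset.sum_add_distrib, ← Finset.mul_sum, Finset.sum_const, nsmul_eq_mul] at this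
      have hc : 0 ≤ 1 / (1 - p) - 1 / p := by
        rw [sub_nonneg]
        exact one_div_le_one_div_of_le hr (by linarith)
      have h4 := mul_le_mul_of_nonneg_left h3 hc
      have h5 : (1 / (1 - p) - 1 / p) * (p * (1 - p)) = 2 * p - 1 := by
        field_simp; ring
      linarith

lemma aux_main_s9 {n : ℕ} (G : SimpleGraph (Fin n)) [DecidableRel G.Adj]
    (hG : ∀ v, ∃ w, G.Adj v w) (P : Matrix (Fin n) (Fin n) ℝ)
    (hsym : ∀ u v, P u v = P v u) (hP : ∀ u v, P u v = ∑ j, P u j * P v j) :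
    ∑ u, ∑ v, (if G.Adj u v then (2 - P u u - P v v - 2 * P u v) else 0)
      ≥ 2 * ∑ v, (1 - 2 * P v v) := by
  obtain ⟨L, f, hL, hc⟩ := aux_cover_s9 G hG
  have hpsq : ∀ u, P u u = ∑ j, P u j ^ 2 := fun u => by
    rw [hP u u]; exact Finset.sum_congr rfl fun j _ => (sq _).symm
  have hp0 : ∀ u, 0 ≤ P u u := fun u => by
    rw [hpsq]; exact Finset.sum_nonneg fun _ _ => sq_nonneg _
  have hp1 : ∀ u, P u u ≤ 1 := fun u => by
    have h : P u u ^ 2 ≤ P u u := by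
      conv_rhs => rw [hpsq]
      exact Finset.single_le_sum (f := fun j => P u j ^ 2) (fun _ _ => sq_nonneg _)
        (Finset.mem_univ u)
    nlinarith
  have hsub : ∀ u v, 2 * P u v ≤ P u u + P v v := fun u v => by
    rw [hP u v, hP u u, hP v v, Finset.mul_sum, ← Finset.sum_add_distrib]
    exact Finset.sum_le_sum fun j _ => by nlinarith [sq_nonneg (P u j - P v j)]
  have hcs : ∀ u v, P u v ^ 2 ≤ P u u * P v v := fun u v => by
    rw [hP u v, hpsq u, hpsq v]
    exact Finset.sum_mul_sq_le_sq_mul_sq _ _ _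
  have hg : ∀ u v, u ≠ v → 0 ≤ 2 - P u u - P v v - 2 * P u v := fun u v huv => by
    set w : Fin n → ℝ := fun j => (if u = j then 1 else 0) + (if v = j then 1 else 0) - P u j - P v j
    have : ∑ j, w j ^ 2 = 2 - P u u - P v v - 2 * P u v := by
      have e : ∀ j, w j ^ 2 = (if u = j then (1 - 2 * P u j - 2 * P v j) else 0)
          + (if v = j then (1 - 2 * P u j - 2 * P v j) else 0)
          + (P u j * P u j + P v j * P v j + 2 * (P u j * P v j)) := by
        intro j
        simp only [w]
        split_ifs with h1 h2
        · exact absurd (h1.trans h2.symm) huv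
        all_goals ring
      rw [Finset.sum_congr rfl fun j _ => e j]
      simp only [Finset.sum_add_distrib, ← Finset.mul_sum, ← hP]
      simp
      rw [hsym v u]; ring
    rw [← this]; exact Finset.sum_nonneg fun _ _ => sq_nonneg _
  -- star part
  have hstar : ∑ l ∈ L, (2 - P (f l) (f l) - P l l - 2 * P (f l) l) ≥ ∑ v, (1 - 2 * P v v) := by
    have hmap : ∀ l ∈ L, f l ∈ Lᶜ := fun l hl => by
      rw [Finset.mem_compl]; exact (hL l hl).2
    rw [← Finset.sum_fiberwise_of_maps_to hmap, ← Finset.sum_add_sum_compl L,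
      ← Finset.sum_fiberwise_of_maps_to hmap (fun v => 1 - 2 * P v v), ← Finset.sum_add_distrib]
    refine Finset.sum_le_sum fun c hcL => ?_
    rw [Finset.mem_compl] at hcL
    obtain ⟨l0, hl0, hl0c⟩ := hc c hcL
    have := aux_star_s9 (L.filter (fun l => f l = c)) ⟨l0, by simp [hl0, hl0c]⟩ (P c c)
      (fun l => P c l) (fun l => P l l) (hp0 c) (hp1 c) (fun l _ => hsub c l)
      (fun l _ => hcs c l) (fun l _ => hp0 l) (by
        have h1 : ∑ l ∈ insert c (L.filter (fun l => f l = c)), P c l ^ 2 ≤ P c c := by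
          conv_rhs => rw [hpsq]
          exact Finset.sum_le_sum_of_subset_of_nonneg (Finset.subset_univ _)
            fun _ _ _ => sq_nonneg _
        rw [Finset.sum_insert (by simp [hcL])] at h1
        nlinarith)
    rw [add_comm]
    refine le_trans this (le_of_eq (Finset.sum_congr rfl fun l hl => ?_))
    rw [(Finset.mem_filter.1 hl).2]
  have hsplit : ∑ u, ∑ v, (if G.Adj u v then (2 - P u u - P v v - 2 * P u v) else 0)
      ≥ ∑ u, ∑ v, ((if u ∈ L ∧ f u = v then (2 - P v v - P u u - 2 * P v u) else 0)
        + (if v ∈ L ∧ f v = u then (2 - P u u - P v v - 2 * P u v) else 0)) := by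
    refine Finset.sum_le_sum fun u _ => Finset.sum_le_sum fun v _ => ?_
    have hs := hsym u v
    by_cases h1 : u ∈ L ∧ f u = v
    · obtain ⟨h1, rfl⟩ := h1
      have h2 := hL u h1
      simp only [h1, h2.1, h2.2, true_and, false_and, if_true, if_false]
      linarith
    · by_cases h2 : v ∈ L ∧ f v = u
      · obtain ⟨h3, rfl⟩ := h2
        have h2 := hL v h3
        simp only [h3, h2.1.symm, h2.2, true_and, false_and, if_true, if_false]
        linarith
      · simp only [h1, h2, if_false]
        split_ifs with h
        · linarith [hg u v h.ne]
        · simp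
  have e1 : ∑ u, ∑ v, (if u ∈ L ∧ f u = v then (2 - P v v - P u u - 2 * P v u) else 0)
      = ∑ l ∈ L, (2 - P (f l) (f l) - P l l - 2 * P (f l) l) := by
    rw [← Finset.sum_filter_add_sum_filter_not Finset.univ (fun u => u ∈ L)]
    rw [Finset.sum_eq_zero (s := Finset.univ.filter (fun u => ¬ u ∈ L)), add_zero,
      Finset.filter_univ_mem]
    · refine Finset.sum_congr rfl fun l hl => ?_
      simp [hl]
    · intro u hu
      have : u ∉ L := (Finset.mem_filter.1 hu).2
      simp [this]
  have e2 : ∑ u, ∑ v, (if v ∈ L ∧ f v = u then (2 - P u u - P v v - 2 * P u v) else 0)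
      = ∑ l ∈ L, (2 - P (f l) (f l) - P l l - 2 * P (f l) l) := by
    rw [Finset.sum_comm]; exact e1
  simp only [Finset.sum_add_distrib] at hsplit
  rw [e1, e2] at hsplit
  linarith

lemma aux_trace {n : ℕ} (M : Matrix (Fin n) (Fin n) ℝ) (h : M.IsHermitian) (s : Finset (Fin n)) :
    ∃ P : Matrix (Fin n) (Fin n) ℝ, (∀ u v, P u v = P v u) ∧
      (∀ u v, P u v = ∑ j, P u j * P v j) ∧ P.trace = s.card ∧
      ∑ i ∈ s, h.eigenvalues i = (P * M).trace := by
  classical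
  set U : Matrix (Fin n) (Fin n) ℝ := (h.eigenvectorUnitary).1 with hU
  have hUU : star U * U = 1 := Unitary.coe_star_mul_self h.eigenvectorUnitary
  set E : Matrix (Fin n) (Fin n) ℝ := diagonal (fun i => if i ∈ s then 1 else 0) with hE
  have hEE : E * E = E := by
    rw [hE, diagonal_mul_diagonal]; congr 1; ext i; simp
  have hM : M = U * diagonal h.eigenvalues * star U := by
    have := h.spectral_theorem
    rw [Unitary.conjStarAlgAut_apply] at this
    simpa [hU] using this
  have hEt : Eᵀ = E := by rw [hE, diagonal_transpose]
  have hstar : star U = Uᵀ := by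
    ext i j; simp [Matrix.star_apply]
  rw [hstar] at hUU hM
  have hT : (U * E * Uᵀ)ᵀ = U * E * Uᵀ := by
    simp [Matrix.transpose_mul, hEt, Matrix.mul_assoc]
  have hsym : ∀ u v, (U * E * Uᵀ) u v = (U * E * Uᵀ) v u := fun u v => by
    conv_lhs => rw [← hT]
    rfl
  have hPP : (U * E * Uᵀ) * (U * E * Uᵀ) = U * E * Uᵀ := by
    calc _ = U * E * (Uᵀ * U) * E * Uᵀ := by simp only [Matrix.mul_assoc]
      _ = U * (E * E) * Uᵀ := by rw [hUU]; simp only [Matrix.mul_assoc, Matrix.one_mul]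
      _ = _ := by rw [hEE]
  refine ⟨U * E * Uᵀ, hsym, fun u v => ?_, ?_, ?_⟩
  · conv_lhs => rw [← hPP]
    rw [Matrix.mul_apply]
    exact Finset.sum_congr rfl fun j _ => by rw [hsym j v]
  · rw [Matrix.trace_mul_comm, ← Matrix.mul_assoc, hUU, Matrix.one_mul, hE]
    simp [Matrix.trace]
  · have : (U * E * Uᵀ) * M = U * (E * diagonal h.eigenvalues) * Uᵀ := by
      conv_lhs => rw [hM]
      calc _ = U * E * (Uᵀ * U) * diagonal h.eigenvalues * Uᵀ := by simp only [Matrix.mul_assoc]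
        _ = _ := by rw [hUU]; simp only [Matrix.mul_assoc, Matrix.one_mul]
    rw [this, Matrix.trace_mul_comm, ← Matrix.mul_assoc, hUU, Matrix.one_mul, hE,
      diagonal_mul_diagonal]
    simp [Matrix.trace]

theorem stmt9 {n : ℕ} (G : SimpleGraph (Fin n)) [DecidableRel G.Adj] (hG : G.Connected)
    (m : ℕ) (hm : G.edgeFinset.card = m)
    (α : ℝ) (hα0 : 1 / 2 ≤ α) (hα1 : α < 1)
    (k : ℕ) (hk2 : 2 ≤ k) (hkn : k ≤ n) :
    Sk (Aalpha α G) k ≤ α * (2 * (k : ℝ) + 2 * m - n) := by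
  have hherm : (Aalpha α G).IsHermitian := by
    unfold Aalpha
    ext i j
    simp [Matrix.conjTranspose_apply, Matrix.diagonal_apply, SimpleGraph.adjMatrix_apply,
      G.adj_comm, eq_comm]
    by_cases h : i = j
    · subst h; simp
    · simp [h, Ne.symm h]
  unfold Sk
  rw [dif_pos hherm]
  apply csSup_le
  · obtain ⟨t, _, ht⟩ := Finset.exists_subset_card_eq
      (s := (Finset.univ : Finset (Fin n))) (n := k) (by simpa using hkn)
    exact ⟨_, t, ht, rfl⟩
  rintro x ⟨s, hs, rfl⟩
  obtain ⟨P, hsym, hP, htr, hsum⟩ := aux_trace _ hherm s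
  rw [hsum]
  have hnt : Nontrivial (Fin n) := Fin.nontrivial_iff_two_le.2 (hk2.trans hkn)
  have hadj : ∀ v, ∃ w, G.Adj v w := fun v => hG.preconnected.exists_adj_of_nontrivial v
  have hmain := aux_main_s9 G hadj P hsym hP
  have hp1 : ∀ u, P u u ≤ 1 := fun u => by
    have h : P u u * P u u ≤ P u u := by
      conv_rhs => rw [hP u u]
      exact Finset.single_le_sum (f := fun j => P u j * P u j) (fun _ _ => mul_self_nonneg _)
        (Finset.mem_univ u)
    nlinarith
  have htr' : ∑ v, P v v = k := by rw [← hs, ← htr]; rfl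
  have hdeg : ∑ v, (G.degree v : ℝ) = 2 * m := by
    rw [← hm]; exact_mod_cast G.sum_degrees_eq_twice_card_edges
  have hd1 : ∀ v, (1 : ℝ) ≤ G.degree v := fun v => by
    have : 0 < G.degree v := (G.degree_pos_iff_exists_adj v).2 (hadj v)
    exact_mod_cast this
  have hD : ∑ v, P v v * G.degree v ≤ 2 * m - n + k := by
    have : ∑ v, P v v * G.degree v ≤ ∑ v, ((G.degree v : ℝ) - 1 + P v v) :=
      Finset.sum_le_sum fun v _ => by nlinarith [hp1 v, hd1 v]
    rw [Finset.sum_add_distrib, Finset.sum_sub_distrib, hdeg, htr'] at this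
    simpa using this
  set a : ℝ := ∑ u, ∑ v, (if G.Adj u v then P u v else 0) with ha
  have hrow : ∀ (c : ℝ) u, ∑ v, (if G.Adj u v then c else 0) = G.degree u * c := fun c u => by
    rw [← Finset.sum_filter, Finset.sum_const, nsmul_eq_mul, ← G.card_neighborFinset_eq_degree,
      G.neighborFinset_eq_filter]
  have hA1 : ∑ u, ∑ v, (if G.Adj u v then P u u else 0) = ∑ v, P v v * G.degree v :=
    Finset.sum_congr rfl fun u _ => by rw [hrow, mul_comm]
  have hA2 : ∑ u, ∑ v, (if G.Adj u v then P v v else 0) = ∑ v, P v v * G.degree v := by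
    rw [Finset.sum_comm, ← hA1]
    simp only [G.adj_comm]
  have hA3 : ∑ u, ∑ v, (if G.Adj u v then (2:ℝ) else 0) = 4 * m := by
    simp only [hrow, ← Finset.sum_mul, hdeg]; ring
  have hexp : ∑ u, ∑ v, (if G.Adj u v then (2 - P u u - P v v - 2 * P u v) else 0)
      = 4 * m - 2 * ∑ v, P v v * G.degree v - 2 * a := by
    have : ∀ u v, (if G.Adj u v then (2 - P u u - P v v - 2 * P u v) else 0)
        = (if G.Adj u v then (2:ℝ) else 0) - (if G.Adj u v then P u u else 0)
          - (if G.Adj u v then P v v else 0) - 2 * (if G.Adj u v then P u v else 0) := by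
      intro u v; split_ifs <;> ring
    simp only [this, Finset.sum_sub_distrib, ← Finset.mul_sum]
    rw [hA1, hA2, hA3]; ring
  have hn : ∑ v, (1 - 2 * P v v) = n - 2 * k := by
    rw [Finset.sum_sub_distrib, ← Finset.mul_sum, htr']; simp
  have htrace : (P * Aalpha α G).trace = α * ∑ v, P v v * G.degree v + (1 - α) * a := by
    unfold Aalpha
    rw [Matrix.mul_add, Matrix.trace_add, Matrix.mul_smul, Matrix.mul_smul, Matrix.trace_smul,
      Matrix.trace_smul, smul_eq_mul, smul_eq_mul]
    congr 2
    · simp [Matrix.trace, Matrix.mul_diagonal]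
    · simp only [Matrix.trace, Matrix.diag, Matrix.mul_apply, SimpleGraph.adjMatrix_apply, ha]
      simp [G.adj_comm]
  rw [htrace]
  rw [hexp, hn] at hmain
  have hk : (0:ℝ) ≤ k := by positivity
  nlinarith [mul_le_mul_of_nonneg_left hD (by linarith : (0:ℝ) ≤ 2 * α - 1)]
end

section
/- Let P_n be the path on n vertices and let 0 ≤ α < 1/2. Then for every k with 1 ≤ k ≤ n, S_k(A_α(P_n)) ≤ 2αk + α − 1 + α·csc(π/(2n))·sin((2k+1)π/(2n)) + (1−2α)·csc(π/(2(n+1)))·sin((2k+1)π/(2(n+1))). -/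
open Matrix Finset Real

lemma kf_weights {n k : ℕ} (hkn : k ≤ n) (hk : 1 ≤ k) (μ w : Fin n → ℝ) (hμ : StrictAnti μ)
    (w0 : ∀ j, 0 ≤ w j) (w1 : ∀ j, w j ≤ 1) (hw : ∑ j, w j = k) :
    ∑ j, μ j * w j ≤ ∑ j : Fin n, if j.val < k then μ j else 0 := by
  set c : ℝ := μ ⟨k - 1, by omega⟩ with hc
  have h1 : ∀ j : Fin n, (μ j - c) * w j ≤ if j.val < k then μ j - c else 0 := by
    intro j
    split_ifs with hj
    · have : c ≤ μ j := hμ.antitone (by rw [Fin.le_def]; simp; omega)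
      nlinarith [w0 j, w1 j]
    · have : μ j ≤ c := hμ.antitone (by rw [Fin.le_def]; simp; omega)
      nlinarith [w0 j, w1 j]
  have h2 := Finset.sum_le_sum (fun j (_ : j ∈ Finset.univ) => h1 j)
  have h3 : ∑ j : Fin n, (if j.val < k then (1:ℝ) else 0) = k := by
    rw [Fin.sum_univ_eq_sum_range (fun j => if j < k then (1:ℝ) else 0) n, ← Finset.sum_filter]
    have : (Finset.range n).filter (· < k) = Finset.range k := by
      ext; simp; omega
    rw [this]; simp
  have h4 : ∑ j : Fin n, (if j.val < k then μ j - c else 0)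
      = (∑ j : Fin n, if j.val < k then μ j else 0) - c * k := by
    rw [← h3, Finset.mul_sum, ← Finset.sum_sub_distrib]
    refine Finset.sum_congr rfl fun j _ => ?_
    split_ifs <;> ring
  have h5 : ∑ j : Fin n, (μ j - c) * w j = ∑ j, μ j * w j - c * k := by
    rw [← hw, Finset.mul_sum, ← Finset.sum_sub_distrib]
    refine Finset.sum_congr rfl fun j _ => ?_
    ring
  linarith

lemma kf {n k : ℕ} (hkn : k ≤ n) (hk : 1 ≤ k) (B : Matrix (Fin n) (Fin n) ℝ) (hB : B.IsHermitian)
    (μ : Fin n → ℝ) (hμ : StrictAnti μ) (u : Fin n → Fin n → ℝ) (hu : ∀ j, u j ≠ 0)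
    (hBu : ∀ j, B *ᵥ u j = μ j • u j) (v : OrthonormalBasis (Fin n) ℝ (EuclideanSpace ℝ (Fin n)))
    (s : Finset (Fin n)) (hs : s.card = k) :
    ∑ i ∈ s, (v i).ofLp ⬝ᵥ (B *ᵥ (v i).ofLp) ≤ ∑ j : Fin n, if j.val < k then μ j else 0 := by
  set T := Matrix.toEuclideanLin B with hT
  have hsym : T.IsSymmetric := Matrix.isSymmetric_toEuclideanLin_iff.mpr hB
  let U : Fin n → EuclideanSpace ℝ (Fin n) := fun j => WithLp.toLp 2 (u j)
  have hU0 : ∀ j, U j ≠ 0 := by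
    intro j h
    apply hu j
    have := congrArg WithLp.ofLp h
    simpa [U] using this
  have hTU : ∀ j, T (U j) = μ j • U j := by
    intro j
    simp only [hT, U, Matrix.toLpLin_toLp]
    simp [hBu]
  let e : Fin n → EuclideanSpace ℝ (Fin n) := fun j => (‖U j‖⁻¹ : ℝ) • U j
  have hTe : ∀ j, T (e j) = μ j • e j := by
    intro j
    simp only [e, map_smul, hTU]
    rw [smul_comm]
  have he : Orthonormal ℝ e := by
    constructor
    · intro j
      simp only [e, norm_smul, norm_inv, norm_norm]
      exact inv_mul_cancel₀ (norm_ne_zero_iff.mpr (hU0 j))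
    · intro i j hij
      have h := hsym (e i) (e j)
      rw [hTe, hTe, real_inner_smul_left (e i) (e j) (μ i),
        real_inner_smul_right (e i) (e j) (μ j)] at h
      have : μ i ≠ μ j := fun h => hij (hμ.injective h)
      have h' : (μ i - μ j) * inner ℝ (e i) (e j) = 0 := by
        have h2 : μ i * inner ℝ (e i) (e j) = μ j * inner ℝ (e i) (e j) := h
        linarith
      exact (mul_eq_zero.mp h').resolve_left (sub_ne_zero.mpr this)
  have hspan : ⊤ ≤ Submodule.span ℝ (Set.range e) := by
    apply ge_of_eq
    apply he.linearIndependent.span_eq_top_of_card_eq_finrank'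
    simp
  let E := OrthonormalBasis.mk he hspan
  have hE : ∀ j, E j = e j := fun j => by simp [E]
  let w : Fin n → ℝ := fun j => ∑ i ∈ s, (inner ℝ (v i) (E j)) ^ 2
  have hq : ∀ i, (v i).ofLp ⬝ᵥ (B *ᵥ (v i).ofLp) = ∑ j, μ j * (inner ℝ (v i) (E j)) ^ 2 := by
    intro i
    have h1 : (v i).ofLp ⬝ᵥ (B *ᵥ (v i).ofLp) = inner ℝ (v i) (T (v i)) := by
      rw [EuclideanSpace.inner_eq_star_dotProduct, dotProduct_comm]
      simp [hT, Matrix.toLpLin_apply]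
    rw [h1, ← E.sum_inner_mul_inner]
    refine Finset.sum_congr rfl fun j _ => ?_
    rw [← hsym, hE, hTe, inner_smul_left, real_inner_comm (e j) (v i)]
    simp; ring
  have hsum : ∑ i ∈ s, (v i).ofLp ⬝ᵥ (B *ᵥ (v i).ofLp) = ∑ j, μ j * w j := by
    simp only [hq, w, Finset.mul_sum]
    rw [Finset.sum_comm]
  rw [hsum]
  apply kf_weights hkn hk μ w hμ
  · intro j; exact Finset.sum_nonneg fun i _ => sq_nonneg _
  · intro j
    calc w j ≤ ∑ i, (inner ℝ (v i) (E j)) ^ 2 :=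
          Finset.sum_le_sum_of_subset_of_nonneg (Finset.subset_univ _) fun i _ _ => sq_nonneg _
      _ = 1 := by
          have := v.sum_sq_norm_inner_right (E j)
          simpa using this
  · simp only [w]
    rw [Finset.sum_comm]
    have : ∀ i, ∑ j, (inner ℝ (v i) (E j)) ^ 2 = 1 := by
      intro i
      have := E.sum_sq_norm_inner_left (v i)
      simpa using this
    simp [this, hs]

lemma cos_sum (t : ℝ) (ht : Real.sin (t / 2) ≠ 0) (k : ℕ) :
    ∑ j ∈ Finset.range k, 2 * Real.cos ((j + 1) * t)
      = (Real.sin (t / 2))⁻¹ * Real.sin ((2 * k + 1) * (t / 2)) - 1 := by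
  induction k with
  | zero => simp [ht]
  | succ k ih =>
    rw [Finset.sum_range_succ, ih]
    have h : Real.sin ((2 * ((k + 1 : ℕ) : ℝ) + 1) * (t / 2)) - Real.sin ((2 * k + 1) * (t / 2))
        = 2 * Real.sin (t / 2) * Real.cos ((k + 1) * t) := by
      rw [Real.sin_sub_sin]
      push_cast
      congr 2
      · congr 1; ring
      · ring
    have h2 : Real.sin ((2 * ((k + 1 : ℕ) : ℝ) + 1) * (t / 2))
      = Real.sin ((2 * k + 1) * (t / 2)) + 2 * Real.sin (t / 2) * Real.cos ((k + 1) * t) := by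
      linarith
    rw [h2]
    field_simp
    ring

lemma fin_if_sum {n k : ℕ} (hkn : k ≤ n) (f : ℕ → ℝ) :
    ∑ j : Fin n, (if j.val < k then f j else 0) = ∑ j ∈ Finset.range k, f j := by
  rw [Fin.sum_univ_eq_sum_range (fun j => if j < k then f j else 0) n, ← Finset.sum_filter]
  have : (Finset.range n).filter (· < k) = Finset.range k := by
    ext; simp; omega
  rw [this]

lemma adj_apply (n : ℕ) [DecidableRel (SimpleGraph.pathGraph n).Adj] (f : ℕ → ℝ) (x : Fin n) :
    ((SimpleGraph.pathGraph n).adjMatrix ℝ *ᵥ (fun y => f y.val)) x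
      = (if x.val + 1 < n then f (x.val + 1) else 0) + (if 0 < x.val then f (x.val - 1) else 0) := by
  have h1 : ((SimpleGraph.pathGraph n).adjMatrix ℝ *ᵥ (fun y => f y.val)) x
      = ∑ y : Fin n, ((if y.val = x.val + 1 then f y else 0)
          + (if 0 < x.val ∧ y.val = x.val - 1 then f y else 0)) := by
    simp only [Matrix.mulVec, dotProduct]
    refine Finset.sum_congr rfl fun y _ => ?_
    rw [SimpleGraph.adjMatrix_apply]
    have := @SimpleGraph.pathGraph_adj n x y
    simp only [this]
    split_ifs <;> first | (exfalso; omega) | simp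
  rw [h1, Finset.sum_add_distrib,
    Fin.sum_univ_eq_sum_range (fun y => if y = x.val + 1 then f y else 0) n,
    Fin.sum_univ_eq_sum_range (fun y => if 0 < x.val ∧ y = x.val - 1 then f y else 0) n]
  congr 1
  · rw [Finset.sum_ite_eq']; simp
  · by_cases hx : 0 < x.val
    · simp only [hx, true_and, if_true]
      rw [Finset.sum_ite_eq', if_pos]
      simp; omega
    · simp [hx]

lemma A_eig (n : ℕ) [DecidableRel (SimpleGraph.pathGraph n).Adj] (t : ℝ)
    (ht : Real.sin ((n + 1) * t) = 0) :
    (SimpleGraph.pathGraph n).adjMatrix ℝ *ᵥ (fun y : Fin n => Real.sin ((y.val + 1) * t))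
      = (2 * Real.cos t) • (fun y : Fin n => Real.sin ((y.val + 1) * t)) := by
  funext x
  have h := adj_apply n (fun y => Real.sin (((y : ℝ) + 1) * t)) x
  rw [h]
  have hx := x.2
  have e1 : (if x.val + 1 < n then Real.sin ((((x.val + 1 : ℕ) : ℝ) + 1) * t) else 0)
      = Real.sin ((x.val + 1) * t + t) := by
    split_ifs with h1
    · congr 1; push_cast; ring
    · have : (n : ℝ) = x.val + 1 := by
        have : n = x.val + 1 := by omega
        exact_mod_cast this
      rw [← ht, this]; congr 1; ring
  have e2 : (if 0 < x.val then Real.sin ((((x.val - 1 : ℕ) : ℝ) + 1) * t) else 0)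
      = Real.sin ((x.val + 1) * t - t) := by
    split_ifs with h1
    · rw [Nat.cast_sub h1]; congr 1; push_cast; ring
    · have : x.val = 0 := by omega
      simp [this]
  rw [e1, e2]
  simp only [Pi.smul_apply, smul_eq_mul]
  rw [Real.sin_add, Real.sin_sub]; ring

lemma Q_eig (n : ℕ) [DecidableRel (SimpleGraph.pathGraph n).Adj] (t : ℝ)
    (ht : Real.sin (n * t) = 0) :
    (Matrix.diagonal (fun i => ((SimpleGraph.pathGraph n).degree i : ℝ))
      + (SimpleGraph.pathGraph n).adjMatrix ℝ) *ᵥ (fun y : Fin n => Real.sin ((y.val + 1 / 2) * t))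
      = (2 + 2 * Real.cos t) • (fun y : Fin n => Real.sin ((y.val + 1 / 2) * t)) := by
  funext x
  have h := adj_apply n (fun y => Real.sin (((y : ℝ) + 1 / 2) * t)) x
  have hd := adj_apply n (fun y => (1 : ℝ)) x
  have hd' : ((SimpleGraph.pathGraph n).degree x : ℝ)
      = (if x.val + 1 < n then 1 else 0) + (if 0 < x.val then 1 else 0) := by
    rw [← hd]
    simp [SimpleGraph.adjMatrix_mulVec_apply]
  rw [Matrix.add_mulVec, Pi.add_apply, h, Matrix.mulVec_diagonal, hd']
  have hx := x.2
  set S := Real.sin ((x.val + 1 / 2) * t) with hS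
  have e1 : (if x.val + 1 < n then Real.sin ((((x.val + 1 : ℕ) : ℝ) + 1 / 2) * t) else 0)
      + (if x.val + 1 < n then 1 else 0) * S
      = Real.sin ((x.val + 1 / 2) * t + t) + S := by
    split_ifs with h1
    · rw [one_mul]; congr 2; push_cast; ring
    · have : (n : ℝ) = x.val + 1 := by
        have : n = x.val + 1 := by omega
        exact_mod_cast this
      rw [this] at ht
      have a : ((x.val : ℝ) + 1 / 2) * t + t = (x.val + 1) * t + t / 2 := by ring
      have b : ((x.val : ℝ) + 1 / 2) * t = (x.val + 1) * t - t / 2 := by ring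
      rw [hS, a, b, Real.sin_add, Real.sin_sub, ht]; ring
  have e2 : (if 0 < x.val then Real.sin ((((x.val - 1 : ℕ) : ℝ) + 1 / 2) * t) else 0)
      + (if 0 < x.val then 1 else 0) * S
      = Real.sin ((x.val + 1 / 2) * t - t) + S := by
    split_ifs with h1
    · rw [Nat.cast_sub h1, one_mul]; congr 2; push_cast; ring
    · have h0 : x.val = 0 := by omega
      have a : ((x.val : ℝ) + 1 / 2) * t - t = - ((x.val + 1 / 2) * t) := by rw [h0]; push_cast; ring
      rw [a, Real.sin_neg, hS]; ring
  have e3 := Real.sin_add ((x.val + 1 / 2) * t) t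
  have e4 := Real.sin_sub ((x.val + 1 / 2) * t) t
  simp only [Pi.smul_apply, smul_eq_mul]
  rw [← hS] at e3 e4 ⊢
  linear_combination e1 + e2 + e3 + e4

lemma cos_anti (n m : ℕ) (hm : n ≤ m) (c : ℝ) :
    StrictAnti (fun j : Fin n => c + 2 * Real.cos ((j.val + 1) * (π / m))) := by
  intro i j hij
  have hn : 0 < n := by have := i.2; omega
  have hm0 : (0 : ℝ) < m := by exact_mod_cast (by omega : 0 < m)
  have hp : 0 < π / m := div_pos Real.pi_pos hm0
  have hij' : (i.val : ℝ) < j.val := by exact_mod_cast hij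
  have hjm : (j.val : ℝ) + 1 ≤ m := by exact_mod_cast (by have := j.2; omega : j.val + 1 ≤ m)
  have : Real.cos ((j.val + 1) * (π / m)) < Real.cos ((i.val + 1) * (π / m)) := by
    apply Real.cos_lt_cos_of_nonneg_of_le_pi
    · positivity
    · calc ((j.val : ℝ) + 1) * (π / m) ≤ m * (π / m) := by gcongr
        _ = π := by field_simp
    · gcongr
  simp only
  linarith

lemma sin_pos_aux (n m : ℕ) (hm : n ≤ m) (j : Fin n) (r : ℝ) (r0 : 0 < r) (r1 : r * (j.val + 1) < m) :
    Real.sin (r * ((j.val + 1) * (π / m))) ≠ 0 := by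
  have hm0 : (0 : ℝ) < m := by exact_mod_cast (by have := j.2; omega : 0 < m)
  apply ne_of_gt
  apply Real.sin_pos_of_pos_of_lt_pi
  · have := Real.pi_pos; positivity
  · calc r * ((j.val + 1) * (π / m)) = (r * (j.val + 1)) * (π / m) := by ring
      _ < m * (π / m) := by
        apply mul_lt_mul_of_pos_right r1; have := Real.pi_pos; positivity
      _ = π := by field_simp

lemma sin_half_ne (m : ℕ) (hm : 1 ≤ m) : Real.sin (π / m / 2) ≠ 0 := by
  have hm1 : (1 : ℝ) ≤ m := by exact_mod_cast hm
  have := Real.pi_pos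
  apply ne_of_gt
  apply Real.sin_pos_of_pos_of_lt_pi
  · positivity
  · have : π / m ≤ π := div_le_self this.le hm1
    linarith

theorem stmt10 (n : ℕ) [DecidableRel (SimpleGraph.pathGraph n).Adj]
    (α : ℝ) (hα0 : 0 ≤ α) (hα1 : α < 1 / 2)
    (k : ℕ) (hk1 : 1 ≤ k) (hkn : k ≤ n) :
    Sk (Aalpha α (SimpleGraph.pathGraph n)) k ≤
      2 * α * k + α - 1
        + α * (Real.sin (π / (2 * n)))⁻¹ * Real.sin ((2 * k + 1) * π / (2 * n))
        + (1 - 2 * α) * (Real.sin (π / (2 * (n + 1))))⁻¹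
            * Real.sin ((2 * k + 1) * π / (2 * (n + 1))) := by
  have hA : ((SimpleGraph.pathGraph n).adjMatrix ℝ).IsHermitian := by
    rw [Matrix.IsHermitian, Matrix.conjTranspose_eq_transpose_of_trivial]
    exact SimpleGraph.isSymm_adjMatrix _
  have hD : (Matrix.diagonal (fun i => ((SimpleGraph.pathGraph n).degree i : ℝ))).IsHermitian :=
    Matrix.isHermitian_diagonal _
  set A := (SimpleGraph.pathGraph n).adjMatrix ℝ with hAdef
  set D := Matrix.diagonal (fun i => ((SimpleGraph.pathGraph n).degree i : ℝ)) with hDdef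
  have hM : Aalpha α (SimpleGraph.pathGraph n) = α • (D + A) + (1 - 2 * α) • A := by
    rw [Aalpha, ← hAdef, ← hDdef, smul_add, add_assoc, ← add_smul]
    congr 2; ring
  have hQ : (D + A).IsHermitian := hD.add hA
  have hH : (Aalpha α (SimpleGraph.pathGraph n)).IsHermitian := by
    rw [hM]
    rw [Matrix.IsHermitian, Matrix.conjTranspose_add, Matrix.conjTranspose_smul,
      Matrix.conjTranspose_smul, hQ.eq, hA.eq]
    simp
  rw [Sk, dif_pos hH]
  apply csSup_le
  · obtain ⟨s, -, hs⟩ := Finset.exists_subset_card_eq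
      (s := (Finset.univ : Finset (Fin n))) (n := k) (by simpa using hkn)
    exact ⟨_, s, hs, rfl⟩
  rintro _ ⟨s, hs, rfl⟩
  set v := hH.eigenvectorBasis with hv
  have hn0 : (0 : ℝ) < n := by exact_mod_cast (by omega : 0 < n)
  have hev : ∀ i, hH.eigenvalues i = α * ((v i).ofLp ⬝ᵥ ((D + A) *ᵥ (v i).ofLp))
      + (1 - 2 * α) * ((v i).ofLp ⬝ᵥ (A *ᵥ (v i).ofLp)) := by
    intro i
    have h1 := hH.mulVec_eigenvectorBasis i
    rw [← hv] at h1
    have h2 : (v i).ofLp ⬝ᵥ (v i).ofLp = 1 := by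
      have h3 : inner ℝ (v i) (v i) = 1 := by
        rw [real_inner_self_eq_norm_sq, v.orthonormal.1 i]; norm_num
      rw [EuclideanSpace.inner_eq_star_dotProduct] at h3
      simpa using h3
    have h4 : (v i).ofLp ⬝ᵥ (Aalpha α (SimpleGraph.pathGraph n) *ᵥ (v i).ofLp)
        = hH.eigenvalues i := by
      rw [h1, dotProduct_smul, h2]; simp
    rw [← h4, hM, Matrix.add_mulVec, Matrix.smul_mulVec, Matrix.smul_mulVec, dotProduct_add,
      dotProduct_smul, dotProduct_smul]
    simp
  have kA := kf hkn hk1 A hA _ (cos_anti n (n + 1) (by omega) 0)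
    (fun j y => Real.sin ((y.val + 1) * ((j.val + 1) * (π / (n + 1 : ℕ)))))
    (by
      intro j h
      have h0 := congrFun h ⟨0, by omega⟩
      have hj : (j.val : ℝ) + 1 ≤ n := by exact_mod_cast j.2
      refine sin_pos_aux n (n + 1) (by omega) j 1 one_pos ?_ (by simpa using h0)
      push_cast; linarith)
    (by
      intro j
      rw [A_eig]
      · rw [zero_add]
      · have : ((n : ℝ) + 1) * ((j.val + 1) * (π / (n + 1 : ℕ))) = ((j.val + 1 : ℕ) : ℝ) * π := by
          push_cast; field_simp
        rw [this, Real.sin_nat_mul_pi])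
    v s hs
  have kQ := kf hkn hk1 (D + A) hQ _ (cos_anti n n le_rfl 2)
    (fun j y => Real.sin ((y.val + 1 / 2) * ((j.val + 1) * (π / n))))
    (by
      intro j h
      have h0 := congrFun h ⟨0, by omega⟩
      have hj : (j.val : ℝ) + 1 ≤ n := by exact_mod_cast j.2
      refine sin_pos_aux n n le_rfl j (1 / 2) (by norm_num) ?_ (by simpa using h0)
      linarith)
    (by
      intro j
      rw [Q_eig]
      have : (n : ℝ) * ((j.val + 1) * (π / n)) = ((j.val + 1 : ℕ) : ℝ) * π := by
        push_cast; field_simp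
      rw [this, Real.sin_nat_mul_pi])
    v s hs
  rw [fin_if_sum hkn (fun j => 0 + 2 * Real.cos (((j : ℝ) + 1) * (π / (n + 1 : ℕ))))] at kA
  rw [fin_if_sum hkn (fun j => 2 + 2 * Real.cos (((j : ℝ) + 1) * (π / n)))] at kQ
  simp only [zero_add] at kA
  rw [cos_sum _ (sin_half_ne (n + 1) (by omega))] at kA
  rw [Finset.sum_add_distrib, cos_sum _ (sin_half_ne n (by omega))] at kQ
  have a1 : π / (2 * n) = π / n / 2 := by field_simp
  have a2 : (2 * k + 1) * π / (2 * n) = (2 * k + 1) * (π / n / 2) := by field_simp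
  have a3 : π / (2 * ((n : ℝ) + 1)) = π / (n + 1 : ℕ) / 2 := by push_cast; field_simp
  have a4 : (2 * k + 1) * π / (2 * ((n : ℝ) + 1)) = (2 * k + 1) * (π / (n + 1 : ℕ) / 2) := by
    push_cast; field_simp
  rw [a1, a2, a3, a4]
  simp only [hev]
  rw [Finset.sum_add_distrib, ← Finset.mul_sum, ← Finset.mul_sum]
  have b1 := mul_le_mul_of_nonneg_left kQ hα0
  have b2 := mul_le_mul_of_nonneg_left kA (by linarith : 0 ≤ 1 - 2 * α)
  simp only [Finset.sum_const, Finset.card_range, nsmul_eq_mul] at b1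
  linarith
end

section
/- Let P_n be the path on n vertices and let 1/2 ≤ α ≤ 1. Then for every k with 1 ≤ k ≤ n, S_k(A_α(P_n)) ≤ 2αk + (1−α)·( csc(π/(2n))·sin((2k+1)π/(2n)) − 1 ). -/
open Matrix Finset Real

theorem aux_rearr {n : ℕ} (k : ℕ) (hk1 : 1 ≤ k) (hkn : k ≤ n) (μ w : Fin n → ℝ)
    (hμ : ∀ i j, i ≤ j → μ j ≤ μ i) (h0 : ∀ j, 0 ≤ w j) (h1 : ∀ j, w j ≤ 1)
    (hs : ∑ j, w j = k) :
    ∑ j, μ j * w j ≤ ∑ j, if j.val < k then μ j else 0 := by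
  have hcard : ∑ j : Fin n, (if j.val < k then (1:ℝ) else 0) = k := by
    rw [Fin.sum_univ_eq_sum_range (fun i => if i < k then (1:ℝ) else 0) n]
    rw [← Finset.sum_filter]
    have : (Finset.range n).filter (fun i => i < k) = Finset.range k := by
      ext i; simp; omega
    rw [this]; simp
  obtain ⟨c, hc⟩ : ∃ c, c = μ ⟨k - 1, by omega⟩ := ⟨_, rfl⟩
  have key : ∑ j, (μ j - c) * w j ≤ ∑ j, (μ j - c) * (if j.val < k then (1:ℝ) else 0) := by
    apply Finset.sum_le_sum
    intro j _
    split_ifs with h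
    · have : c ≤ μ j := by rw [hc]; apply hμ; rw [Fin.le_def]; simp; omega
      exact mul_le_mul_of_nonneg_left (h1 j) (by linarith)
    · have : μ j ≤ c := by rw [hc]; apply hμ; rw [Fin.le_def]; simp; omega
      rw [mul_zero]
      exact mul_nonpos_of_nonpos_of_nonneg (by linarith) (h0 j)
  simp only [sub_mul, Finset.sum_sub_distrib, ← Finset.mul_sum, hs, hcard] at key
  simpa using key

theorem aux_kyfan {n : ℕ} (k : ℕ) (hk1 : 1 ≤ k) (hkn : k ≤ n) (μ : Fin n → ℝ)
    (hμ : ∀ i j, i ≤ j → μ j ≤ μ i)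
    (T : EuclideanSpace ℝ (Fin n) →ₗ[ℝ] EuclideanSpace ℝ (Fin n)) (hT : T.IsSymmetric)
    (b : OrthonormalBasis (Fin n) ℝ (EuclideanSpace ℝ (Fin n)))
    (hb : ∀ j, T (b j) = μ j • b j)
    (v : OrthonormalBasis (Fin n) ℝ (EuclideanSpace ℝ (Fin n)))
    (s : Finset (Fin n)) (hs : s.card = k) :
    ∑ i ∈ s, inner ℝ (v i) (T (v i)) ≤ ∑ j, if j.val < k then μ j else 0 := by
  have e : ∀ x, inner ℝ x (T x) = ∑ j, μ j * (inner ℝ (b j) x)^2 := by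
    intro x
    rw [← b.sum_inner_mul_inner x (T x)]
    refine Finset.sum_congr rfl fun j _ => ?_
    rw [← hT, hb, inner_smul_left, real_inner_comm]
    simp; ring
  have : ∑ i ∈ s, inner ℝ (v i) (T (v i)) =
      ∑ j, μ j * ∑ i ∈ s, (inner ℝ (b j) (v i))^2 := by
    simp only [e, Finset.mul_sum]
    rw [Finset.sum_comm]
  rw [this]
  apply aux_rearr k hk1 hkn μ _ hμ
  · intro j; positivity
  · intro j
    have := v.orthonormal.sum_inner_products_le (b j) (s := s)
    simpa [real_inner_comm] using this
  · rw [Finset.sum_comm]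
    have : ∀ i, ∑ j, (inner ℝ (b j) (v i))^2 = (1:ℝ) := by
      intro i
      have := b.sum_sq_norm_inner_right (v i)
      simpa using this
    simp [this, hs]

theorem aux_basis {n : ℕ} (μ : Fin n → ℝ) (hμ : Function.Injective μ)
    (T : EuclideanSpace ℝ (Fin n) →ₗ[ℝ] EuclideanSpace ℝ (Fin n)) (hT : T.IsSymmetric)
    (u : Fin n → EuclideanSpace ℝ (Fin n)) (hu : ∀ j, u j ≠ 0)
    (h : ∀ j, T (u j) = μ j • u j) :
    ∃ b : OrthonormalBasis (Fin n) ℝ (EuclideanSpace ℝ (Fin n)),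
      ∀ j, T (b j) = μ j • b j := by
  have hon : Orthonormal ℝ (fun j => (‖u j‖⁻¹ : ℝ) • u j) := by
    constructor
    · intro j
      have := norm_ne_zero_iff.2 (hu j)
      simp [norm_smul, this]
    · intro i j hij
      have h1 := hT (u i) (u j)
      rw [h, h, inner_smul_left, inner_smul_right] at h1
      have h2 : μ i - μ j ≠ 0 := sub_ne_zero.2 fun hh => hij (hμ hh)
      have h3 : inner ℝ (u i) (u j) = 0 := by
        have : (μ i - μ j) * inner ℝ (u i) (u j) = 0 := by
          simp at h1; rw [sub_mul]; rw [sub_eq_zero]; simpa using h1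
        exact (mul_eq_zero.1 this).resolve_left h2
      simp [inner_smul_left, inner_smul_right, h3]
  rcases Nat.eq_zero_or_pos n with h0 | hpos
  · subst h0
    exact ⟨EuclideanSpace.basisFun _ _, fun j => j.elim0⟩
  have : Nonempty (Fin n) := ⟨⟨0, hpos⟩⟩
  let B := basisOfOrthonormalOfCardEqFinrank hon (by simp)
  have hB : ⇑B = (fun j => (‖u j‖⁻¹ : ℝ) • u j) := coe_basisOfOrthonormalOfCardEqFinrank hon (by simp)
  refine ⟨B.toOrthonormalBasis (by rw [hB]; exact hon), fun j => ?_⟩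
  rw [Module.Basis.coe_toOrthonormalBasis, hB]
  simp only [map_smul, h]
  exact smul_comm _ _ _

theorem aux_nbr {n : ℕ} [DecidableRel (SimpleGraph.pathGraph n).Adj] (g : ℕ → ℝ) (i : Fin n) :
    ∑ j ∈ (SimpleGraph.pathGraph n).neighborFinset i, g j =
      (if i.val + 1 < n then g (i + 1) else 0) + (if 1 ≤ i.val then g (i - 1) else 0) := by
  have h1 : (SimpleGraph.pathGraph n).neighborFinset i =
      univ.filter (fun j : Fin n => i.val + 1 = j.val ∨ j.val + 1 = i.val) := by
    ext j; simp [SimpleGraph.pathGraph_adj]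
  rw [h1, Finset.filter_or, Finset.sum_union]
  · congr 1
    · split_ifs with h
      · rw [show univ.filter (fun j : Fin n => i.val + 1 = j.val) = {⟨i + 1, h⟩} by
          ext j; simp [Fin.ext_iff, eq_comm]]
        simp
      · rw [show univ.filter (fun j : Fin n => i.val + 1 = j.val) = ∅ by
          ext j; simp; omega]
        simp
    · split_ifs with h
      · rw [show univ.filter (fun j : Fin n => j.val + 1 = i.val) = {⟨i - 1, by omega⟩} by
          ext j; simp [Fin.ext_iff]; omega]
        simp
      · rw [show univ.filter (fun j : Fin n => j.val + 1 = i.val) = ∅ by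
          ext j; simp; omega]
        simp
  · rw [Finset.disjoint_filter]; intro j _ h h'; omega

theorem aux_trig (n k : ℕ) (hn : 1 ≤ n) :
    ∑ j ∈ Finset.range k, (2 * Real.cos ((j + 1) * π / n)) =
    (Real.sin (π / (2 * n)))⁻¹ * Real.sin ((2 * k + 1) * π / (2 * n)) - 1 := by
  have hn' : (1:ℝ) ≤ n := by exact_mod_cast hn
  have hs : Real.sin (π / (2 * n)) ≠ 0 := by
    apply ne_of_gt
    apply Real.sin_pos_of_pos_of_lt_pi
    · positivity
    · rw [div_lt_iff₀ (by positivity)]; nlinarith [Real.pi_pos]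
  induction k with
  | zero => simp [hs]
  | succ k ih =>
    rw [Finset.sum_range_succ, ih]
    have e1 : (2 * ((k + 1 : ℕ):ℝ) + 1) * π / (2 * n) = (k + 1) * π / n + π / (2 * n) := by
      push_cast; field_simp; try ring
    have e2 : (2 * (k:ℝ) + 1) * π / (2 * n) = (k + 1) * π / n - π / (2 * n) := by
      field_simp; try ring
    rw [e1, e2, Real.sin_add, Real.sin_sub]
    field_simp
    ring

/-- signless Laplacian -/
noncomputable def auxQ (n : ℕ) [DecidableRel (SimpleGraph.pathGraph n).Adj] :
    Matrix (Fin n) (Fin n) ℝ :=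
  Matrix.diagonal (fun i => ((SimpleGraph.pathGraph n).degree i : ℝ)) +
    (SimpleGraph.pathGraph n).adjMatrix ℝ

theorem auxQ_herm (n : ℕ) [DecidableRel (SimpleGraph.pathGraph n).Adj] :
    (auxQ n).IsHermitian := by
  unfold auxQ
  refine (Matrix.isHermitian_diagonal _).add ?_
  rw [Matrix.IsHermitian, Matrix.conjTranspose_eq_transpose_of_trivial]
  simp

theorem Aalpha_eq (n : ℕ) [DecidableRel (SimpleGraph.pathGraph n).Adj] (α : ℝ) :
    Aalpha α (SimpleGraph.pathGraph n) =
     (2 * α - 1) • Matrix.diagonal (fun i => ((SimpleGraph.pathGraph n).degree i : ℝ)) +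
      (1 - α) • auxQ n := by
  unfold Aalpha auxQ
  module

theorem Aalpha_herm_s11 (n : ℕ) [DecidableRel (SimpleGraph.pathGraph n).Adj] (α : ℝ) :
    (Aalpha α (SimpleGraph.pathGraph n)).IsHermitian := by
  unfold Aalpha
  rw [Matrix.IsHermitian, Matrix.conjTranspose_eq_transpose_of_trivial]
  simp

theorem auxQ_eig (n : ℕ) [DecidableRel (SimpleGraph.pathGraph n).Adj] (j : ℕ) :
    auxQ n *ᵥ (fun i : Fin n => Real.sin ((2 * (i.val:ℝ) + 1) * (j * π / (2 * n)))) =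
      (2 + 2 * Real.cos (j * π / n)) •
        (fun i : Fin n => Real.sin ((2 * (i.val:ℝ) + 1) * (j * π / (2 * n)))) := by
  ext i
  have hn : (n:ℝ) ≠ 0 := by have := i.pos; positivity
  obtain ⟨t, ht⟩ : ∃ t, t = (j * π / (2 * n) : ℝ) := ⟨_, rfl⟩
  have hc : (j * π / n : ℝ) = 2 * t := by rw [ht]; field_simp
  have hnt : Real.sin (2 * n * t) = 0 := by
    rw [ht, show (2 * n * (j * π / (2 * n)) : ℝ) = j * π by field_simp]
    exact Real.sin_nat_mul_pi j
  have h1 := aux_nbr (fun m => Real.sin ((2 * (m:ℝ) + 1) * t)) i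
  have h2 := aux_nbr (fun m => (1:ℝ)) i
  simp only [Finset.sum_const, SimpleGraph.card_neighborFinset_eq_degree, nsmul_eq_mul, mul_one] at h2
  simp only [auxQ, Matrix.add_mulVec, Pi.add_apply, Matrix.mulVec_diagonal, 
    SimpleGraph.adjMatrix_mulVec_apply, Pi.smul_apply, smul_eq_mul]
  rw [← ht, hc, h1, h2]
  have hR : Real.sin ((2 * ((i.val + 1 : ℕ):ℝ) + 1) * t) =
      Real.sin ((2 * (i.val:ℝ) + 1) * t) * Real.cos (2 * t) +
      Real.cos ((2 * (i.val:ℝ) + 1) * t) * Real.sin (2 * t) := by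
    rw [← Real.sin_add]; push_cast; ring_nf
  have hL : Real.sin ((2 * (i.val:ℝ) - 1) * t) =
      Real.sin ((2 * (i.val:ℝ) + 1) * t) * Real.cos (2 * t) -
      Real.cos ((2 * (i.val:ℝ) + 1) * t) * Real.sin (2 * t) := by
    rw [← Real.sin_sub]; ring_nf
  have hA : (if i.val + 1 < n then Real.sin ((2 * ((i.val + 1 : ℕ):ℝ) + 1) * t) else 0) =
      Real.sin ((2 * ((i.val + 1 : ℕ):ℝ) + 1) * t) +
      (1 - if i.val + 1 < n then (1:ℝ) else 0) * Real.sin ((2 * (i.val:ℝ) + 1) * t) := by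
    split_ifs with h
    · ring
    · have : (n:ℝ) = i.val + 1 := by have := i.isLt; exact_mod_cast (by omega : n = i.val + 1)
      have e1 : (2 * ((i.val + 1 : ℕ):ℝ) + 1) * t = 2 * n * t + t := by rw [this]; push_cast; ring
      have e2 : (2 * (i.val:ℝ) + 1) * t = 2 * n * t - t := by rw [this]; ring
      rw [e1, e2, Real.sin_add, Real.sin_sub, hnt]; ring
  have hB : (if 1 ≤ i.val then Real.sin ((2 * ((i.val - 1 : ℕ):ℝ) + 1) * t) else 0) =
      Real.sin ((2 * (i.val:ℝ) - 1) * t) +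
      (1 - if 1 ≤ i.val then (1:ℝ) else 0) * Real.sin ((2 * (i.val:ℝ) + 1) * t) := by
    split_ifs with h
    · rw [Nat.cast_sub h]; push_cast; ring_nf
    · have : i.val = 0 := by omega
      rw [this]; simp
  rw [hA, hB, hR, hL]
  ring

theorem auxQ_form (n : ℕ) [DecidableRel (SimpleGraph.pathGraph n).Adj]
    (α : ℝ) (hα0 : 1 / 2 ≤ α) (x : EuclideanSpace ℝ (Fin n)) (hx : ‖x‖ = 1) :
    inner ℝ x (Matrix.toEuclideanLin (Aalpha α (SimpleGraph.pathGraph n)) x) ≤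
      2 * (2 * α - 1) + (1 - α) * inner ℝ x (Matrix.toEuclideanLin (auxQ n) x) := by
  rw [Aalpha_eq, map_add, map_smul, map_smul, LinearMap.add_apply, inner_add_right,
    LinearMap.smul_apply, LinearMap.smul_apply, inner_smul_right, inner_smul_right]
  have hd : inner ℝ x (Matrix.toEuclideanLin (Matrix.diagonal
      (fun i => ((SimpleGraph.pathGraph n).degree i : ℝ))) x) ≤ 2 := by
    have h2 : ∑ i, x i ^ 2 = 1 := by
      have := EuclideanSpace.real_norm_sq_eq x
      rw [hx] at this; linarith
    have : inner ℝ x (Matrix.toEuclideanLin (Matrix.diagonal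
      (fun i => ((SimpleGraph.pathGraph n).degree i : ℝ))) x) =
      ∑ i, ((SimpleGraph.pathGraph n).degree i : ℝ) * x i ^ 2 := by
      simp only [PiLp.inner_apply, Matrix.toLpLin_apply, Matrix.mulVec_diagonal]
      refine Finset.sum_congr rfl fun i _ => ?_
      simp; ring
    rw [this]
    calc _ ≤ ∑ i, 2 * x i ^ 2 := by
          refine Finset.sum_le_sum fun i _ => ?_
          refine mul_le_mul_of_nonneg_right ?_ (sq_nonneg _)
          have h3 := aux_nbr (fun m => (1:ℝ)) i
          simp only [Finset.sum_const, SimpleGraph.card_neighborFinset_eq_degree, nsmul_eq_mul,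
            mul_one] at h3
          rw [h3]
          split_ifs <;> norm_num
      _ = 2 := by rw [← Finset.mul_sum, h2]; norm_num
  have := mul_le_mul_of_nonneg_left hd (by linarith : 0 ≤ 2 * α - 1)
  linarith

theorem stmt11 (n : ℕ) [DecidableRel (SimpleGraph.pathGraph n).Adj]
    (α : ℝ) (hα0 : 1 / 2 ≤ α) (hα1 : α ≤ 1)
    (k : ℕ) (hk1 : 1 ≤ k) (hkn : k ≤ n) :
    Sk (Aalpha α (SimpleGraph.pathGraph n)) k ≤
      2 * α * k + (1 - α) *
        ((Real.sin (π / (2 * n)))⁻¹ * Real.sin ((2 * k + 1) * π / (2 * n)) - 1) := by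
  have hn : 1 ≤ n := hk1.trans hkn
  have hn' : (0:ℝ) < n := by exact_mod_cast hn
  have hH := Aalpha_herm_s11 n α
  rw [Sk, dif_pos hH]
  apply csSup_le
  · obtain ⟨s, -, hs⟩ := Finset.exists_subset_card_eq (s := (univ : Finset (Fin n))) (n := k) (by simpa using hkn)
    exact ⟨_, s, hs, rfl⟩
  rintro x ⟨s, hs, rfl⟩
  let μ : Fin n → ℝ := fun j => 2 + 2 * Real.cos (((j.val + 1 : ℕ) : ℝ) * π / n)
  have hmem : ∀ j : Fin n, ((j.val + 1 : ℕ) : ℝ) * π / n ∈ Set.Icc 0 π := by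
    intro j
    refine ⟨by positivity, ?_⟩
    rw [div_le_iff₀ hn', mul_comm]
    refine mul_le_mul_of_nonneg_left ?_ Real.pi_pos.le
    exact_mod_cast j.isLt
  have hanti : StrictAnti μ := by
    intro i j hij
    have : ((i.val + 1 : ℕ) : ℝ) * π / n < ((j.val + 1 : ℕ) : ℝ) * π / n := by
      refine div_lt_div_of_pos_right ?_ hn'
      refine mul_lt_mul_of_pos_right ?_ Real.pi_pos
      have : i.val < j.val := hij
      exact_mod_cast (by omega : i.val + 1 < j.val + 1)
    have := Real.strictAntiOn_cos (hmem i) (hmem j) this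
    simp only [μ]; linarith
  have hT : (Matrix.toEuclideanLin (auxQ n)).IsSymmetric :=
    Matrix.isSymmetric_toEuclideanLin_iff.2 (auxQ_herm n)
  obtain ⟨b, hb⟩ := aux_basis μ hanti.injective _ hT
    (fun j => WithLp.toLp 2 (fun i : Fin n =>
      Real.sin ((2 * (i.val:ℝ) + 1) * (((j.val + 1 : ℕ) : ℝ) * π / (2 * n)))))
    (by
      intro j h
      have h0 := congrArg (fun z : EuclideanSpace ℝ (Fin n) => z ⟨0, hn⟩) h
      simp only [PiLp.zero_apply] at h0
      refine absurd h0 (ne_of_gt ?_)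
      have hm := hmem j
      have e : (2 * ((0:ℕ):ℝ) + 1) * (((j.val + 1 : ℕ) : ℝ) * π / (2 * n)) =
        (((j.val + 1 : ℕ) : ℝ) * π / n) / 2 := by field_simp; simp
      show 0 < Real.sin ((2 * ((0:ℕ):ℝ) + 1) * (((j.val + 1 : ℕ) : ℝ) * π / (2 * n)))
      rw [e]
      apply Real.sin_pos_of_pos_of_lt_pi
      · positivity
      · linarith [hm.2, Real.pi_pos])
    (by
      intro j
      rw [Matrix.toLpLin_apply]
      simp only
      rw [auxQ_eig n (j.val + 1)]
      rfl)
  have hky := aux_kyfan k hk1 hkn μ (fun i j h => hanti.antitone h) _ hT b hb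
    hH.eigenvectorBasis s hs
  have hsum : (∑ j : Fin n, if j.val < k then μ j else 0) =
      2 * k + ((Real.sin (π / (2 * n)))⁻¹ * Real.sin ((2 * k + 1) * π / (2 * n)) - 1) := by
    rw [← aux_trig n k hn]
    simp only [μ]
    rw [Fin.sum_univ_eq_sum_range
      (fun i => if i < k then 2 + 2 * Real.cos (((i + 1 : ℕ) : ℝ) * π / n) else 0) n]
    rw [← Finset.sum_filter]
    have : (Finset.range n).filter (fun i => i < k) = Finset.range k := by
      ext i; simp; omega
    rw [this, Finset.sum_add_distrib]
    simp [mul_comm]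
  rw [hsum] at hky
  have hle : ∑ i ∈ s, hH.eigenvalues i ≤ ∑ i ∈ s, (2 * (2 * α - 1) + (1 - α) *
      inner ℝ (hH.eigenvectorBasis i) (Matrix.toEuclideanLin (auxQ n) (hH.eigenvectorBasis i))) := by
    refine Finset.sum_le_sum fun i _ => ?_
    have hnorm : ‖hH.eigenvectorBasis i‖ = 1 := hH.eigenvectorBasis.orthonormal.1 i
    refine le_trans (le_of_eq ?_) (auxQ_form n α hα0 _ hnorm)
    have : Matrix.toEuclideanLin (Aalpha α (SimpleGraph.pathGraph n)) (hH.eigenvectorBasis i) =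
        hH.eigenvalues i • hH.eigenvectorBasis i := by
      rw [Matrix.toLpLin_apply, hH.mulVec_eigenvectorBasis]
      rfl
    rw [this, inner_smul_right, real_inner_self_eq_norm_sq, hnorm]
    simp
  rw [Finset.sum_add_distrib, ← Finset.mul_sum s _ (1 - α), Finset.sum_const, hs, nsmul_eq_mul] at hle
  have := mul_le_mul_of_nonneg_left hky (by linarith : 0 ≤ 1 - α)
  linarith
end

section
/- Let P_n be the path on n vertices and let 0 ≤ α < 1. Then for every k with 1 ≤ k ≤ n, S_k(A_α(P_n)) < 2k. -/
open Matrix Finset Real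

lemma path_deg_le (n : ℕ) [DecidableRel (SimpleGraph.pathGraph n).Adj] (i : Fin n) :
    (SimpleGraph.pathGraph n).degree i ≤ 2 := by
  rw [← SimpleGraph.card_neighborFinset_eq_degree,
    ← Finset.card_image_of_injective _ Fin.val_injective]
  refine (Finset.card_le_card (t := {i.val + 1, i.val - 1}) ?_).trans Finset.card_le_two
  intro x hx
  simp only [Finset.mem_image, SimpleGraph.mem_neighborFinset, SimpleGraph.pathGraph_adj] at hx
  obtain ⟨a, ha, rfl⟩ := hx
  simp only [Finset.mem_insert, Finset.mem_singleton]
  omega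

lemma path_deg_zero (n : ℕ) [DecidableRel (SimpleGraph.pathGraph n).Adj] (i : Fin n)
    (hi : i.val = 0) : (SimpleGraph.pathGraph n).degree i ≤ 1 := by
  rw [← SimpleGraph.card_neighborFinset_eq_degree,
    ← Finset.card_image_of_injective _ Fin.val_injective]
  refine (Finset.card_le_card (t := {1}) ?_).trans (by simp)
  intro x hx
  simp only [Finset.mem_image, SimpleGraph.mem_neighborFinset, SimpleGraph.pathGraph_adj] at hx
  obtain ⟨a, ha, rfl⟩ := hx
  simp only [Finset.mem_singleton]
  omega

lemma path_eig_lt (n : ℕ) [DecidableRel (SimpleGraph.pathGraph n).Adj]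
    (α : ℝ) (hα1 : α < 1) (μ : ℝ) (v : Fin n → ℝ) (hv : v ≠ 0)
    (h : Aalpha α (SimpleGraph.pathGraph n) *ᵥ v = μ • v) : μ < 2 := by
  by_contra! hμ
  have key : v ⬝ᵥ (Aalpha α (SimpleGraph.pathGraph n) *ᵥ v) = (∑ i, ((SimpleGraph.pathGraph n).degree i : ℝ) * v i ^ 2)
      - (1 - α) * (v ⬝ᵥ ((SimpleGraph.pathGraph n).lapMatrix ℝ *ᵥ v)) := by
    have e : Aalpha α (SimpleGraph.pathGraph n) = Matrix.diagonal (fun i => ((SimpleGraph.pathGraph n).degree i : ℝ))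
        - (1 - α) • (SimpleGraph.pathGraph n).lapMatrix ℝ := by
      unfold Aalpha SimpleGraph.lapMatrix SimpleGraph.degMatrix
      module
    rw [e, Matrix.sub_mulVec, dotProduct_sub, Matrix.smul_mulVec, dotProduct_smul, smul_eq_mul]
    congr 1
    simp only [dotProduct, Matrix.mulVec_diagonal]
    exact Finset.sum_congr rfl fun i _ => by ring
  have hm : v ⬝ᵥ (Aalpha α (SimpleGraph.pathGraph n) *ᵥ v) = ∑ i, μ * v i ^ 2 := by
    rw [h]
    simp only [dotProduct, Pi.smul_apply, smul_eq_mul]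
    exact Finset.sum_congr rfl fun i _ => by ring
  have hL0 : 0 ≤ v ⬝ᵥ ((SimpleGraph.pathGraph n).lapMatrix ℝ *ᵥ v) := by
    simpa using (SimpleGraph.posSemidef_lapMatrix ℝ (SimpleGraph.pathGraph n)).dotProduct_mulVec_nonneg v
  have hterm : ∀ i ∈ Finset.univ, 0 ≤ (μ - (SimpleGraph.pathGraph n).degree i) * v i ^ 2 := fun i _ => by
    have : ((SimpleGraph.pathGraph n).degree i : ℝ) ≤ 2 := by exact_mod_cast path_deg_le n i
    exact mul_nonneg (by linarith) (sq_nonneg _)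
  have hs : ∑ i, (μ - (SimpleGraph.pathGraph n).degree i) * v i ^ 2 + (1 - α) * (v ⬝ᵥ ((SimpleGraph.pathGraph n).lapMatrix ℝ *ᵥ v)) = 0 := by
    simp only [sub_mul, Finset.sum_sub_distrib]
    linarith [sub_mul 1 α (v ⬝ᵥ ((SimpleGraph.pathGraph n).lapMatrix ℝ *ᵥ v))]
  have h1 := Finset.sum_nonneg hterm
  have h2 : 0 ≤ (1 - α) * (v ⬝ᵥ ((SimpleGraph.pathGraph n).lapMatrix ℝ *ᵥ v)) := mul_nonneg (by linarith) hL0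
  have h3 := (Finset.sum_eq_zero_iff_of_nonneg hterm).1 (by linarith)
  have h4 : v ⬝ᵥ ((SimpleGraph.pathGraph n).lapMatrix ℝ *ᵥ v) = 0 := by
    have : (1 - α) * (v ⬝ᵥ ((SimpleGraph.pathGraph n).lapMatrix ℝ *ᵥ v)) = 0 := by linarith
    exact (mul_eq_zero.1 this).resolve_left (by linarith)
  have h5 : ∀ i j, (SimpleGraph.pathGraph n).Adj i j → v i = v j := by
    rw [← SimpleGraph.lapMatrix_toLinearMap₂'_apply'_eq_zero_iff_forall_adj ℝ (SimpleGraph.pathGraph n) v,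
      Matrix.toLinearMap₂'_apply']
    exact h4
  apply hv
  have h6 : ∀ m (hm : m < n), v ⟨m, hm⟩ = 0 := by
    intro m
    induction m with
    | zero =>
      intro hm
      have a := h3 ⟨0, hm⟩ (Finset.mem_univ _)
      have : ((SimpleGraph.pathGraph n).degree ⟨0, hm⟩ : ℝ) ≤ 1 := by exact_mod_cast path_deg_zero n ⟨0, hm⟩ rfl
      have := (mul_eq_zero.1 a).resolve_left (by linarith)
      exact pow_eq_zero_iff (two_ne_zero) |>.1 this
    | succ m ih =>
      intro hm
      rw [← ih (by omega)]
      exact h5 _ _ (by rw [SimpleGraph.pathGraph_adj]; right; rfl)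
  ext i
  exact h6 i.1 i.2

theorem stmt12 (n : ℕ) [DecidableRel (SimpleGraph.pathGraph n).Adj]
    (α : ℝ) (hα0 : 0 ≤ α) (hα1 : α < 1)
    (k : ℕ) (hk1 : 1 ≤ k) (hkn : k ≤ n) :
    Sk (Aalpha α (SimpleGraph.pathGraph n)) k < 2 * k := by
  unfold Sk
  have hk : (0 : ℝ) < k := by exact_mod_cast hk1
  split_ifs with h
  · have hfin : {x : ℝ | ∃ s : Finset (Fin n), s.card = k ∧
        x = ∑ i ∈ s, h.eigenvalues i}.Finite := by
      refine (Set.finite_range fun s : Finset (Fin n) => ∑ i ∈ s, h.eigenvalues i).subset ?_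
      rintro x ⟨s, -, rfl⟩
      exact ⟨s, rfl⟩
    have hne : {x : ℝ | ∃ s : Finset (Fin n), s.card = k ∧
        x = ∑ i ∈ s, h.eigenvalues i}.Nonempty := by
      obtain ⟨s, -, hs⟩ := Finset.exists_subset_card_eq
        (s := (Finset.univ : Finset (Fin n))) (n := k) (by simpa using hkn)
      exact ⟨_, s, hs, rfl⟩
    obtain ⟨s, hs, he⟩ := hne.csSup_mem hfin
    rw [he]
    have hlt : ∀ i ∈ s, h.eigenvalues i < 2 := fun i _ => by
      refine path_eig_lt n α hα1 _ (h.eigenvectorBasis i).ofLp ?_ (h.mulVec_eigenvectorBasis i)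
      intro h0
      exact h.eigenvectorBasis.orthonormal.ne_zero i (by ext j; exact congrFun h0 j)
    have hsne : s.Nonempty := Finset.card_pos.1 (by omega)
    have := Finset.sum_lt_sum_of_nonempty hsne hlt
    rw [Finset.sum_const, hs, nsmul_eq_mul] at this
    linarith
  · linarith
end
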